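/- There exists a constant C > 0 such that for every natural number n ≥ 2 and every finite field F, writing G = SL_n(F), there exists an element x ∈ G such that the number of y ∈ G for which {x, y} invariably generates G is at least (1 − C·n^{−1/200}) · |G|. -/

import Mathlib

/-- `{x, y}` invariably generates `G`: for all `g, h`, the conjugates
`g * x * g⁻¹` and `h * y * h⁻¹` generate `G`. -/
def InvGen {G : Type*} [Group G] (x y : G) : Prop :=
  ∀ g h : G, Subgroup.closure {g * x * g⁻¹, h * y * h⁻¹} = ⊤

open Finset

namespace IG

section Kloos
variable {E : Type*} [Field E] [Fintype E]

open Classical in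
noncomputable def KS (N : Subgroup Eˣ) (Ψ : AddChar (E × E) ℂ) : ℂ :=
  ∑ a : N, Ψ (((a : Eˣ) : E), (((a : Eˣ)⁻¹ : Eˣ) : E))

lemma quad_aux (a b c d : Eˣ) (h1 : (a : E) + b = c + d)
    (h2 : ((a⁻¹ : Eˣ) : E) + (b⁻¹ : Eˣ) = (c⁻¹ : Eˣ) + (d⁻¹ : Eˣ)) :
    (c = a ∧ d = b) ∨ (c = b ∧ d = a) ∨ (b = -a ∧ d = -c) := by
  by_cases hs : (a : E) + b = 0
  · right; right
    constructor
    · apply Units.ext; push_cast; linear_combination hs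
    · apply Units.ext; push_cast; linear_combination hs - h1
  · have ha : (a : E) ≠ 0 := a.ne_zero
    have hb : (b : E) ≠ 0 := b.ne_zero
    have hc : (c : E) ≠ 0 := c.ne_zero
    have hd : (d : E) ≠ 0 := d.ne_zero
    simp only [Units.val_inv_eq_inv_val] at h2
    field_simp at h2
    have h3 : (a : E) * b = c * d := by
      have : ((a:E) + b) * (c * d) = (a + b) * (a * b) := by
        linear_combination h2 + (-(a:E)*b) * h1
      exact (mul_left_cancel₀ hs this).symm
    have h4 : ((c : E) - a) * (c - b) = 0 := by
      linear_combination h3 - (c:E) * h1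
    rcases mul_eq_zero.1 h4 with h | h
    · left
      have : c = a := Units.ext (sub_eq_zero.1 h)
      subst this
      exact ⟨rfl, Units.ext (by linear_combination - h1)⟩
    · right; left
      have : c = b := Units.ext (sub_eq_zero.1 h)
      subst this
      exact ⟨rfl, Units.ext (by linear_combination - h1)⟩

open Classical in
lemma quad_count (N : Subgroup Eˣ) :
    #{t : (N × N) × (N × N) | (((t.1.1 : Eˣ) : E) + (t.1.2 : Eˣ) = (t.2.1 : Eˣ) + (t.2.2 : Eˣ)) ∧
      ((((t.1.1 : Eˣ)⁻¹ : Eˣ) : E) + ((t.1.2 : Eˣ)⁻¹ : Eˣ) =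
        ((t.2.1 : Eˣ)⁻¹ : Eˣ) + ((t.2.2 : Eˣ)⁻¹ : Eˣ))} ≤ 3 * (Fintype.card N) ^ 2 := by
  by_cases hneg : (-1 : Eˣ) ∈ N
  · let m : N := ⟨-1, hneg⟩
    have hsub : ({t : (N × N) × (N × N) | (((t.1.1 : Eˣ) : E) + (t.1.2 : Eˣ) = (t.2.1 : Eˣ) + (t.2.2 : Eˣ)) ∧
      ((((t.1.1 : Eˣ)⁻¹ : Eˣ) : E) + ((t.1.2 : Eˣ)⁻¹ : Eˣ) =
        ((t.2.1 : Eˣ)⁻¹ : Eˣ) + ((t.2.2 : Eˣ)⁻¹ : Eˣ))} : Finset _) ⊆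
        (univ.image (fun p : N × N => ((p.1, p.2), (p.1, p.2)))) ∪
        (univ.image (fun p : N × N => ((p.1, p.2), (p.2, p.1)))) ∪
        (univ.image (fun p : N × N => ((p.1, m * p.1), (p.2, m * p.2)))) := by
      rintro ⟨⟨a, b⟩, ⟨c, d⟩⟩ ht
      simp only [mem_filter, mem_univ, true_and] at ht
      simp only [mem_union, mem_image, mem_univ, true_and, Prod.mk.injEq, Prod.exists]
      rcases quad_aux _ _ _ _ ht.1 ht.2 with h | h | h
      · left; left
        exact ⟨a, b, ⟨rfl, rfl⟩, Subtype.ext h.1.symm, Subtype.ext h.2.symm⟩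
      · left; right
        exact ⟨a, b, ⟨rfl, rfl⟩, Subtype.ext h.1.symm, Subtype.ext h.2.symm⟩
      · right
        refine ⟨a, c, ⟨rfl, Subtype.ext ?_⟩, rfl, Subtype.ext ?_⟩
        · rw [h.1]; simp [m]
        · rw [h.2]; simp [m]
    refine (card_le_card hsub).trans ?_
    refine (card_union_le _ _).trans ?_
    refine (Nat.add_le_add_right (card_union_le _ _) _).trans ?_
    have hh : ∀ f : N × N → (N × N) × (N × N), #(univ.image f) ≤ (Fintype.card N) ^ 2 := by
      intro f
      refine card_image_le.trans ?_
      simp [sq]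
    have := hh (fun p : N × N => ((p.1, p.2), (p.1, p.2)))
    have := hh (fun p : N × N => ((p.1, p.2), (p.2, p.1)))
    have := hh (fun p : N × N => ((p.1, m * p.1), (p.2, m * p.2)))
    omega
  · have hsub : ({t : (N × N) × (N × N) | (((t.1.1 : Eˣ) : E) + (t.1.2 : Eˣ) = (t.2.1 : Eˣ) + (t.2.2 : Eˣ)) ∧
      ((((t.1.1 : Eˣ)⁻¹ : Eˣ) : E) + ((t.1.2 : Eˣ)⁻¹ : Eˣ) =
        ((t.2.1 : Eˣ)⁻¹ : Eˣ) + ((t.2.2 : Eˣ)⁻¹ : Eˣ))} : Finset _) ⊆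
        (univ.image (fun p : N × N => ((p.1, p.2), (p.1, p.2)))) ∪
        (univ.image (fun p : N × N => ((p.1, p.2), (p.2, p.1)))) := by
      rintro ⟨⟨a, b⟩, ⟨c, d⟩⟩ ht
      simp only [mem_filter, mem_univ, true_and] at ht
      simp only [mem_union, mem_image, mem_univ, true_and, Prod.mk.injEq, Prod.exists]
      rcases quad_aux _ _ _ _ ht.1 ht.2 with h | h | h
      · left
        exact ⟨a, b, ⟨rfl, rfl⟩, Subtype.ext h.1.symm, Subtype.ext h.2.symm⟩
      · right
        exact ⟨a, b, ⟨rfl, rfl⟩, Subtype.ext h.1.symm, Subtype.ext h.2.symm⟩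
      · exfalso
        apply hneg
        have : (-1 : Eˣ) = b * (a : Eˣ)⁻¹ := by rw [h.1]; simp
        rw [this]
        exact N.mul_mem b.2 (N.inv_mem a.2)
    refine (card_le_card hsub).trans ?_
    refine (card_union_le _ _).trans ?_
    have hh : ∀ f : N × N → (N × N) × (N × N), #(univ.image f) ≤ (Fintype.card N) ^ 2 := by
      intro f
      refine card_image_le.trans ?_
      simp [sq]
    have := hh (fun p : N × N => ((p.1, p.2), (p.1, p.2)))
    have := hh (fun p : N × N => ((p.1, p.2), (p.2, p.1)))
    omega

open Classical in
lemma KS_fourth (N : Subgroup Eˣ) :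
    ∑ Ψ : AddChar (E × E) ℂ, ‖KS N Ψ‖ ^ 4 ≤
      (Fintype.card E : ℝ) ^ 2 * (3 * (Fintype.card N : ℝ) ^ 2) := by
  have key : ∀ Ψ : AddChar (E × E) ℂ, ((‖KS N Ψ‖ ^ 4 : ℝ) : ℂ) =
      ∑ t : (N × N) × (N × N), Ψ
        ((((t.1.1 : Eˣ) : E), (((t.1.1 : Eˣ)⁻¹ : Eˣ) : E)) + (((t.1.2 : Eˣ) : E), (((t.1.2 : Eˣ)⁻¹ : Eˣ) : E))
        - ((((t.2.1 : Eˣ) : E), (((t.2.1 : Eˣ)⁻¹ : Eˣ) : E)) + (((t.2.2 : Eˣ) : E), (((t.2.2 : Eˣ)⁻¹ : Eˣ) : E)))) := by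
    intro Ψ
    have h1 : ((‖KS N Ψ‖ ^ 4 : ℝ) : ℂ) = (KS N Ψ * KS N Ψ) * ((starRingEnd ℂ) (KS N Ψ) * (starRingEnd ℂ) (KS N Ψ)) := by
      have := Complex.mul_conj' (KS N Ψ)
      push_cast
      calc (‖KS N Ψ‖ : ℂ) ^ 4 = ((‖KS N Ψ‖ : ℂ) ^ 2) * ((‖KS N Ψ‖ : ℂ) ^ 2) := by ring
        _ = _ := by rw [← this]; ring
    rw [h1]
    have h2 : (starRingEnd ℂ) (KS N Ψ) = ∑ a : N, Ψ (-(((a : Eˣ) : E), (((a : Eˣ)⁻¹ : Eˣ) : E))) := by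
      rw [KS, map_sum]
      exact Finset.sum_congr rfl fun a _ => (AddChar.map_neg_eq_conj Ψ _).symm
    rw [h2, KS, Finset.sum_mul_sum, Finset.sum_mul_sum, ← Finset.sum_product', ← Finset.sum_product',
      Finset.sum_mul_sum, ← Finset.sum_product']
    simp only [Finset.univ_product_univ]
    refine Finset.sum_congr rfl fun t _ => ?_
    rw [sub_eq_add_neg, neg_add, AddChar.map_add_eq_mul, AddChar.map_add_eq_mul, AddChar.map_add_eq_mul]
  have h : ((∑ Ψ : AddChar (E × E) ℂ, ‖KS N Ψ‖ ^ 4 : ℝ) : ℂ) =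
     ((Fintype.card E : ℝ) ^ 2 * (#{t : (N × N) × (N × N) | (((t.1.1 : Eˣ) : E) + (t.1.2 : Eˣ) = (t.2.1 : Eˣ) + (t.2.2 : Eˣ)) ∧
      ((((t.1.1 : Eˣ)⁻¹ : Eˣ) : E) + ((t.1.2 : Eˣ)⁻¹ : Eˣ) =
        ((t.2.1 : Eˣ)⁻¹ : Eˣ) + ((t.2.2 : Eˣ)⁻¹ : Eˣ))} : ℝ) : ℝ) := by
    rw [Complex.ofReal_sum, Finset.sum_congr rfl fun Ψ _ => key Ψ, Finset.sum_comm]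
    simp only [AddChar.sum_apply_eq_ite]
    simp only [sub_eq_zero, Prod.mk_add_mk, Prod.mk.injEq]
    rw [← Finset.sum_filter, Finset.sum_const]
    simp [Fintype.card_prod, sq]
    ring
  have h' := Complex.ofReal_injective h
  rw [h']
  have := quad_count N
  gcongr
  exact_mod_cast this

/-- twist of a character -/
def twist (t : Eˣ) (Ψ : AddChar (E × E) ℂ) : AddChar (E × E) ℂ :=
  Ψ.compAddMonoidHom ((AddMonoidHom.mulLeft (t : E)).prodMap (AddMonoidHom.mulLeft ((t⁻¹ : Eˣ) : E)))

lemma twist_apply (t : Eˣ) (Ψ : AddChar (E × E) ℂ) (x : E × E) :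
    twist t Ψ x = Ψ ((t : E) * x.1, ((t⁻¹ : Eˣ) : E) * x.2) := rfl

lemma KS_twist (N : Subgroup Eˣ) (t : N) (Ψ : AddChar (E × E) ℂ) :
    KS N (twist t Ψ) = KS N Ψ := by
  classical
  unfold KS
  refine Fintype.sum_equiv (Equiv.mulLeft t) _ _ fun a => ?_
  rw [twist_apply]
  simp [mul_comm]

lemma twist_inj (Ψ : AddChar (E × E) ℂ) (hΨ : Ψ ≠ 1) (t s : Eˣ) (h : twist t Ψ = twist s Ψ) :
    t = s := by
  by_contra hts
  apply hΨ
  ext ⟨x, y⟩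
  have hts' : (t : E) - s ≠ 0 := fun h => hts (Units.ext (sub_eq_zero.1 h))
  have hts2 : ((t⁻¹ : Eˣ) : E) - (s⁻¹ : Eˣ) ≠ 0 := fun h => hts (by
    have := Units.ext (sub_eq_zero.1 h); simpa using this)
  have h0 := DFunLike.congr_fun h (x / (t - s), y / ((t⁻¹ : Eˣ) - (s⁻¹ : Eˣ)))
  rw [twist_apply, twist_apply] at h0
  have h1 : ((x, y) : E × E) = ((t : E) * (x / (t - s)), ((t⁻¹ : Eˣ) : E) * (y / ((t⁻¹ : Eˣ) - (s⁻¹ : Eˣ)))) -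
     ((s : E) * (x / (t - s)), ((s⁻¹ : Eˣ) : E) * (y / ((t⁻¹ : Eˣ) - (s⁻¹ : Eˣ)))) := by
    rw [Prod.mk_sub_mk, ← sub_mul, ← sub_mul, mul_div_cancel₀ _ hts', mul_div_cancel₀ _ hts2]
  rw [h1, AddChar.map_sub_eq_div, ]
  simp only at h0
  rw [h0, div_self]
  · rfl
  · rw [← norm_ne_zero_iff, AddChar.norm_apply]; norm_num

lemma KS_bound (N : Subgroup Eˣ) (Ψ : AddChar (E × E) ℂ) (hΨ : Ψ ≠ 1) :
    ‖KS N Ψ‖ ^ 4 ≤ (Fintype.card E : ℝ) ^ 2 * (3 * (Nat.card N : ℝ)) := by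
  classical
  have h1 : ∑ t : N, ‖KS N (twist t Ψ)‖ ^ 4 ≤ ∑ Ψ : AddChar (E × E) ℂ, ‖KS N Ψ‖ ^ 4 := by
    rw [← Finset.sum_image (s := (univ : Finset N)) (g := fun t : N => twist (t : Eˣ) Ψ)
      (f := fun Ψ => ‖KS N Ψ‖ ^ 4)]
    · exact Finset.sum_le_sum_of_subset_of_nonneg (Finset.subset_univ _) (fun _ _ _ => by positivity)
    · intro t _ s _ h
      exact Subtype.ext (twist_inj Ψ hΨ _ _ h)
  have h2 := h1.trans (KS_fourth N)
  simp only [KS_twist, Finset.sum_const, Finset.card_univ, nsmul_eq_mul] at h2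
  have hN : (0 : ℝ) < Fintype.card N := by exact_mod_cast Fintype.card_pos
  rw [Nat.card_eq_fintype_card]
  refine le_of_mul_le_mul_left (h2.trans_eq ?_) hN
  ring

theorem kloos (N : Subgroup Eˣ) (A B : AddSubgroup E) (α β : E)
    (h : 3 * (A.index * B.index) ^ 4 * (Nat.card E) ^ 2 < (Nat.card N) ^ 3) :
    ∃ a ∈ N, (a : E) - α ∈ A ∧ ((a⁻¹ : Eˣ) : E) - β ∈ B := by
  classical
  by_contra! hcon
  let P : AddSubgroup (E × E) := A.prod B
  let Γ := (E × E) ⧸ P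
  have : Fintype Γ := Fintype.ofFinite _
  let mk : E × E →+ Γ := QuotientAddGroup.mk' P
  have hcard : Fintype.card Γ = A.index * B.index := by
    rw [← Nat.card_eq_fintype_card]
    change P.index = _
    exact AddSubgroup.index_prod A B
  have h0 : ∑ a : N, ∑ ψ : AddChar Γ ℂ, ψ (mk ((((a : Eˣ) : E), (((a : Eˣ)⁻¹ : Eˣ) : E)) - (α, β))) = 0 := by
    refine Finset.sum_eq_zero fun a _ => ?_
    rw [AddChar.sum_apply_eq_ite, if_neg]
    intro hz
    have := (QuotientAddGroup.eq_zero_iff _).1 hz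
    rw [Prod.mk_sub_mk] at this
    have h2 := AddSubgroup.mem_prod.1 this
    exact hcon a a.2 h2.1 h2.2
  rw [Finset.sum_comm] at h0
  have h1 : ∀ ψ : AddChar Γ ℂ, ∑ a : N, ψ (mk ((((a : Eˣ) : E), (((a : Eˣ)⁻¹ : Eˣ) : E)) - (α, β))) =
      KS N (ψ.compAddMonoidHom mk) * ψ (mk (-(α, β))) := by
    intro ψ
    rw [KS, Finset.sum_mul]
    refine Finset.sum_congr rfl fun a _ => ?_
    rw [sub_eq_add_neg, map_add, AddChar.map_add_eq_mul]
    rfl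
  simp only [h1] at h0
  rw [← Finset.add_sum_erase _ _ (Finset.mem_univ (1 : AddChar Γ ℂ))] at h0
  have h2 : KS N ((1 : AddChar Γ ℂ).compAddMonoidHom mk) * (1 : AddChar Γ ℂ) (mk (-(α, β))) = (Nat.card N : ℂ) := by
    simp [KS]
  rw [h2] at h0
  have h3 : (Nat.card N : ℝ) = ‖∑ ψ ∈ Finset.univ.erase (1 : AddChar Γ ℂ), KS N (ψ.compAddMonoidHom mk) * ψ (mk (-(α, β)))‖ := by
    rw [eq_neg_of_add_eq_zero_right h0, norm_neg]; simp
  set m : ℝ := ((Fintype.card E : ℝ) ^ 2 * (3 * (Nat.card N : ℝ))) ^ ((1:ℝ)/4) with hm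
  have hm4 : m ^ 4 = (Fintype.card E : ℝ) ^ 2 * (3 * (Nat.card N : ℝ)) := by
    rw [hm, ← Real.rpow_natCast, ← Real.rpow_mul (by positivity)]; norm_num
  have hm0 : 0 ≤ m := by positivity
  have h4 : (Nat.card N : ℝ) ≤ (A.index * B.index : ℕ) * m := by
    rw [h3]
    refine (norm_sum_le _ _).trans ?_
    have : ∀ ψ ∈ Finset.univ.erase (1 : AddChar Γ ℂ), ‖KS N (ψ.compAddMonoidHom mk) * ψ (mk (-(α, β)))‖ ≤ m := by
      intro ψ hψ
      rw [norm_mul, AddChar.norm_apply, mul_one]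
      refine le_of_pow_le_pow_left₀ (n := 4) (by norm_num) hm0 ?_
      rw [hm4]
      apply KS_bound
      intro h5
      apply (Finset.mem_erase.1 hψ).1
      ext z
      obtain ⟨w, rfl⟩ := QuotientAddGroup.mk'_surjective P z
      exact DFunLike.congr_fun h5 w
    refine (Finset.sum_le_card_nsmul _ _ _ this).trans ?_
    rw [nsmul_eq_mul]
    gcongr
    refine (Finset.card_le_card (Finset.erase_subset _ _)).trans ?_
    rw [Finset.card_univ, AddChar.card_eq, hcard]
  have hN : (0 : ℝ) < Nat.card N := by exact_mod_cast Nat.card_pos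
  have h5 : (Nat.card N : ℝ) ^ 4 ≤ ((A.index * B.index : ℕ) * m) ^ 4 := by gcongr
  rw [mul_pow, hm4] at h5
  have h6 : (Nat.card N : ℝ) ^ 3 ≤ 3 * ((A.index * B.index : ℕ) : ℝ) ^ 4 * (Nat.card E : ℝ) ^ 2 := by
    refine le_of_mul_le_mul_right (le_trans (le_of_eq ?_) (h5.trans (le_of_eq ?_))) hN
    · ring
    · rw [← Nat.card_eq_fintype_card]; ring
  have h7 : (Nat.card N) ^ 3 ≤ 3 * (A.index * B.index) ^ 4 * (Nat.card E) ^ 2 := by exact_mod_cast h6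
  omega

end Kloos
end IG
set_option linter.unusedSectionVars false
set_option linter.unusedSimpArgs false
namespace IG
open Finset Module

section K
variable (F E : Type*) [Field F] [Finite F] [Field E] [Finite E] [Algebra F E]

/-- norm one group -/
noncomputable def NU : Subgroup Eˣ := (Units.map (Algebra.norm F : E →* F)).ker

lemma card_NU : Nat.card E ≤ Nat.card (NU F E) * Nat.card F := by
  have : Function.Surjective (Units.map (Algebra.norm F : E →* F)) :=
    FiniteField.unitsMap_norm_surjective F E
  have h := Subgroup.card_mul_index (NU F E)
  have h2 : (NU F E).index = Nat.card Fˣ := by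
    rw [NU, Subgroup.index_ker, MonoidHom.range_eq_top.2 this]
    simp
  rw [h2, Nat.card_units, Nat.card_units] at h
  have h3 : 1 ≤ Nat.card F := Nat.card_pos
  have h4 : 1 ≤ Nat.card E := Nat.card_pos
  have h5 : 1 ≤ Nat.card (NU F E) := Nat.card_pos
  obtain ⟨q, hq⟩ := Nat.exists_eq_add_of_le h3
  rw [hq] at h ⊢
  simp only [Nat.add_sub_cancel_left] at h
  nlinarith [Nat.sub_add_cancel h4]

variable {F E}
theorem lemK {X Y : Type*} [AddCommGroup X] [Module F X] [Module.Finite F X]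
    [AddCommGroup Y] [Module F Y] [Module.Finite F Y] (f : E →ₗ[F] X) (g : E →ₗ[F] Y) (α β : E)
    (h : 4 * (finrank F X + finrank F Y) + 5 ≤ finrank F E) :
    ∃ a ∈ NU F E, f (a : E) = f α ∧ g ((a⁻¹ : Eˣ) : E) = g β := by
  have := Fintype.ofFinite E
  have := Fintype.ofFinite F
  have hidx : ∀ {Z : Type _} [AddCommGroup Z] [Module F Z] [Module.Finite F Z] (f : E →ₗ[F] Z),
      (LinearMap.ker f).toAddSubgroup.index ≤ Nat.card F ^ finrank F Z := by
    intro Z _ _ _ f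
    have : Nat.card (LinearMap.range f) ≤ Nat.card F ^ finrank F Z := by
      rw [Module.natCard_eq_pow_finrank (K := F)]
      exact Nat.pow_le_pow_right Nat.card_pos (Submodule.finrank_le _)
    refine le_trans (le_of_eq ?_) this
    exact AddSubgroup.index_ker f.toAddMonoidHom
  have hq : 2 ≤ Nat.card F := Finite.one_lt_card
  obtain ⟨a, ha, h1, h2⟩ := kloos (NU F E) (LinearMap.ker f).toAddSubgroup
    (LinearMap.ker g).toAddSubgroup α β (by
      have e1 := hidx f
      have e2 : (LinearMap.ker g).toAddSubgroup.index ≤ Nat.card F ^ finrank F Y := by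
        have : Nat.card (LinearMap.range g) ≤ Nat.card F ^ finrank F Y := by
          rw [Module.natCard_eq_pow_finrank (K := F)]
          exact Nat.pow_le_pow_right Nat.card_pos (Submodule.finrank_le _)
        refine le_trans (le_of_eq ?_) this
        exact AddSubgroup.index_ker g.toAddMonoidHom
      have e3 := card_NU F E
      set q := Nat.card F
      have e4 : Nat.card E = q ^ finrank F E := Module.natCard_eq_pow_finrank
      rw [e4] at e3 ⊢
      obtain ⟨m, hm⟩ := Nat.exists_eq_add_of_le h
      rw [hm] at e3 ⊢
      set k := finrank F X
      set l := finrank F Y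
      have e5 : q ^ (4 * (k+l) + 4 + m) ≤ Nat.card (NU F E) := by
        have : q ^ (4 * (k+l) + 4 + m) * q ≤ Nat.card (NU F E) * q := by
          refine le_trans (le_of_eq ?_) e3
          ring
        exact Nat.le_of_mul_le_mul_right this (by omega)
      calc 3 * _ ^ 4 * (q ^ (4 * (k+l) + 5 + m)) ^ 2 
        _ ≤ 3 * (q ^ k * q ^ l) ^ 4 * (q ^ (4 * (k+l) + 5 + m)) ^ 2 := by gcongr
        _ < q ^ 2 * (q ^ k * q ^ l) ^ 4 * (q ^ (4 * (k+l) + 5 + m)) ^ 2 := by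
          gcongr; nlinarith
        _ = q ^ (12 * (k+l) + 12 + 2 * m) := by ring
        _ ≤ q ^ (12 * (k+l) + 12 + 3 * m) := Nat.pow_le_pow_right (by omega) (by omega)
        _ = (q ^ (4 * (k+l) + 4 + m)) ^ 3 := by ring
        _ ≤ _ := by gcongr)
  refine ⟨a, ha, ?_, ?_⟩
  · have : f ((a:E) - α) = 0 := h1
    rwa [map_sub, sub_eq_zero] at this
  · have : g (((a⁻¹ : Eˣ):E) - β) = 0 := h2
    rwa [map_sub, sub_eq_zero] at this

/-- one-sided version -/
theorem lemK1 {X : Type*} [AddCommGroup X] [Module F X] [Module.Finite F X]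
    (f : E →ₗ[F] X) (α : E)
    (h : 4 * finrank F X + 5 ≤ finrank F E) :
    ∃ a ∈ NU F E, f (a : E) = f α := by
  obtain ⟨a, ha, h1, -⟩ := lemK f (0 : E →ₗ[F] PUnit) α 0 (by
    have : finrank F PUnit = 0 := finrank_zero_of_subsingleton
    omega)
  exact ⟨a, ha, h1⟩

end K

section A
variable {F E : Type*} [Field F] [Finite F] [Field E] [Finite E] [Algebra F E]

/-- multiplication operator -/
abbrev mu (c : E) : Module.End F E := LinearMap.mulLeft F c

lemma mu_mul (a b : E) : (mu (a * b) : Module.End F E) = mu a * mu b := by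
  ext x; simp [mul_assoc]

/-- multiplication operator as a unit -/
def muU (F : Type*) {E : Type*} [Field F] [Field E] [Algebra F E] (a : Eˣ) : (Module.End F E)ˣ :=
  ⟨mu a, mu (a⁻¹ : Eˣ), by ext x; simp, by ext x; simp⟩

noncomputable abbrev rk (D : Module.End F E) : ℕ := finrank F (LinearMap.range D)

lemma rk_mul_unit (D : Module.End F E) (g : (Module.End F E)ˣ) : rk (D * g.1) = rk D := by
  have h : Function.Surjective (g : Module.End F E) := fun x => ⟨(g⁻¹ : (Module.End F E)ˣ).1 x, by
    rw [← Module.End.mul_apply]; simp⟩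
  unfold rk
  rw [show LinearMap.range (D * (g : Module.End F E)) = LinearMap.range D from
    LinearMap.range_comp_of_range_eq_top _ (LinearMap.range_eq_top.2 h)]

lemma rk_unit_mul (D : Module.End F E) (g : (Module.End F E)ˣ) : rk ((g : Module.End F E) * D) = rk D := by
  have h : Function.Injective (g : Module.End F E) := by
    intro x y hxy
    have := congrArg (g⁻¹ : (Module.End F E)ˣ).1 hxy
    simpa [← Module.End.mul_apply] using this
  unfold rk
  rw [show LinearMap.range ((g : Module.End F E) * D) = (LinearMap.range D).map (g : Module.End F E) from
    LinearMap.range_comp _ _]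
  exact (LinearEquiv.finrank_eq (Submodule.equivMapOfInjective (g : Module.End F E) h (LinearMap.range D))).symm

lemma rk_pos {D : Module.End F E} (h : D ≠ 0) : 0 < rk D := by
  rw [Nat.pos_iff_ne_zero, ne_eq, Submodule.finrank_eq_zero, LinearMap.range_eq_bot]
  exact h

lemma rk_mul_le (A B : Module.End F E) : rk (A * B) ≤ rk A :=
  Submodule.finrank_mono (LinearMap.range_comp_le_range _ _)

/-- sandwich map -/
noncomputable def sand (D : Module.End F E) : E →ₗ[F] (LinearMap.range D →ₗ[F] LinearMap.range D) where
  toFun a := D.rangeRestrict ∘ₗ (mu a) ∘ₗ (LinearMap.range D).subtype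
  map_add' a b := by ext x; simp [add_mul]
  map_smul' a b := by ext x; simp

lemma sand_iff (D : Module.End F E) (a b : E) (h : sand D a = sand D b) :
    D * mu a * D = D * mu b * D := by
  ext x
  have := congrArg (fun f => ((f ⟨D x, LinearMap.mem_range_self D x⟩ : LinearMap.range D) : E)) h
  simpa [sand] using this

variable (H : Subgroup (Module.End F E)ˣ)

lemma exists_comm (hN : ∀ a ∈ NU F E, muU F a ∈ H) (g : (Module.End F E)ˣ) (hg : g ∈ H)
    (hd : 8 * (rk (g.1 - 1)) ^ 2 + 5 ≤ finrank F E) (c : E) :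
    ∃ t ∈ H, (t.1 - 1) * (t.1 - 1) = 0 ∧ rk (t.1 - 1) = rk ((g.1 - 1) * mu c * (g.1 - 1)) := by
  set D := g.1 - 1 with hD
  obtain ⟨a, ha, h1, h2⟩ := lemK (F := F) (X := LinearMap.range D →ₗ[F] LinearMap.range D)
    (Y := LinearMap.range D →ₗ[F] LinearMap.range D) (sand D) (sand D) c 0 (by
    have := Module.finrank_linearMap F F (LinearMap.range D) (LinearMap.range D)
    rw [this]; unfold rk at hd; nlinarith)
  replace h1 := sand_iff _ _ _ h1
  replace h2 := sand_iff _ _ _ h2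
  have h2' : D * mu ((a⁻¹ : Eˣ) : E) * D = 0 := by rw [h2]; ext; simp
  set m := muU F a with hm
  have hm1 : m.1 = mu (a : E) := rfl
  have hm2 : (m⁻¹).1 = mu ((a⁻¹ : Eˣ) : E) := rfl
  rw [← hm2] at h2'
  set ga := m * g * m⁻¹ with hga
  set Da := m.1 * D * (m⁻¹).1 with hDa
  have hDga : ga.1 = 1 + Da := by
    rw [hga, hDa, hD, Units.val_mul, Units.val_mul, mul_sub, sub_mul, mul_one, Units.mul_inv]
    abel
  have hDg : g.1 = 1 + D := by rw [hD]; abel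
  have hz : Da * D = 0 := by
    rw [hDa, mul_assoc, mul_assoc, ← mul_assoc D, h2', mul_zero]
  have e1 : Da * (g⁻¹).1 = Da := by
    have : Da * g.1 = Da := by rw [hDg, mul_add, hz]; simp
    calc Da * (g⁻¹).1 = Da * g.1 * (g⁻¹).1 := by rw [this]
      _ = Da := by rw [mul_assoc, Units.mul_inv, mul_one]
  have e2 : (ga⁻¹).1 * D = D := by
    have : ga.1 * D = D := by rw [hDga, add_mul, hz]; simp
    calc (ga⁻¹).1 * D = (ga⁻¹).1 * (ga.1 * D) := by rw [this]
      _ = D := by rw [← mul_assoc, Units.inv_mul, one_mul]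
  have hmH : m ∈ H := hN a ha
  have hgaH : ga ∈ H := H.mul_mem (H.mul_mem hmH hg) (H.inv_mem hmH)
  have ht : (g * ga * g⁻¹ * ga⁻¹).1 - 1 = D * Da * (g⁻¹).1 * (ga⁻¹).1 := by
    have : (1 : Module.End F E) = ga.1 * g.1 * (g⁻¹).1 * (ga⁻¹).1 := by
      rw [mul_assoc ga.1, Units.mul_inv, mul_one, Units.mul_inv]
    nth_rewrite 1 [this]
    simp only [Units.val_mul]
    rw [← sub_mul, ← sub_mul, hDg, hDga]
    have : (1 + D) * (1 + Da) - (1 + Da) * (1 + D) = D * Da - Da * D := by noncomm_ring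
    rw [this, hz, sub_zero]
  refine ⟨g * ga * g⁻¹ * ga⁻¹, H.mul_mem (H.mul_mem (H.mul_mem hg hgaH) (H.inv_mem hg)) (H.inv_mem hgaH), ?_, ?_⟩
  · rw [ht]
    rw [mul_assoc D Da, e1]
    calc D * Da * (ga⁻¹).1 * (D * Da * (ga⁻¹).1) = D * Da * ((ga⁻¹).1 * D) * (Da * (ga⁻¹).1) := by noncomm_ring
      _ = _ := by rw [e2, mul_assoc D, hz]; simp
  · rw [ht, rk_mul_unit, rk_mul_unit, hDa, ← mul_assoc, ← mul_assoc, rk_mul_unit, hm1, h1]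

/-- The set of square-zero displacements. -/
def Sq : Set (Module.End F E) := {D | D ≠ 0 ∧ D * D = 0 ∧ ∃ g ∈ H, g.1 = 1 + D}

lemma exists_Sq (hN : ∀ a ∈ NU F E, muU F a ∈ H) (g : (Module.End F E)ˣ) (hg : g ∈ H)
    (hd : 8 * (rk (g.1 - 1)) ^ 2 + 5 ≤ finrank F E) (c : E) (hc : (g.1 - 1) * mu c * (g.1 - 1) ≠ 0) :
    ∃ D ∈ Sq H, rk D = rk ((g.1 - 1) * mu c * (g.1 - 1)) := by
  obtain ⟨t, ht, h1, h2⟩ := exists_comm H hN g hg hd c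
  refine ⟨t.1 - 1, ⟨?_, h1, t, ht, by abel⟩, h2⟩
  intro h0
  have := rk_pos hc
  rw [← h2, h0, rk, LinearMap.range_zero, finrank_bot] at this
  exact absurd this (lt_irrefl _)

lemma exists_Sq' (hN : ∀ a ∈ NU F E, muU F a ∈ H) (g : (Module.End F E)ˣ) (hg : g ∈ H)
    (hd : 8 * (rk (g.1 - 1)) ^ 2 + 5 ≤ finrank F E) (h0 : g.1 - 1 ≠ 0) :
    ∃ D ∈ Sq H, rk D ≤ rk (g.1 - 1) := by
  set D := g.1 - 1 with hD
  obtain ⟨v, hv⟩ : ∃ v, D v ≠ 0 := by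
    by_contra! h; exact h0 (LinearMap.ext h)
  obtain ⟨D', h1, h2⟩ := exists_Sq H hN g hg hd (v / D v) (by
    intro h
    have := congrArg (fun f => f v) h
    simp only [← hD, Module.End.mul_apply, LinearMap.mulLeft_apply, div_mul_cancel₀ _ hv] at this
    exact hv this)
  refine ⟨D', h1, ?_⟩
  rw [h2, mul_assoc]
  exact rk_mul_le _ _

lemma rk_sand_dich {D : Module.End F E} {c : E} (h : rk D ≤ rk (D * mu c * D)) (u : E) (hu : u ∈ LinearMap.range D)
    (hz : D (c * u) = 0) : u = 0 := by
  have hr : LinearMap.range (D * mu c * D) = (LinearMap.range D).map (D * mu c) := LinearMap.range_comp _ _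
  have hinj : Function.Injective ((D * mu c).domRestrict (LinearMap.range D)) := by
    rw [← LinearMap.ker_eq_bot]
    have h1 := LinearMap.finrank_range_add_finrank_ker ((D * mu c).domRestrict (LinearMap.range D))
    have h2 : LinearMap.range ((D * mu c).domRestrict (LinearMap.range D)) = LinearMap.range (D * mu c * D) := by
      rw [hr, LinearMap.range_domRestrict]
    rw [h2] at h1
    unfold rk at h
    exact Submodule.finrank_eq_zero.1 (by omega)
  have := @hinj ⟨u, hu⟩ 0 (by simpa using hz)
  simpa using congrArg Subtype.val this

end A
end IG
set_option linter.unusedSectionVars false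
set_option linter.unusedSimpArgs false
namespace IG
open Finset Module

section A2
variable {F E : Type*} [Field F] [Finite F] [Field E] [Finite E] [Algebra F E]

lemma subfield_unique (K L : IntermediateField F E) (h : finrank F K = finrank F L) : K = L := by
  have := Fintype.ofFinite E
  classical
  have hc : Nat.card K = Nat.card L := by
    rw [Module.natCard_eq_pow_finrank (K := F), h, ← Module.natCard_eq_pow_finrank]
  have key : ∀ M : IntermediateField F E, Nat.card M = Nat.card K → 
      (M : Set E) = {x : E | x ^ (Nat.card K) = x} := by
    intro M hM
    apply Set.eq_of_subset_of_ncard_le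
    · intro x hx
      have := Fintype.ofFinite M
      have h1 := FiniteField.pow_card (⟨x, hx⟩ : M)
      rw [← Nat.card_eq_fintype_card, hM] at h1
      exact congrArg Subtype.val h1
    · change _ ≤ Nat.card M
      rw [hM]
      have h1 : 1 < Nat.card K := Finite.one_lt_card
      have h0 : (Polynomial.X ^ (Nat.card K) - Polynomial.X : Polynomial E) ≠ 0 :=
        FiniteField.X_pow_card_sub_X_ne_zero E h1
      have h2 : {x : E | x ^ (Nat.card K) = x} ⊆
        ((Polynomial.X ^ (Nat.card K) - Polynomial.X : Polynomial E).roots.toFinset : Set E) := by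
        intro x hx
        simp only [Finset.mem_coe, Multiset.mem_toFinset, Polynomial.mem_roots h0, Polynomial.IsRoot.def]
        simp only [Polynomial.eval_sub, Polynomial.eval_pow, Polynomial.eval_X, sub_eq_zero]
        exact hx
      refine (Set.ncard_le_ncard h2 (Finset.finite_toSet _)).trans ?_
      rw [Set.ncard_coe_finset]
      refine (Multiset.toFinset_card_le _).trans ((Polynomial.card_roots' _).trans ?_)
      rw [FiniteField.X_pow_card_sub_X_natDegree_eq E h1]
    · exact Set.toFinite _
  apply SetLike.coe_injective
  rw [key K rfl, key L hc.symm]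

variable (H : Subgroup (Module.End F E)ˣ)

/-- stabilizer algebra of the kernel -/
def stabAlg (D : Module.End F E) : Subalgebra F E where
  carrier := {k | ∀ w, D w = 0 → D (k * w) = 0}
  mul_mem' {a b} ha hb w hw := by rw [mul_assoc]; exact ha _ (hb _ hw)
  one_mem' w hw := by rwa [one_mul]
  add_mem' {a b} ha hb w hw := by rw [add_mul, map_add, ha w hw, hb w hw, add_zero]
  zero_mem' w hw := by simp
  algebraMap_mem' c w hw := by rw [← Algebra.smul_def, map_smul, hw, smul_zero]

/-- stabilizer field of the kernel -/
def stabF (D : Module.End F E) : IntermediateField F E :=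
  (stabAlg D).toIntermediateField fun x hx => (stabAlg D).inv_mem_of_algebraic (x := ⟨x, hx⟩)
    (Algebra.IsAlgebraic.isAlgebraic x)

lemma mem_stabF (D : Module.End F E) (k : E) : k ∈ stabF D ↔ ∀ w, D w = 0 → D (k * w) = 0 := Iff.rfl

lemma step2 (hN : ∀ a ∈ NU F E, muU F a ∈ H) (D : Module.End F E) (hD : D ∈ Sq H)
    (hmin : ∀ D' ∈ Sq H, rk D ≤ rk D') (hn : 8 * rk D ^ 2 + 5 ≤ finrank F E) :
    finrank F (stabF D) = rk D ∧
      ∀ u ∈ LinearMap.range D, u ≠ 0 → ∀ x, x ∈ LinearMap.range D ↔ x / u ∈ stabF D := by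
  obtain ⟨h0, hsq, g, hg, hgD⟩ := hD
  have hg1 : g.1 - 1 = D := by rw [hgD]; abel
  have hdich : ∀ c u, u ∈ LinearMap.range D → u ≠ 0 → D (c * u) = 0 →
      ∀ u' ∈ LinearMap.range D, D (c * u') = 0 := by
    intro c u hu hu0 hcu u' hu'
    by_cases hz : D * mu c * D = 0
    · obtain ⟨v, rfl⟩ := hu'
      exact congrArg (fun f => f v) hz
    · exfalso
      obtain ⟨D', h1, h2⟩ := exists_Sq H hN g hg (by rw [hg1]; exact hn) c (by rw [hg1]; exact hz)
      rw [hg1] at h2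
      exact hu0 (rk_sand_dich (h2 ▸ hmin D' h1) u hu hcu)
  have hsub : ∀ u ∈ LinearMap.range D, u ≠ 0 → ∀ x ∈ LinearMap.range D, x / u ∈ stabF D := by
    intro u hu hu0 x hx w hw
    have := hdich (w / u) u hu hu0 (by rwa [div_mul_cancel₀ _ hu0]) x hx
    rwa [show x / u * w = w / u * x by ring]
  obtain ⟨v, hv⟩ : ∃ v, D v ≠ 0 := by
    by_contra! h; exact h0 (LinearMap.ext h)
  have hle : finrank F (stabF D) ≤ rk D := by
    let f : stabF D →ₗ[F] LinearMap.range D :=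
      D.rangeRestrict ∘ₗ (LinearMap.mulRight F v) ∘ₗ (stabF D).val.toLinearMap
    refine LinearMap.finrank_le_finrank_of_injective (f := f) ?_
    rw [injective_iff_map_eq_zero]
    intro k hk
    by_contra hk0
    have h1 : D (k.1 * v) = 0 := congrArg Subtype.val hk
    have h2 := (mem_stabF D _).1 (inv_mem k.2) _ h1
    have hk1 : k.1 ≠ 0 := fun h => hk0 (Subtype.ext h)
    rw [inv_mul_cancel_left₀ hk1] at h2
    exact hv h2
  have hmap : ∀ u ∈ LinearMap.range D, u ≠ 0 → 
      (LinearMap.range D).map (mu (u⁻¹) : Module.End F E) = Subalgebra.toSubmodule (stabF D).toSubalgebra := by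
    intro u hu hu0
    apply Submodule.eq_of_le_of_finrank_le
    · rintro _ ⟨x, hx, rfl⟩
      have := hsub u hu hu0 x hx
      rw [div_eq_inv_mul] at this
      exact this
    · refine hle.trans (le_of_eq ?_)
      refine LinearEquiv.finrank_eq (Submodule.equivMapOfInjective _ ?_ (LinearMap.range D))
      intro x y hxy
      simpa [hu0] using hxy
  constructor
  · have h1 := hmap (D v) ⟨v, rfl⟩ hv
    have h2 : finrank F (Subalgebra.toSubmodule (stabF D).toSubalgebra) = rk D := by
      rw [← h1]
      symm
      refine LinearEquiv.finrank_eq (Submodule.equivMapOfInjective _ ?_ (LinearMap.range D))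
      intro x y hxy
      simpa [hv] using hxy
    exact h2
  · intro u hu hu0 x
    refine ⟨hsub u hu hu0 x, fun hx => ?_⟩
    have : x / u ∈ Subalgebra.toSubmodule (stabF D).toSubalgebra := hx
    rw [← hmap u hu hu0] at this
    obtain ⟨z, hz, hzx⟩ := this
    have : z = x := by
      simp only [LinearMap.mulLeft_apply] at hzx
      field_simp at hzx; exact hzx
    exact this ▸ hz

lemma Sq_conj (D : Module.End F E) (hD : D ∈ Sq H) (h : (Module.End F E)ˣ) (hh : h ∈ H) :
    h.1 * D * (h⁻¹).1 ∈ Sq H := by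
  obtain ⟨h0, hsq, g, hg, hgD⟩ := hD
  refine ⟨?_, ?_, h * g * h⁻¹, H.mul_mem (H.mul_mem hh hg) (H.inv_mem hh), ?_⟩
  · intro hz
    apply h0
    calc D = (h⁻¹).1 * (h.1 * D * (h⁻¹).1) * h.1 := by
          rw [← mul_assoc, ← mul_assoc, Units.inv_mul, one_mul, mul_assoc, Units.inv_mul, mul_one]
      _ = 0 := by rw [hz]; simp
  · calc h.1 * D * (h⁻¹).1 * (h.1 * D * (h⁻¹).1) = h.1 * D * ((h⁻¹).1 * h.1) * D * (h⁻¹).1 := by noncomm_ring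
      _ = h.1 * (D * D) * (h⁻¹).1 := by rw [Units.inv_mul]; noncomm_ring
      _ = 0 := by rw [hsq]; simp
  · rw [Units.val_mul, Units.val_mul, hgD, mul_add, add_mul, mul_one, Units.mul_inv]

lemma span_NU (h : 9 ≤ finrank F E) (S : Submodule F E) (hS : ∀ a ∈ NU F E, (a : E) ∈ S) : S = ⊤ := by
  by_contra hne
  obtain ⟨f, hf, hfS⟩ := Submodule.exists_le_ker_of_lt_top S (lt_top_iff_ne_top.2 hne)
  obtain ⟨v, hv⟩ : ∃ v, f v ≠ 0 := by
    by_contra! h; exact hf (LinearMap.ext h)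
  obtain ⟨a, ha, h1⟩ := lemK1 f v (by rw [finrank_self]; exact h)
  exact hv (h1 ▸ hfS (hS a ha))

lemma step3a (hN : ∀ a ∈ NU F E, muU F a ∈ H) (D : Module.End F E) (hD : D ∈ Sq H)
    (hmin : ∀ D' ∈ Sq H, rk D ≤ rk D') (hn : 8 * rk D ^ 2 + 5 ≤ finrank F E)
    (u : E) (hu : u ∈ LinearMap.range D) (hu0 : u ≠ 0) (a : Eˣ) (ha : a ∈ NU F E) 
    (h : (Module.End F E)ˣ) (hh : h ∈ H) (k : E) (hk : k ∈ stabF D) :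
    h.1 (a * u * k) / h.1 (a * u) ∈ stabF D := by
  have hH : h * muU F a ∈ H := H.mul_mem hh (hN a ha)
  set m := h * muU F a with hm
  have h1 := Sq_conj H D hD m hH
  set D' := m.1 * D * (m⁻¹).1 with hD'
  have hrk : rk D' = rk D := by rw [hD', rk_mul_unit, rk_unit_mul]
  have s1 := step2 H hN D hD hmin hn
  have s2 := step2 H hN D' h1 (by rw [hrk]; exact hmin) (by rw [hrk]; exact hn)
  have hKK : stabF D' = stabF D := subfield_unique _ _ (by rw [s1.1, s2.1, hrk])
  have hmem : ∀ x ∈ LinearMap.range D, h.1 (a * x) ∈ LinearMap.range D' := by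
    rintro _ ⟨v, rfl⟩
    refine ⟨m.1 v, ?_⟩
    have : D' * m.1 = m.1 * D := by rw [hD', mul_assoc, Units.inv_mul, mul_one]
    exact congrArg (fun f => f v) this
  have hne : h.1 (a * u) ≠ 0 := by
    intro hz
    have : (h⁻¹).1 (h.1 (a * u)) = 0 := by rw [hz, map_zero]
    rw [← Module.End.mul_apply, Units.inv_mul] at this
    simp [hu0] at this
  rw [← hKK, ← s2.2 _ (hmem u hu) hne, mul_assoc]
  apply hmem
  rw [s1.2 u hu hu0]
  rwa [mul_div_cancel_left₀ _ hu0]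

/-- the map used for fixing -/
noncomputable def fixMap (K : IntermediateField F E) (D : Module.End F E) :
    E →ₗ[F] (K →ₗ[F] LinearMap.range D) where
  toFun x := D.rangeRestrict ∘ₗ (mu x) ∘ₗ K.val.toLinearMap
  map_add' a b := by ext x; simp [add_mul]
  map_smul' a b := by ext x; simp

lemma fixMap_zero {K : IntermediateField F E} {D : Module.End F E} {x : E} (h : fixMap K D x = 0) 
    (k : E) (hk : k ∈ K) : D (x * k) = 0 := 
  congrArg (fun f => ((f ⟨k, hk⟩ : LinearMap.range D) : E)) h

lemma step3 (hN : ∀ a ∈ NU F E, muU F a ∈ H) (D : Module.End F E) (hD : D ∈ Sq H)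
    (hmin : ∀ D' ∈ Sq H, rk D ≤ rk D') (g : (Module.End F E)ˣ) (hg : g ∈ H) (hr : rk D ≤ rk (g.1 - 1))
    (hn : 8 * rk (g.1 - 1) ^ 2 + 5 ≤ finrank F E) (k : E) (hk : k ∈ stabF D) (v : E) :
    g.1 (v * k) = g.1 v * k := by
  set K := stabF D with hK
  set Dg := g.1 - 1 with hDg
  have hr0 : 0 < rk D := rk_pos hD.1
  have hn' : 8 * rk D ^ 2 + 5 ≤ finrank F E := by nlinarith
  have hrd : rk D * rk Dg ≤ rk Dg ^ 2 := by nlinarith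
  have hd0 : 1 ≤ rk Dg ^ 2 := by nlinarith
  obtain ⟨v0, hv0⟩ : ∃ v, D v ≠ 0 := by
    by_contra! h; exact hD.1 (LinearMap.ext h)
  set u0 := D v0 with hu0
  have s3 := step3a H hN D hD hmin hn' u0 ⟨v0, rfl⟩ hv0
  have sK := (step2 H hN D hD hmin hn').1
  rw [← hK] at s3 sK
  have hfin : finrank F (K →ₗ[F] LinearMap.range Dg) = rk D * rk Dg := by
    rw [← sK]; exact Module.finrank_linearMap F F K (LinearMap.range Dg)
  have hgapp : ∀ x, g.1 x = x + Dg x := by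
    intro x; rw [hDg]; simp
  have main : ∀ a0 ∈ NU F E, g.1 (a0 * u0 * k) = g.1 (a0 * u0) * k := by
    intro a0 ha0
    set u := (a0 : E) * u0 with hu
    set u' := g.1 u with hu'
    set P : Submodule F E := (Subalgebra.toSubmodule K.toSubalgebra).map (mu u' : Module.End F E) with hP
    have hPr : finrank F P ≤ rk D := by
      refine (Submodule.finrank_map_le _ _).trans (le_of_eq sK)
    have hker := LinearMap.finrank_range_add_finrank_ker (K := F) (V := E)
      (V₂ := K →ₗ[F] LinearMap.range Dg) (fixMap K Dg)
    have hkr := Submodule.finrank_le (LinearMap.range (fixMap K Dg))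
    have hnot : ¬ LinearMap.ker (fixMap K Dg) ≤ P := by
      intro hle
      have h1 := Submodule.finrank_mono hle
      have h2 : rk D ≤ rk Dg ^ 2 := by nlinarith
      rw [hfin] at hkr
      omega
    obtain ⟨w0, hw0, hw0P⟩ := SetLike.not_le_iff_exists.1 hnot
    obtain ⟨π, hπ, hπP⟩ := Submodule.exists_le_ker_of_notMem hw0P
    obtain ⟨a, ha, h1⟩ := lemK1 (F := F) (X := (K →ₗ[F] LinearMap.range Dg) × F)
      (((fixMap K Dg).prod π) ∘ₗ (LinearMap.mulRight F u0)) ((u + w0) / u0) (by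
        haveI : Module.Free F (K →ₗ[F] LinearMap.range Dg) := Module.Free.of_divisionRing F (K →ₗ[F] LinearMap.range Dg)
        have := Module.finrank_prod (R := F) (M := (K →ₗ[F] LinearMap.range Dg)) (M' := F)
        rw [this, hfin, finrank_self]
        omega)
    simp only [LinearMap.comp_apply, LinearMap.mulRight_apply, LinearMap.prod_apply, Function.prod,
      div_mul_cancel₀ _ hv0, Prod.mk.injEq] at h1
    obtain ⟨h1, h2⟩ := h1
    set w := (a : E) * u0 - u with hw
    have hau : (a : E) * u0 = u + w := by rw [hw]; ring
    have hw1 : fixMap K Dg w = 0 := by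
      rw [hw, map_sub, h1, map_add]
      exact (add_sub_cancel_left _ _).trans hw0
    have hw2 : π w = π w0 := by
      rw [hw, map_sub, h2, map_add, add_sub_cancel_left]
    have hwP : w ∉ P := fun h => hπ (by rw [← hw2]; exact hπP h)
    have hgw : ∀ k ∈ K, g.1 (w * k) = w * k := fun k hk => by rw [hgapp, fixMap_zero hw1 k hk, add_zero]
    have e1 := s3 a ha g hg k hk
    have e2 := s3 a0 ha0 g hg k hk
    rw [hau] at e1
    rw [← hu, ← hu'] at e2
    have hgw1 : g.1 w = w := by simpa using hgw 1 (one_mem _)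
    rw [add_mul, map_add, map_add, hgw k hk, hgw1] at e1
    have hune : u' ≠ 0 := by
      intro hz
      have : (g⁻¹).1 (g.1 u) = 0 := by rw [← hu', hz, map_zero]
      rw [← Module.End.mul_apply, Units.inv_mul] at this
      simp [hu, hv0] at this
    rw [← hu'] at e1
    have hsne : u' + w ≠ 0 := by
      intro hz
      apply hwP
      rw [eq_neg_of_add_eq_zero_right hz]
      exact ⟨-1, neg_mem (one_mem K), by simp⟩
    set k' := (g.1 (u * k) + w * k) / (u' + w) with hk'
    set k'' := g.1 (u * k) / u' with hk''
    have f1 : g.1 (u * k) + w * k = (u' + w) * k' := by rw [hk']; field_simp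
    have f2 : g.1 (u * k) = u' * k'' := by rw [hk'']; field_simp
    have f3 : w * (k - k') = u' * (k' - k'') := by rw [f2] at f1; linear_combination f1
    by_cases hkk : k' = k
    · rw [hkk, sub_self, mul_zero] at f3
      have := (mul_eq_zero.1 f3.symm).resolve_left hune
      rw [f2, ← sub_eq_zero.1 this]
    · exfalso
      apply hwP
      have hk0 : k - k' ≠ 0 := sub_ne_zero.2 (Ne.symm hkk)
      refine ⟨(k' - k'') / (k - k'), K.div_mem (sub_mem e1 e2) (sub_mem hk e1), ?_⟩
      rw [LinearMap.mulLeft_apply]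
      field_simp
      rw [← f3, mul_comm]
  let S : Submodule F E := LinearMap.ker (((g.1 ∘ₗ LinearMap.mulRight F k) - (LinearMap.mulRight F k ∘ₗ g.1)) ∘ₗ LinearMap.mulRight F u0)
  have hS : S = ⊤ := by
    apply span_NU (by omega)
    intro a ha
    simp only [S, LinearMap.mem_ker, LinearMap.comp_apply, LinearMap.sub_apply, LinearMap.mulRight_apply, sub_eq_zero]
    exact main a ha
  have : v / u0 ∈ S := hS ▸ Submodule.mem_top
  simp only [S, LinearMap.mem_ker, LinearMap.comp_apply, LinearMap.sub_apply, LinearMap.mulRight_apply, sub_eq_zero, div_mul_cancel₀ _ hv0] at this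
  exact this

lemma step3_dvd (K : IntermediateField F E) (D : Module.End F E) (h : ∀ k ∈ K, ∀ v, D (v * k) = D v * k) :
    finrank F K ∣ rk D := by
  have hsm : ∀ (k : K) (v : E), D (k • v) = k • D v := by
    intro k v
    have := h k k.2 v
    rw [mul_comm] at this
    simp only [Algebra.smul_def]
    change D (k * v) = k * D v
    rw [this, mul_comm]
  let f : E →ₗ[K] E := { toFun := D, map_add' := map_add D, map_smul' := hsm }
  have h1 : rk D = finrank F (LinearMap.range f) := by
    refine LinearEquiv.finrank_eq ?_
    exact { toFun := fun x => ⟨x.1, x.2⟩, invFun := fun x => ⟨x.1, x.2⟩, map_add' := fun _ _ => rfl,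
            map_smul' := fun _ _ => rfl, left_inv := fun _ => rfl, right_inv := fun _ => rfl }
  rw [h1, ← Module.finrank_mul_finrank F K (LinearMap.range f)]
  exact dvd_mul_right _ _

theorem step3_final (hN : ∀ a ∈ NU F E, muU F a ∈ H) (hn : 2 ≤ finrank F E)
    (hp : ∀ p, p.Prime → p ∣ finrank F E → ∃ g ∈ H, 0 < rk (g.1 - 1) ∧ 8 * rk (g.1 - 1) ^ 2 + 5 ≤ finrank F E ∧
      ¬ p ∣ rk (g.1 - 1)) : ∃ D ∈ Sq H, rk D = 1 := by
  classical
  have hne0 : ∀ g : (Module.End F E)ˣ, 0 < rk (g.1 - 1) → g.1 - 1 ≠ 0 := by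
    intro g hg hz
    rw [hz, rk, LinearMap.range_zero, finrank_bot] at hg
    exact absurd hg (lt_irrefl _)
  obtain ⟨p0, hp0, hp0n⟩ := Nat.exists_prime_and_dvd (show finrank F E ≠ 1 by omega)
  obtain ⟨g0, hg0, h1, h2, -⟩ := hp p0 hp0 hp0n
  obtain ⟨D0, hD0, -⟩ := exists_Sq' H hN g0 hg0 h2 (hne0 g0 h1)
  obtain ⟨D, hD, hmin⟩ : ∃ D ∈ Sq H, ∀ D' ∈ Sq H, rk D ≤ rk D' := by
    obtain ⟨D, hD, h⟩ := WellFounded.has_min (measure (fun D : Module.End F E => rk D)).wf (Sq H) ⟨D0, hD0⟩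
    exact ⟨D, hD, fun D' hD' => not_lt.1 (h D' hD')⟩
  refine ⟨D, hD, ?_⟩
  by_contra hne
  have hle : ∀ g ∈ H, 0 < rk (g.1 - 1) → 8 * rk (g.1 - 1) ^ 2 + 5 ≤ finrank F E → rk D ≤ rk (g.1 - 1) := by
    intro g hg h1 h2
    obtain ⟨D', hD', h3⟩ := exists_Sq' H hN g hg h2 (hne0 g h1)
    exact (hmin D' hD').trans h3
  have hnD : 8 * rk D ^ 2 + 5 ≤ finrank F E := by
    have := hle g0 hg0 h1 h2
    nlinarith
  have hK := (step2 H hN D hD hmin hnD).1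
  have hrn : rk D ∣ finrank F E := by
    rw [← hK, ← Module.finrank_mul_finrank F (stabF D) E]
    exact dvd_mul_right _ _
  obtain ⟨p, hpp, hpr⟩ := Nat.exists_prime_and_dvd hne
  obtain ⟨g, hg, g1, g2, g3⟩ := hp p hpp (hpr.trans hrn)
  apply g3
  refine hpr.trans ?_
  rw [← hK]
  apply step3_dvd
  intro k hk v
  have := step3 H hN D hD hmin g hg (hle g hg g1 g2) g2 k hk v
  simp only [LinearMap.sub_apply, Module.End.one_apply, this]
  ring

end A2
end IG
set_option linter.unusedSectionVars false
set_option linter.unusedSimpArgs false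
namespace IG
open Finset Module

section A3
variable {F E : Type*} [Field F] [Finite F] [Field E] [Finite E] [Algebra F E]
variable (H : Subgroup (Module.End F E)ˣ)

lemma ring_c1 {R : Type*} [Ring R] (A : R) (hA : A * A = 0) : (1 + A) * (1 - A) = 1 := by
  have : (1 + A) * (1 - A) = 1 - A * A := by noncomm_ring
  rw [this, hA, sub_zero]

lemma ring_c2 {R : Type*} [Ring R] (A B : R) (hA : A * A = 0) (hB : B * B = 0) (hBA : B * A = 0) :
    (1 + A) * (1 + B) * (1 - A) * (1 - B) = 1 + A * B := by
  have e1 : (1 + A) * (1 + B) * (1 - A) * (1 - B) = 1 + A * B + (- (A * A) + A * A * B - B * A + B * A * B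
    - A * (B * A) + A * (B * A) * B - B * B - A * (B * B)) := by noncomm_ring
  rw [e1, hBA, hB, hA]
  simp

/-- the transvection is in H -/
def Tv (u : E) (φ : E →ₗ[F] F) : Prop := ∃ g ∈ H, g.1 = 1 + φ.smulRight u

lemma sr_mul (u u' : E) (φ φ' : E →ₗ[F] F) :
    (φ.smulRight u : Module.End F E) * φ'.smulRight u' = φ u' • φ'.smulRight u := by
  ext x; simp [smul_smul, mul_comm]

lemma Tv_zero (u : E) : Tv H u 0 := ⟨1, H.one_mem, by ext; simp⟩

lemma Tv_zero' (φ : E →ₗ[F] F) : Tv H 0 φ := ⟨1, H.one_mem, by ext; simp⟩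

lemma Tv_add {u : E} {φ ψ : E →ₗ[F] F} (hφ : Tv H u φ) (hψ : Tv H u ψ) (h : φ u = 0) : Tv H u (φ + ψ) := by
  obtain ⟨g, hg, h1⟩ := hφ
  obtain ⟨g', hg', h2⟩ := hψ
  refine ⟨g * g', H.mul_mem hg hg', ?_⟩
  rw [Units.val_mul, h1, h2, mul_add, add_mul, add_mul, sr_mul, h]
  ext x; simp [add_smul]; ring

lemma Tv_add' {u v : E} {φ : E →ₗ[F] F} (hφ : Tv H u φ) (hψ : Tv H v φ) (h : φ v = 0) : Tv H (u + v) φ := by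
  obtain ⟨g, hg, h1⟩ := hφ
  obtain ⟨g', hg', h2⟩ := hψ
  refine ⟨g * g', H.mul_mem hg hg', ?_⟩
  rw [Units.val_mul, h1, h2, mul_add, add_mul, add_mul, sr_mul, h]
  ext x; simp; ring

lemma Tv_smul {u : E} {φ : E →ₗ[F] F} (c : F) : Tv H (c • u) φ ↔ Tv H u (c • φ) := by
  unfold Tv
  have : (φ.smulRight (c • u) : Module.End F E) = (c • φ).smulRight u := by
    ext x; simp [smul_smul, mul_comm]
  rw [this]

lemma Tv_comm {u v : E} {φ ψ : E →ₗ[F] F} (hφ : Tv H u φ) (hψ : Tv H v ψ) (h1 : φ u = 0) (h2 : ψ v = 0)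
    (h3 : ψ u = 0) : Tv H u (φ v • ψ) := by
  obtain ⟨g, hg, hgu⟩ := hφ
  obtain ⟨g', hg', hgv⟩ := hψ
  set A : Module.End F E := φ.smulRight u
  set B : Module.End F E := ψ.smulRight v
  have hA : A * A = 0 := by rw [sr_mul, h1, zero_smul]
  have hB : B * B = 0 := by rw [sr_mul, h2, zero_smul]
  have hBA : B * A = 0 := by rw [sr_mul, h3, zero_smul]
  have i1 : (g⁻¹).1 = 1 - A := by
    have : g.1 * (1 - A) = 1 := by rw [hgu]; exact ring_c1 A hA
    exact Units.inv_eq_of_mul_eq_one_right this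
  have i2 : (g'⁻¹).1 = 1 - B := by
    have : g'.1 * (1 - B) = 1 := by rw [hgv]; exact ring_c1 B hB
    exact Units.inv_eq_of_mul_eq_one_right this
  refine ⟨g * g' * g⁻¹ * g'⁻¹, H.mul_mem (H.mul_mem (H.mul_mem hg hg') (H.inv_mem hg)) (H.inv_mem hg'), ?_⟩
  have hAB : ((φ v • ψ).smulRight u : Module.End F E) = A * B := by
    rw [sr_mul]; ext x; simp [smul_smul, mul_comm]
  rw [hAB]
  simp only [Units.val_mul, i1, i2, hgu, hgv]
  exact ring_c2 A B hA hB hBA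

lemma Tv_conj {u : E} {φ : E →ₗ[F] F} (h : Tv H u φ) (g : (Module.End F E)ˣ) (hg : g ∈ H) :
    Tv H (g.1 u) (φ ∘ₗ (g⁻¹).1) := by
  obtain ⟨t, ht, htu⟩ := h
  refine ⟨g * t * g⁻¹, H.mul_mem (H.mul_mem hg ht) (H.inv_mem hg), ?_⟩
  rw [Units.val_mul, Units.val_mul, htu, mul_add, add_mul, mul_one, Units.mul_inv]
  congr 1
  ext x
  simp

/-- functional shifted by a multiplier -/
def sh (φ : E →ₗ[F] F) (c : E) : E →ₗ[F] F := φ ∘ₗ LinearMap.mulLeft F c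

@[simp] lemma sh_apply (φ : E →ₗ[F] F) (c x : E) : sh φ c x = φ (c * x) := rfl

lemma sh_surj (φ : E →ₗ[F] F) (hφ : φ ≠ 0) (ψ : E →ₗ[F] F) : ∃ c, ψ = sh φ c := by
  let f : E →ₗ[F] (E →ₗ[F] F) := { toFun := sh φ, map_add' := fun a b => by ext; simp [add_mul], 
                                    map_smul' := fun a b => by ext; simp }
  have hinj : Function.Injective f := by
    rw [injective_iff_map_eq_zero]
    intro c hc
    by_contra hc0
    apply hφ
    ext x
    have := congrArg (fun f => f (c⁻¹ * x)) hc
    simpa [f, hc0] using this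
  have hsurj : Function.Surjective f :=
    (LinearMap.injective_iff_surjective_of_finrank_eq_finrank (Subspace.dual_finrank_eq).symm).1 hinj
  obtain ⟨c, hc⟩ := hsurj ψ
  exact ⟨c, hc.symm⟩

theorem step4 (hN : ∀ a ∈ NU F E, muU F a ∈ H) (hn : 17 ≤ finrank F E) (D : Module.End F E) (hD : D ∈ Sq H)
    (hr : rk D = 1) (u : E) (φ : E →ₗ[F] F) (hu : φ u = 0) : Tv H u φ := by
  obtain ⟨h0, hsq, g, hg, hgD⟩ := hD
  obtain ⟨v0, hv0⟩ : ∃ v, D v ≠ 0 := by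
    by_contra! h; exact h0 (LinearMap.ext h)
  set u0 := D v0 with hu0
  obtain ⟨φ0, hφ0⟩ : ∃ φ0 : E →ₗ[F] F, D = φ0.smulRight u0 := by
    have h1 : ∀ x, ∃ c : F, c • u0 = D x := by
      intro x
      obtain ⟨c, hc⟩ := (finrank_eq_one_iff_of_nonzero' (⟨u0, ⟨v0, rfl⟩⟩ : LinearMap.range D)
        (fun h => hv0 (congrArg Subtype.val h))).1 hr ⟨D x, ⟨x, rfl⟩⟩
      exact ⟨c, congrArg Subtype.val hc⟩
    choose c hc using h1
    refine ⟨{ toFun := c, map_add' := fun x y => ?_, map_smul' := fun x y => ?_ }, ?_⟩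
    · apply smul_left_injective F hv0
      simp only [add_smul, hc, map_add]
    · apply smul_left_injective F hv0
      simp only [hc, map_smul, RingHom.id_apply, smul_eq_mul, mul_smul]
    · ext x; simp [hc]
  have hφz : φ0 u0 = 0 := by
    have := congrArg (fun f => f v0) hsq
    simp only [Module.End.mul_apply, ← hu0, LinearMap.zero_apply] at this
    rw [hφ0] at this
    simpa [hv0] using this
  have hφne : φ0 ≠ 0 := by
    intro h; apply h0; rw [hφ0, h]; ext; simp
  have T0 : Tv H u0 φ0 := ⟨g, hg, by rw [hgD, hφ0]⟩
  have Ta : ∀ a ∈ NU F E, ∀ u φ, Tv H u φ → Tv H (a * u) (sh φ ((a⁻¹ : Eˣ) : E)) := by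
    intro a ha u φ h
    exact Tv_conj H h (muU F a) (hN a ha)
  -- the multiples
  have T1 : ∀ b ∈ NU F E, (b : E) ∉ (Submodule.span F {(1 : E)}) → φ0 ((b⁻¹ : Eˣ) * u0) = 0 → 
      ∀ c : F, Tv H u0 (c • sh φ0 ((b⁻¹ : Eˣ) : E)) := by
    intro b hb hbF hb0 c
    -- find β
    obtain ⟨β, hβ1, hβ2⟩ : ∃ β : E, φ0 (β * u0) = 0 ∧ φ0 (β * (b * u0)) = 1 := by
      by_contra! hcon
      have hker : LinearMap.ker (sh φ0 u0) ≤ LinearMap.ker (sh φ0 (b * u0)) := by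
        intro β hβ
        by_contra hne
        simp only [LinearMap.mem_ker, sh_apply] at hβ hne
        refine hcon ((φ0 (b * u0 * β))⁻¹ • β) ?_ ?_
        · rw [smul_mul_assoc, map_smul, mul_comm β u0, hβ, smul_zero]
        · rw [smul_mul_assoc, map_smul, mul_comm β, smul_eq_mul, inv_mul_cancel₀ hne]
      obtain ⟨x, hx⟩ : ∃ x, φ0 (u0 * x) ≠ 0 := by
        by_contra! h
        apply hφne
        ext x
        have := h (u0⁻¹ * x)
        rwa [mul_inv_cancel_left₀ hv0] at this
      apply hbF
      set l : F := φ0 (b * u0 * x) / φ0 (u0 * x) with hl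
      have hall : ∀ y, φ0 ((b - algebraMap F E l) * u0 * y) = 0 := by
        intro y
        have h1 : y - (φ0 (u0 * y) / φ0 (u0 * x)) • x ∈ LinearMap.ker (sh φ0 u0) := by
          simp only [LinearMap.mem_ker, sh_apply, mul_sub, mul_smul_comm, map_sub, map_smul, smul_eq_mul]
          field_simp; ring
        have h2 := hker h1
        simp only [LinearMap.mem_ker, sh_apply, mul_sub, mul_smul_comm, map_sub, map_smul, smul_eq_mul] at h2
        have h3 : (b - algebraMap F E l) * u0 * y = b * u0 * y - l • (u0 * y) := by
          rw [Algebra.smul_def]; ring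
        rw [h3, map_sub, map_smul, smul_eq_mul, hl, ← h2]
        field_simp
      have hz : (b : E) - algebraMap F E l = 0 := by
        by_contra hne
        apply hφne
        ext x
        have := hall (((b - algebraMap F E l) * u0)⁻¹ * x)
        rwa [mul_inv_cancel_left₀ (mul_ne_zero hne hv0)] at this
      rw [sub_eq_zero.1 hz, Submodule.mem_span_singleton]
      exact ⟨l, by rw [Algebra.smul_def, mul_one]⟩
    obtain ⟨x, hx⟩ : ∃ x, φ0 (x * u0) ≠ 0 := by
      by_contra! h
      apply hφne
      ext x
      have := h (x * u0⁻¹)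
      rwa [inv_mul_cancel_right₀ hv0] at this
    obtain ⟨a, ha, h1, h2⟩ := lemK (φ0 ∘ₗ LinearMap.mulRight F u0) 
      ((φ0 ∘ₗ LinearMap.mulRight F u0).prod (φ0 ∘ₗ LinearMap.mulRight F (b * u0)))
      ((c / φ0 (x * u0)) • x) β (by rw [finrank_prod, finrank_self]; omega)
    simp only [LinearMap.comp_apply, LinearMap.mulRight_apply, LinearMap.prod_apply, Function.prod,
      Prod.mk.injEq, hβ1, hβ2, smul_mul_assoc, map_smul, smul_eq_mul, div_mul_cancel₀ _ hx] at h1 h2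
    have t1 := Tv_comm H T0 (Ta a ha _ _ T0) hφz (by simp [hφz]) (by simpa using h2.1)
    have t2 := Tv_comm H t1 (Ta b hb _ _ T0) (by
      rw [LinearMap.smul_apply, sh_apply, h2.1, smul_zero]) (by simp [hφz]) (by simpa using hb0)
    rw [LinearMap.smul_apply, sh_apply, h2.2, h1] at t2
    simpa using t2
  -- X submodule
  let X : Submodule F E := 
    { carrier := {c | φ0 (c * u0) = 0 ∧ ∀ l : F, Tv H u0 (l • sh φ0 c)}
      zero_mem' := ⟨by simp, fun l => by
        have : l • sh φ0 0 = 0 := by ext; simp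
        rw [this]; exact Tv_zero H _⟩
      add_mem' := fun {a b} ha hb => ⟨by rw [add_mul, map_add, ha.1, hb.1, add_zero], fun l => by
        have : l • sh φ0 (a + b) = l • sh φ0 a + l • sh φ0 b := by ext; simp [add_mul, mul_add]
        rw [this]; exact Tv_add H (ha.2 l) (hb.2 l) (by simp [ha.1])⟩
      smul_mem' := fun r a ha => ⟨by rw [smul_mul_assoc, map_smul, ha.1, smul_zero], fun l => by
        have : l • sh φ0 (r • a) = (l * r) • sh φ0 a := by ext; simp [mul_assoc]
        rw [this]; exact ha.2 _⟩ }
  have hX : ∀ c, φ0 (c * u0) = 0 → c ∉ Submodule.span F {(1:E)} → c ∈ X := by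
    intro c hc hcF
    by_contra hcX
    obtain ⟨θ, hθ, hθX⟩ := Submodule.exists_le_ker_of_notMem hcX
    obtain ⟨π, hπ, hπF⟩ := Submodule.exists_le_ker_of_notMem hcF
    obtain ⟨a, ha, h1⟩ := lemK1 (((φ0 ∘ₗ LinearMap.mulRight F u0).prod θ).prod π) c (by
      rw [finrank_prod, finrank_prod, finrank_self]; omega)
    simp only [LinearMap.comp_apply, LinearMap.mulRight_apply, LinearMap.prod_apply, Function.prod,
      Prod.mk.injEq] at h1
    obtain ⟨⟨h1, h2⟩, h3⟩ := h1
    apply hθ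
    rw [← h2]
    apply hθX
    refine ⟨h1.trans hc, fun l => ?_⟩
    have := T1 a⁻¹ (inv_mem ha) ?_ (by rw [inv_inv]; exact h1.trans hc) l
    · rwa [inv_inv] at this
    · intro hmem
      apply hπ
      rw [← h3]
      apply hπF
      obtain ⟨l, hl⟩ := Submodule.mem_span_singleton.1 hmem
      rw [Submodule.mem_span_singleton]
      refine ⟨l⁻¹, ?_⟩
      have : (a : E) = ((a⁻¹ : Eˣ) : E)⁻¹ := by simp
      rw [this, ← hl, Algebra.smul_def, Algebra.smul_def, mul_one, mul_one, map_inv₀]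
  have hX2 : ∀ c, φ0 (c * u0) = 0 → c ∈ X := by
    intro c hc
    by_cases hcF : c ∈ Submodule.span F {(1:E)}
    · have hnot : ¬ LinearMap.ker (φ0 ∘ₗ LinearMap.mulRight F u0) ≤ Submodule.span F {(1:E)} := by
        intro hle
        have h1 := Submodule.finrank_mono hle
        have h2 := LinearMap.finrank_range_add_finrank_ker (φ0 ∘ₗ LinearMap.mulRight F u0)
        have h3 := Submodule.finrank_le (LinearMap.range (φ0 ∘ₗ LinearMap.mulRight F u0))
        rw [finrank_self] at h3
        rw [finrank_span_singleton (one_ne_zero)] at h1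
        omega
      obtain ⟨c', hc', hc'F⟩ := SetLike.not_le_iff_exists.1 hnot
      have hc'0 : φ0 (c' * u0) = 0 := hc'
      have := hX (c + c') (by rw [add_mul, map_add, hc, hc'0, add_zero])
        (fun h => hc'F ((Submodule.add_mem_iff_right _ hcF).1 h))
      exact (Submodule.add_mem_iff_left _ (hX c' hc'0 hc'F)).1 this
    · exact hX c hc hcF
  have T2 : ∀ ψ : E →ₗ[F] F, ψ u0 = 0 → Tv H u0 ψ := by
    intro ψ hψ
    obtain ⟨c, rfl⟩ := sh_surj φ0 hφne ψ
    have := (hX2 c hψ).2 1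
    rwa [one_smul] at this
  have T3 : ∀ a ∈ NU F E, ∀ ψ : E →ₗ[F] F, ψ (a * u0) = 0 → Tv H (a * u0) ψ := by
    intro a ha ψ hψ
    have := Ta a ha u0 (sh ψ a) (T2 _ hψ)
    have h2 : sh (sh ψ a) ((a⁻¹ : Eˣ) : E) = ψ := by
      ext x; simp
    rwa [h2] at this
  by_contra hcon
  let Y : Submodule F E := 
    { carrier := {u | φ u = 0 ∧ ∀ l : F, Tv H (l • u) φ}
      zero_mem' := ⟨by simp, fun l => by rw [smul_zero]; exact Tv_zero' H _⟩
      add_mem' := fun {a b} ha hb => ⟨by rw [map_add, ha.1, hb.1, add_zero], fun l => by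
        rw [smul_add]
        exact Tv_add' H (ha.2 l) (hb.2 l) (by rw [map_smul, hb.1, smul_zero])⟩
      smul_mem' := fun r a ha => ⟨by rw [map_smul, ha.1, smul_zero], fun l => by
        rw [smul_smul]; exact ha.2 _⟩ }
  have huY : u ∉ Y := fun h => hcon (by simpa using h.2 1)
  obtain ⟨θ, hθ, hθY⟩ := Submodule.exists_le_ker_of_notMem huY
  obtain ⟨a, ha, h1⟩ := lemK1 (((φ ∘ₗ LinearMap.mulRight F u0).prod (θ ∘ₗ LinearMap.mulRight F u0))) (u / u0) (by
      rw [finrank_prod, finrank_self]; omega)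
  simp only [LinearMap.comp_apply, LinearMap.mulRight_apply, LinearMap.prod_apply, Function.prod,
      Prod.mk.injEq, div_mul_cancel₀ _ hv0] at h1
  apply hθ
  rw [← h1.2]
  apply hθY
  refine ⟨h1.1.trans hu, fun l => ?_⟩
  rw [Tv_smul]
  apply T3 a ha
  simp [h1.1, hu]

/-- Group theorem -/
theorem thmA (hN : ∀ a ∈ NU F E, muU F a ∈ H) (hn : 17 ≤ finrank F E)
    (hp : ∀ p, p.Prime → p ∣ finrank F E → ∃ g ∈ H, 0 < rk (g.1 - 1) ∧ 8 * rk (g.1 - 1) ^ 2 + 5 ≤ finrank F E ∧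
      ¬ p ∣ rk (g.1 - 1)) (u : E) (φ : E →ₗ[F] F) (hu : φ u = 0) : Tv H u φ := by
  obtain ⟨D, hD, hr⟩ := step3_final H hN (by omega) hp
  exact step4 H hN hn D hD hr u φ hu

end A3

section gen
variable {ι F : Type*} [Fintype ι] [DecidableEq ι] [Nontrivial ι] [Field F]
open Matrix

theorem SL_gen (H : Subgroup (SpecialLinearGroup ι F))
    (h : ∀ i j (hij : i ≠ j) (a : F), SpecialLinearGroup.transvection hij a ∈ H) : H = ⊤ := by
  rw [eq_top_iff]
  intro M _
  refine SpecialLinearGroup.diagonal_transvection_induction' (fun M => M ∈ H) M ?_ ?_ ?_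
  · intro i j hij c hc
    have : SpecialLinearGroup.diag2n hij c hc = 
      SpecialLinearGroup.transvection hij c * SpecialLinearGroup.transvection hij.symm (-c⁻¹) *
      SpecialLinearGroup.transvection hij c * SpecialLinearGroup.transvection hij (-1) *
      SpecialLinearGroup.transvection hij.symm 1 * SpecialLinearGroup.transvection hij (-1) := by
      apply Subtype.ext
      have hw : ∀ c : F, c ≠ 0 → (SpecialLinearGroup.transvection hij c * SpecialLinearGroup.transvection hij.symm (-c⁻¹) *
          SpecialLinearGroup.transvection hij c : SpecialLinearGroup ι F).1 = 
          1 + single i j c - single j i c⁻¹ - single i i 1 - single j j 1 := by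
        intro c hc
        change ((1 : Matrix ι ι F) + single i j c) * (1 + single j i (-c⁻¹)) * (1 + single i j c) = _
        simp only [mul_add, add_mul, 
          single_mul_single_same, single_mul_single_of_ne _ _ _ _ hij, single_mul_single_of_ne _ _ _ _ hij.symm, 
          one_mul, mul_one, zero_mul, mul_neg, neg_mul, mul_inv_cancel₀ hc, inv_mul_cancel₀ hc, ← single_neg]
        abel
      have h1 := hw c hc
      have h2 := hw (-1) (by simp)
      have e : (-(-1 : F)⁻¹) = 1 := by norm_num
      rw [e] at h2
      rw [mul_assoc _ _ (SpecialLinearGroup.transvection hij (-1) : SpecialLinearGroup ι F), mul_assoc,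
        ← mul_assoc (SpecialLinearGroup.transvection hij (-1) : SpecialLinearGroup ι F)]
      rw [show ∀ A B : SpecialLinearGroup ι F, (A * B).1 = A.1 * B.1 from fun _ _ => rfl, h1, h2,
        SpecialLinearGroup.diag2n_coe]
      have hd : (diagonal (fun k => if k = i then c else if k = j then c⁻¹ else 1) : Matrix ι ι F) = 
          1 + single i i c - single i i 1 + single j j c⁻¹ - single j j 1 := by
        ext k l
        simp only [diagonal_apply, Matrix.add_apply, Matrix.sub_apply, single_apply, one_apply]
        by_cases hkl : k = l
        · subst hkl
          by_cases hk : k = i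
          · subst hk; simp [hij.symm]
          · by_cases hk' : k = j
            · subst hk'; simp [hk, hij]
            · simp [hk, hk', Ne.symm hk, Ne.symm hk']
        · have a1 : ¬ (i = k ∧ i = l) := fun h => hkl (h.1.symm.trans h.2)
          have a2 : ¬ (j = k ∧ j = l) := fun h => hkl (h.1.symm.trans h.2)
          simp [hkl, a1, a2]
      rw [hd]
      simp only [mul_add, add_mul, mul_sub, sub_mul,
          single_mul_single_same, single_mul_single_of_ne _ _ _ _ hij, single_mul_single_of_ne _ _ _ _ hij.symm, 
          one_mul, mul_one, zero_mul, inv_neg, inv_one, mul_neg, ← single_neg]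
      abel
    rw [this]
    exact H.mul_mem (H.mul_mem (H.mul_mem (H.mul_mem (H.mul_mem (h _ _ _ _) (h _ _ _ _)) (h _ _ _ _)) (h _ _ _ _))
      (h _ _ _ _)) (h _ _ _ _)
  · exact h
  · intro A B hA hB
    exact H.mul_mem hA hB
end gen

end IG
set_option linter.unusedSectionVars false
set_option linter.unusedSimpArgs false
set_option linter.unusedFintypeInType false

namespace IG
open Finset Module

section B
variable {F : Type} [Field F] [Fintype F] {n : ℕ}

/-- rank of `y^m - 1` -/
noncomputable def rkm (y : Matrix.SpecialLinearGroup (Fin n) F) (m : ℕ) : ℕ :=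
  finrank F (LinearMap.range ((Matrix.toLin' y.1) ^ m - 1))

/-- the representation -/
noncomputable def repE {E : Type} [Field E] [Algebra F E] (b : Basis (Fin n) F E) :
    Matrix.SpecialLinearGroup (Fin n) F →* (Module.End F E)ˣ :=
  (Units.map ((Matrix.toLinAlgEquiv b) : Matrix (Fin n) (Fin n) F →* Module.End F E)).comp
    Matrix.SpecialLinearGroup.toGL

lemma repE_apply {E : Type} [Field E] [Algebra F E] (b : Basis (Fin n) F E)
    (y : Matrix.SpecialLinearGroup (Fin n) F) : (repE b y).1 = Matrix.toLin b b y.1 := rfl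

lemma repE_inj {E : Type} [Field E] [Algebra F E] (b : Basis (Fin n) F E) : Function.Injective (repE b) := by
  intro x y h
  have h1 := congrArg Units.val h
  rw [repE_apply, repE_apply] at h1
  exact Subtype.ext ((Matrix.toLin b b).injective h1)

lemma repE_rk {E : Type} [Field E] [Finite E] [Algebra F E] (b : Basis (Fin n) F E)
    (y : Matrix.SpecialLinearGroup (Fin n) F) (m : ℕ) : rk ((repE b (y ^ m)).1 - 1) = rkm y m := by
  have e1 : (repE b (y ^ m)).1 - 1 = Matrix.toLin b b (y.1 ^ m - 1) := by
    rw [repE_apply, map_sub, Matrix.toLin_one]; rfl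
  have e2 : (Matrix.toLin' y.1) ^ m - 1 = Matrix.toLin' (y.1 ^ m - 1) := by
    rw [map_sub, Matrix.toLin'_pow, Matrix.toLin'_one]; rfl
  rw [rkm, e2, rk, e1]
  rw [← Matrix.rank_eq_finrank_range_toLin _ b b, ← Matrix.toLin_eq_toLin', 
    ← Matrix.rank_eq_finrank_range_toLin _ (Pi.basisFun F (Fin n)) (Pi.basisFun F (Fin n))]

theorem exists_ext (F : Type) [Field F] [Fintype F] (n : ℕ) (hn : n ≠ 0) :
    ∃ (E : Type) (_ : Field E) (_ : Finite E) (_ : Algebra F E), finrank F E = n := by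
  obtain ⟨p, hp⟩ := CharP.exists F
  have : Fact p.Prime := ⟨CharP.char_is_prime F p⟩
  have : NeZero n := ⟨hn⟩
  have : Module.Finite F (FiniteField.Extension F p n) := inferInstance
  refine ⟨FiniteField.Extension F p n, inferInstance, Module.finite_of_finite F, inferInstance, FiniteField.finrank_extension F p n⟩

theorem thmB (hn : 17 ≤ n) : ∃ x : Matrix.SpecialLinearGroup (Fin n) F, ∀ y : Matrix.SpecialLinearGroup (Fin n) F,
    (∀ p, p.Prime → p ∣ n → ∃ m, 0 < rkm y m ∧ 8 * rkm y m ^ 2 + 5 ≤ n ∧ ¬ p ∣ rkm y m) → InvGen x y := by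
  obtain ⟨E, _, _, _, hE⟩ := exists_ext F n (by omega)
  let b : Basis (Fin n) F E := (finBasisOfFinrankEq F E hE)
  obtain ⟨⟨ζ, hζN⟩, hζ⟩ := IsCyclic.exists_generator (α := NU F E)
  have hζ1 : Algebra.norm F (ζ : E) = 1 := by
    have : Units.map (Algebra.norm F : E →* F) ζ = 1 := hζN
    simpa using congrArg Units.val this
  let x : Matrix.SpecialLinearGroup (Fin n) F := ⟨Algebra.leftMulMatrix b (ζ : E), by
    rw [← Algebra.norm_eq_matrix_det, hζ1]⟩
  have hx : repE b x = muU F ζ := by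
    apply Units.ext
    rw [repE_apply]
    change Matrix.toLin b b (LinearMap.toMatrix b b _) = _
    rw [Matrix.toLin_toMatrix]
    rfl
  refine ⟨x, fun y hy => ?_⟩
  have key : ∀ k, Subgroup.closure {x, k * y * k⁻¹} = ⊤ := by
    intro k
    set L := Subgroup.closure {x, k * y * k⁻¹} with hL
    have hxL : x ∈ L := Subgroup.subset_closure (by simp)
    have hyL : k * y * k⁻¹ ∈ L := Subgroup.subset_closure (by simp)
    have hT := thmA (L.map (repE b)) (F := F) (E := E) ?_ (by rw [hE]; exact hn) ?_
    · have : Nontrivial (Fin n) := Fin.nontrivial_iff_two_le.2 (by omega)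
      apply SL_gen
      intro i j hij a
      obtain ⟨g, hg, hg1⟩ := hT (a • b i) (b.coord j) (by simp [hij])
      obtain ⟨t, ht, rfl⟩ := hg
      have : t = Matrix.SpecialLinearGroup.transvection hij a := by
        apply repE_inj b
        apply Units.ext
        rw [hg1, repE_apply, Matrix.SpecialLinearGroup.transvection_coe, map_add, Matrix.toLin_one]
        congr 1
        apply b.ext
        intro l
        rw [Matrix.toLin_self]
        simp only [LinearMap.smulRight_apply, Basis.coord_apply, Basis.repr_self, Matrix.single_apply]
        rw [Finset.sum_eq_single i]
        · by_cases hl : j = l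
          · simp [hl]
          · simp [hl, Finsupp.single_apply, Ne.symm hl]
        · intro k _ hk
          simp [Ne.symm hk]
        · simp
      exact this ▸ ht
    · intro a ha
      obtain ⟨z, hz⟩ := hζ ⟨a, ha⟩
      have hz' : ζ ^ z = a := congrArg Subtype.val hz
      have : muU F a = (repE b x) ^ z := by
        rw [hx, ← hz']
        let f : Eˣ →* (Module.End F E)ˣ := 
          { toFun := muU F, map_one' := by apply Units.ext; ext; simp [muU], 
            map_mul' := fun a b => by apply Units.ext; ext; simp [muU] }
        exact map_zpow f ζ z
      rw [this]
      exact Subgroup.zpow_mem _ (Subgroup.mem_map_of_mem _ hxL) z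
    · intro p hp hpn
      rw [hE] at hpn
      obtain ⟨m, h1, h2, h3⟩ := hy p hp hpn
      have hr : rk ((repE b ((k * y * k⁻¹) ^ m)).1 - 1) = rkm y m := by
        rw [← repE_rk b y m, conj_pow, map_mul, map_mul, map_inv]
        set K := repE b k
        set Y := repE b (y ^ m)
        have : (K * Y * K⁻¹).1 - 1 = K.1 * (Y.1 - 1) * (K⁻¹).1 := by
          rw [mul_sub, sub_mul, mul_one, Units.mul_inv]; rfl
        rw [this, rk_mul_unit, rk_unit_mul]
      refine ⟨repE b ((k * y * k⁻¹) ^ m), Subgroup.mem_map_of_mem _ (L.pow_mem hyL m), ?_⟩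
      rw [hr, hE]
      exact ⟨h1, h2, h3⟩
  intro g h
  rw [eq_top_iff]
  intro z _
  have h1 : g⁻¹ * z * g ∈ Subgroup.closure {x, (g⁻¹ * h) * y * (g⁻¹ * h)⁻¹} := by rw [key]; trivial
  have h2 : (MulAut.conj g).toMonoidHom (g⁻¹ * z * g) ∈ Subgroup.closure {g * x * g⁻¹, h * y * h⁻¹} := by
    have h3 := Subgroup.mem_map_of_mem (MulAut.conj g).toMonoidHom h1
    rw [MonoidHom.map_closure] at h3
    convert h3 using 2
    rw [Set.image_pair]
    congr 1
    simp [mul_assoc]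
  simpa [mul_assoc] using h2

end B
end IG
set_option linter.unusedSectionVars false
set_option linter.unusedSimpArgs false
set_option linter.unusedFintypeInType false
namespace IG
open Finset Module Polynomial

/-- linear map of an element of SL -/
noncomputable abbrev lin {n : ℕ} {F : Type} [Field F] (y : Matrix.SpecialLinearGroup (Fin n) F) :
    (Fin n → F) →ₗ[F] (Fin n → F) := Matrix.toLin' y.1

/-- injective intertwiners -/
def IsInj {F U V : Type} [Field F] [AddCommGroup U] [Module F U] [AddCommGroup V] [Module F V]
    (T : U →ₗ[F] U) (y : V →ₗ[F] V) (φ : U →ₗ[F] V) : Prop :=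
  Function.Injective φ ∧ ∀ u, φ (T u) = y (φ u)

/-- number of injective intertwiners -/
noncomputable def NI {F U V : Type} [Field F] [AddCommGroup U] [Module F U] [AddCommGroup V] [Module F V]
    (T : U →ₗ[F] U) (y : V →ₗ[F] V) : ℕ := Nat.card {φ : U →ₗ[F] V // IsInj T y φ}

section count
variable {F : Type} [Field F] [Fintype F] {n : ℕ}
variable {U : Type} [AddCommGroup U] [Module F U] [FiniteDimensional F U]

theorem sl_trans (hU : finrank F U < n) (φ ψ : U →ₗ[F] (Fin n → F)) (hφ : Function.Injective φ)
    (hψ : Function.Injective ψ) : ∃ g : Matrix.SpecialLinearGroup (Fin n) F, ∀ u, lin g (φ u) = ψ u := by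
  obtain ⟨g0, hg0⟩ : ∃ g0 : (Fin n → F) ≃ₗ[F] (Fin n → F), ∀ u, g0 (φ u) = ψ u := by
    let e1 := LinearEquiv.ofInjective φ hφ
    let e2 := LinearEquiv.ofInjective ψ hψ
    obtain ⟨g, hg⟩ := Submodule.exists_linearEquiv_restrict_eq (e1.symm.trans e2)
    refine ⟨g, fun u => ?_⟩
    have := hg (e1 u)
    simpa [e1, e2] using this.symm
  obtain ⟨v, hv⟩ : ∃ v, v ∉ LinearMap.range ψ := by
    by_contra! h
    have h1 : LinearMap.range ψ = ⊤ := by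
      rw [eq_top_iff]; intro x _; exact h x
    have h2 := LinearMap.finrank_range_of_inj hψ
    rw [h1, finrank_top, Module.finrank_fin_fun] at h2
    omega
  obtain ⟨f, hfv, hf⟩ := Submodule.exists_le_ker_of_notMem hv
  set δ := LinearMap.det (g0 : (Fin n → F) →ₗ[F] (Fin n → F)) with hδ
  have hδ0 : δ ≠ 0 := (LinearEquiv.isUnit_det' g0).ne_zero
  set t := LinearMap.transvection f (((f v)⁻¹ * (δ⁻¹ - 1)) • v) with ht
  have hdet : LinearMap.det t = δ⁻¹ := by
    rw [ht, LinearMap.transvection.det]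
    simp only [map_smul, smul_eq_mul]
    field_simp
    ring
  have hT : LinearMap.det (t ∘ₗ (g0 : (Fin n → F) →ₗ[F] (Fin n → F))) = 1 := by
    rw [LinearMap.det_comp, hdet, ← hδ, inv_mul_cancel₀ hδ0]
  refine ⟨⟨LinearMap.toMatrix' (t ∘ₗ (g0 : (Fin n → F) →ₗ[F] (Fin n → F))), ?_⟩, fun u => ?_⟩
  · rw [LinearMap.det_toMatrix', hT]
  · simp only [lin, Matrix.toLin'_toMatrix']
    have : f (ψ u) = 0 := hf ⟨u, rfl⟩
    simp [hg0, ht, LinearMap.transvection.apply, this]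

theorem count_gen {G X : Type} [Group G] [MulAction G X] (x0 : X)
    (ht : ∀ x : X, ∃ g : G, g • x0 = x) (τ : X → X) :
    Nat.card {p : G × X // p.1 • p.2 = τ p.2} = Nat.card G := by
  choose g hg using ht
  symm
  refine Nat.card_congr ⟨fun s => ⟨(g (τ (s • x0)) * (g (s • x0))⁻¹ * s * (g (s • x0))⁻¹, s • x0), ?_⟩,
    fun p => g p.1.2 * (g (τ p.1.2))⁻¹ * p.1.1 * g p.1.2, ?_, ?_⟩
  · have h1 : (g (s • x0))⁻¹ • (s • x0) = x0 := by rw [inv_smul_eq_iff, hg]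
    simp only [mul_smul, h1, hg]
  · intro s
    simp only
    group
  · rintro ⟨⟨y, x⟩, h⟩
    simp only at h
    have : (g x * (g (τ x))⁻¹ * y * g x) • x0 = x := by
      simp only [mul_smul, hg, h]
      have h1 : (g (τ x))⁻¹ • (τ x) = x0 := by rw [inv_smul_eq_iff, hg]
      rw [h1, hg]
    apply Subtype.ext
    simp only [Prod.mk.injEq, this, and_true]
    group

theorem lin_mul (g h : Matrix.SpecialLinearGroup (Fin n) F) (v) : lin (g * h) v = lin g (lin h v) := by
  change Matrix.toLin' (g.1 * h.1) v = _
  rw [Matrix.toLin'_mul]; rfl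

theorem lin_one (v) : lin (1 : Matrix.SpecialLinearGroup (Fin n) F) v = v := by
  change Matrix.toLin' 1 v = _
  simp

theorem lin_inj (g : Matrix.SpecialLinearGroup (Fin n) F) : Function.Injective (lin g) := by
  intro v w h
  have := congrArg (lin g⁻¹) h
  simpa only [← lin_mul, inv_mul_cancel, lin_one] using this

noncomputable instance fintypeSL : Fintype (Matrix.SpecialLinearGroup (Fin n) F) := Fintype.ofFinite _

noncomputable instance actInj : MulAction (Matrix.SpecialLinearGroup (Fin n) F) {φ : U →ₗ[F] (Fin n → F) // Function.Injective φ} where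
  smul g φ := ⟨lin g ∘ₗ φ.1, (lin_inj g).comp φ.2⟩
  one_smul φ := by
    apply Subtype.ext; apply LinearMap.ext; intro u; exact lin_one _
  mul_smul g h φ := by
    apply Subtype.ext; apply LinearMap.ext; intro u; exact lin_mul _ _ _

theorem sum_NI (hU : finrank F U < n) (T : U →ₗ[F] U) (hT : Function.Injective T) :
    ∑ y : Matrix.SpecialLinearGroup (Fin n) F, NI T (lin y) = Nat.card (Matrix.SpecialLinearGroup (Fin n) F) := by
  have : Finite U := Module.finite_of_finite F
  have : Finite (U →ₗ[F] (Fin n → F)) := Module.finite_of_finite F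
  obtain ⟨φ0, hφ0⟩ : ∃ φ : U →ₗ[F] (Fin n → F), Function.Injective φ := by
    obtain ⟨f, hf⟩ := (finrank_le_iff_exists_linearMap (R := F) (M := U) (M' := Fin n → F)).1 (by
      rw [Module.finrank_fin_fun]; omega)
    exact ⟨f, hf⟩
  have h := count_gen (G := Matrix.SpecialLinearGroup (Fin n) F)
    (X := {φ : U →ₗ[F] (Fin n → F) // Function.Injective φ}) ⟨φ0, hφ0⟩ (fun x => by
      obtain ⟨g, hg⟩ := sl_trans hU φ0 x.1 hφ0 x.2
      refine ⟨g, Subtype.ext (LinearMap.ext fun u => hg u)⟩) (fun φ => ⟨φ.1 ∘ₗ T, φ.2.comp hT⟩)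
  rw [← h]
  unfold NI
  rw [← Nat.card_sigma]
  refine Nat.card_congr ⟨fun p => ⟨(p.1, ⟨p.2.1, p.2.2.1⟩), ?_⟩, fun p => ⟨p.1.1, ⟨p.1.2.1, p.1.2.2, ?_⟩⟩, ?_, ?_⟩
  · apply Subtype.ext; apply LinearMap.ext; intro u; exact (p.2.2.2 u).symm
  · intro u
    have := p.2
    exact (LinearMap.congr_fun (congrArg Subtype.val this) u).symm
  · rintro ⟨a, b, c⟩; rfl
  · rintro ⟨⟨a, b⟩, c⟩; rfl

theorem isInj_aeval {V : Type} [AddCommGroup V] [Module F V] {T : U →ₗ[F] U} {y : V →ₗ[F] V} {φ : U →ₗ[F] V}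
    (h : ∀ u, φ (T u) = y (φ u)) (P : F[X]) (u : U) : φ (aeval T P u) = aeval y P (φ u) := by
  induction P using Polynomial.induction_on' generalizing u with
  | add p q hp hq => simp [hp, hq]
  | monomial k a =>
    simp only [aeval_monomial, Module.algebraMap_end_eq_smul_id, Module.End.mul_apply, LinearMap.smul_apply, LinearMap.id_apply, map_smul]
    congr 1
    induction k generalizing u with
    | zero => simp
    | succ k ih => rw [pow_succ, pow_succ, Module.End.mul_apply, Module.End.mul_apply, ih, h]

theorem NI_prod {V W : Type} [AddCommGroup V] [Module F V] [AddCommGroup W] [Module F W] [FiniteDimensional F W]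
    (T : U →ₗ[F] U) (S : W →ₗ[F] W) (y : V →ₗ[F] V) {P Q : F[X]} (hPQ : IsCoprime P Q)
    (hP : aeval T P = 0) (hQ : aeval S Q = 0) :
    NI (T.prodMap S) y = NI T y * NI S y := by
  unfold NI
  rw [← Nat.card_prod]
  refine Nat.card_congr ⟨fun φ => (⟨φ.1 ∘ₗ LinearMap.inl F U W, ?_, ?_⟩, ⟨φ.1 ∘ₗ LinearMap.inr F U W, ?_, ?_⟩),
    fun p => ⟨p.1.1.coprod p.2.1, ?_, ?_⟩, ?_, ?_⟩
  · exact φ.2.1.comp LinearMap.inl_injective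
  · intro u
    have := φ.2.2 (u, 0)
    simpa using this
  · exact φ.2.1.comp LinearMap.inr_injective
  · intro u
    have := φ.2.2 (0, u)
    simpa using this
  · rw [← LinearMap.ker_eq_bot, LinearMap.ker_eq_bot']
    rintro ⟨u, w⟩ h
    simp only [LinearMap.coprod_apply] at h
    obtain ⟨a, b, hab⟩ := hPQ
    have h1 : aeval y P (p.1.1 u) = 0 := by rw [← isInj_aeval p.1.2.2, hP]; simp
    have h2 : aeval y Q (p.2.1 w) = 0 := by rw [← isInj_aeval p.2.2.2, hQ]; simp
    have h3 : p.1.1 u = - p.2.1 w := eq_neg_of_add_eq_zero_left h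
    have h4 : aeval y Q (p.1.1 u) = 0 := by rw [h3, map_neg, h2, neg_zero]
    have h5 : aeval y (a * P + b * Q) (p.1.1 u) = 0 := by simp [h1, h4]
    rw [hab] at h5
    have h6 : p.1.1 u = 0 := by simpa using h5
    have h7 : p.2.1 w = 0 := by rw [h6, zero_add] at h; exact h
    have := p.1.2.1 (h6.trans (map_zero _).symm)
    have := p.2.2.1 (h7.trans (map_zero _).symm)
    simp_all
  · rintro ⟨u, w⟩
    simp [p.1.2.2, p.2.2.2]
  · rintro ⟨φ, h⟩
    apply Subtype.ext
    apply LinearMap.ext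
    rintro ⟨u, w⟩
    simp [← map_add]
  · rintro ⟨⟨a, h⟩, ⟨b, h'⟩⟩
    simp

end count
end IG
set_option linter.unusedSectionVars false
set_option linter.unusedSimpArgs false
set_option linter.unusedFintypeInType false
namespace IG
open Finset Module Polynomial

section adj
variable {F : Type} [Field F]

/-- multiplication by the root -/
noncomputable def Tm (a : F[X]) : AdjoinRoot a →ₗ[F] AdjoinRoot a := LinearMap.mulLeft F (AdjoinRoot.root a)

/-- on the product -/
noncomputable abbrev T2 (a b : F[X]) : (AdjoinRoot a × AdjoinRoot b) →ₗ[F] (AdjoinRoot a × AdjoinRoot b) :=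
  (Tm a).prodMap (Tm b)

theorem aeval_Tm (a P : F[X]) (u : AdjoinRoot a) : aeval (Tm a) P u = AdjoinRoot.mk a P * u := by
  induction P using Polynomial.induction_on' generalizing u with
  | add p q hp hq => simp [hp, hq, add_mul]
  | monomial k c =>
    simp only [aeval_monomial, Module.algebraMap_end_eq_smul_id, Module.End.mul_apply, LinearMap.smul_apply,
      LinearMap.id_apply, ← C_mul_X_pow_eq_monomial, map_mul, AdjoinRoot.mk_C, map_pow, AdjoinRoot.mk_X]
    have : ((Tm a) ^ k) u = AdjoinRoot.root a ^ k * u := by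
      induction k with
      | zero => simp
      | succ k ih => rw [pow_succ', Module.End.mul_apply, ih, Tm, LinearMap.mulLeft_apply]; ring
    rw [aeval_X, aeval_C, Module.algebraMap_end_apply, this, Algebra.smul_def, mul_assoc]
    rfl

theorem aeval_prodMap {U W : Type} [AddCommGroup U] [Module F U] [AddCommGroup W] [Module F W]
    (T : U →ₗ[F] U) (S : W →ₗ[F] W) (P : F[X]) (u : U) (w : W) :
    aeval (T.prodMap S) P (u, w) = (aeval T P u, aeval S P w) := by
  induction P using Polynomial.induction_on' generalizing u w with
  | add p q hp hq => simp [hp, hq]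
  | monomial k c =>
    simp only [aeval_monomial, Module.algebraMap_end_eq_smul_id, Module.End.mul_apply, LinearMap.smul_apply,
      LinearMap.id_apply]
    have : ((T.prodMap S) ^ k) (u, w) = ((T ^ k) u, (S ^ k) w) := by
      induction k with
      | zero => simp
      | succ k ih => rw [pow_succ', Module.End.mul_apply, ih]; simp [pow_succ', Module.End.mul_apply]
    rw [this]; rfl

theorem aeval_prodMap_zero {U W : Type} [AddCommGroup U] [Module F U] [AddCommGroup W] [Module F W]
    {T : U →ₗ[F] U} {S : W →ₗ[F] W} {P Q : F[X]} (hT : aeval T P = 0) (hS : aeval S Q = 0) :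
    aeval (T.prodMap S) (P * Q) = 0 := by
  apply LinearMap.ext
  rintro ⟨u, w⟩
  rw [aeval_prodMap, mul_comm P Q, map_mul, hT, mul_comm Q P, map_mul, hS]
  simp

theorem aeval_Tm_self (a : F[X]) : aeval (Tm a) a = 0 := by
  apply LinearMap.ext; intro u; rw [aeval_Tm]; simp

theorem Tm_inj {a : F[X]} (ha : IsCoprime a X) : Function.Injective (Tm a) := by
  obtain ⟨r, s, h⟩ := ha
  have h1 : AdjoinRoot.mk a s * AdjoinRoot.root a = 1 := by
    have := congrArg (AdjoinRoot.mk a) h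
    simpa using this
  intro u w huw
  simp only [Tm, LinearMap.mulLeft_apply] at huw
  have := congrArg (fun z => AdjoinRoot.mk a s * z) huw
  simpa only [← mul_assoc, h1, one_mul] using this

theorem fin_adj {a : F[X]} (ha : a.Monic) : Module.Finite F (AdjoinRoot a) :=
  (AdjoinRoot.powerBasis' ha).finite

theorem rank_adj {a : F[X]} (ha : a.Monic) : finrank F (AdjoinRoot a) = a.natDegree := by
  rw [(AdjoinRoot.powerBasis' ha).finrank, AdjoinRoot.powerBasis'_dim]

/-- Number of injective intertwiners -/
noncomputable def N2 {V : Type} [AddCommGroup V] [Module F V] (a b : F[X]) (y : V →ₗ[F] V) : ℕ := NI (T2 a b) y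

theorem equiv_mk {V : Type} [AddCommGroup V] [Module F V] {a : F[X]} {y : V →ₗ[F] V}
    {φ : AdjoinRoot a →ₗ[F] V} (h : ∀ u, φ (Tm a u) = y (φ u)) (P : F[X]) (u) :
    φ (AdjoinRoot.mk a P * u) = aeval y P (φ u) := by
  rw [← aeval_Tm]
  induction P using Polynomial.induction_on' generalizing u with
  | add p q hp hq => simp [hp, hq]
  | monomial k a =>
    simp only [aeval_monomial, Module.algebraMap_end_eq_smul_id, Module.End.mul_apply, LinearMap.smul_apply, LinearMap.id_apply, map_smul]
    congr 1
    induction k generalizing u with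
    | zero => simp
    | succ k ih => rw [pow_succ, pow_succ, Module.End.mul_apply, Module.End.mul_apply, ih, h]

variable [Fintype F] {n : ℕ}

theorem sum_N2 {a b : F[X]} (ha : a.Monic) (hb : b.Monic) (hax : IsCoprime a X) (hbx : IsCoprime b X)
    (hn : a.natDegree + b.natDegree < n) :
    ∑ y : Matrix.SpecialLinearGroup (Fin n) F, N2 a b (lin y) = Nat.card (Matrix.SpecialLinearGroup (Fin n) F) := by
  have := fin_adj ha
  have := fin_adj hb
  apply sum_NI
  · rw [Module.finrank_prod, rank_adj ha, rank_adj hb]; exact hn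
  · exact (Tm_inj hax).prodMap (Tm_inj hbx)

theorem N2_units {V : Type} [AddCommGroup V] [Module F V] [FiniteDimensional F V] {a b : F[X]} (ha : a.Monic) (hb : b.Monic)
    (y : V →ₗ[F] V) (h : N2 a b y ≠ 0) :
    Nat.card (AdjoinRoot a)ˣ * Nat.card (AdjoinRoot b)ˣ ≤ N2 a b y := by
  have := fin_adj ha
  have := fin_adj hb
  have : Finite (AdjoinRoot a) := Module.finite_of_finite F
  have : Finite (AdjoinRoot b) := Module.finite_of_finite F
  have : Finite ((AdjoinRoot a × AdjoinRoot b) →ₗ[F] V) := Module.finite_of_finite F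
  unfold N2 NI at *
  have hne : Nonempty {φ : (AdjoinRoot a × AdjoinRoot b) →ₗ[F] V // IsInj (T2 a b) y φ} := by
    by_contra hh
    rw [not_nonempty_iff] at hh
    exact h (Nat.card_of_isEmpty)
  obtain ⟨φ, hφ⟩ := hne
  rw [← Nat.card_prod]
  refine Nat.card_le_card_of_injective (fun p => ⟨φ ∘ₗ (LinearMap.prodMap (LinearMap.mulLeft F (p.1 : AdjoinRoot a))
    (LinearMap.mulLeft F (p.2 : AdjoinRoot b))), ?_, ?_⟩) ?_
  · refine hφ.1.comp ?_
    rw [LinearMap.coe_prodMap]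
    refine Function.Injective.prodMap ?_ ?_
    · intro u w huw; simpa using huw
    · intro u w huw; simpa using huw
  · rintro ⟨u, w⟩
    have := hφ.2 (p.1 * u, p.2 * w)
    simp only [LinearMap.comp_apply, LinearMap.prodMap_apply, LinearMap.mulLeft_apply, Tm] at this ⊢
    rw [← this]
    congr 2 <;> ring
  · rintro ⟨p1, p2⟩ ⟨r1, r2⟩ h
    have h1 := LinearMap.congr_fun (congrArg Subtype.val h) (1, 1)
    simp only [LinearMap.comp_apply, LinearMap.prodMap_apply, LinearMap.mulLeft_apply, mul_one] at h1
    have h2 := hφ.1 h1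
    simp only [Prod.mk.injEq, Units.val_inj] at h2
    exact Prod.ext h2.1 h2.2

theorem prob_N2 {a b : F[X]} (ha : a.Monic) (hb : b.Monic) (hax : IsCoprime a X) (hbx : IsCoprime b X)
    (hn : a.natDegree + b.natDegree < n) :
    Nat.card (AdjoinRoot a)ˣ * Nat.card (AdjoinRoot b)ˣ *
      Nat.card {y : Matrix.SpecialLinearGroup (Fin n) F // N2 a b (lin y) ≠ 0} ≤ Nat.card (Matrix.SpecialLinearGroup (Fin n) F) := by
  classical
  rw [← sum_N2 ha hb hax hbx hn, Nat.card_eq_fintype_card (α := {y : Matrix.SpecialLinearGroup (Fin n) F // N2 a b (lin y) ≠ 0}), Fintype.card_subtype, mul_comm, ← smul_eq_mul,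
    ← Finset.sum_const]
  refine (Finset.sum_le_sum (fun y hy => ?_)).trans (Finset.sum_le_univ_sum_of_nonneg (fun _ => Nat.zero_le _))
  exact N2_units ha hb _ (by simpa using hy)

theorem moment {ι : Type} [DecidableEq ι] (s : Finset ι) (S : ι → Finset (F[X] × F[X])) (D : ι → ℕ)
    (c : ι → F[X] × F[X] → ℝ)
    (hm : ∀ j ∈ s, ∀ t ∈ S j, t.1.Monic ∧ t.2.Monic ∧ IsCoprime t.1 X ∧ IsCoprime t.2 X)
    (hD : ∀ j ∈ s, ∀ t ∈ S j, t.1.natDegree + t.2.natDegree ≤ D j)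
    (hc : ∀ j ∈ s, ∀ k ∈ s, j ≠ k → ∀ t ∈ S j, ∀ r ∈ S k, IsCoprime (t.1 * t.2) (r.1 * r.2))
    (U : Type) [AddCommGroup U] [Module F U] [FiniteDimensional F U] (T : U →ₗ[F] U) (hT : Function.Injective T)
    (P : F[X]) (hP : aeval T P = 0) (hPc : ∀ j ∈ s, ∀ t ∈ S j, IsCoprime P (t.1 * t.2))
    (hn : finrank F U + ∑ j ∈ s, D j < n) :
    ∑ y : Matrix.SpecialLinearGroup (Fin n) F, (NI T (lin y) : ℝ) * ∏ j ∈ s, ∑ t ∈ S j, c j t * (N2 t.1 t.2 (lin y) : ℝ)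
      = Nat.card (Matrix.SpecialLinearGroup (Fin n) F) * ∏ j ∈ s, ∑ t ∈ S j, c j t := by
  induction s using Finset.induction_on generalizing U P with
  | empty =>
    simp only [Finset.sum_empty, add_zero] at hn
    have := sum_NI hn T hT
    simp only [Finset.prod_empty, mul_one]
    exact_mod_cast this
  | insert i s hi ih =>
    rw [Finset.sum_insert hi] at hn
    have key : ∀ t ∈ S i, ∑ y : Matrix.SpecialLinearGroup (Fin n) F, (NI T (lin y) : ℝ) * (N2 t.1 t.2 (lin y) : ℝ) * ∏ j ∈ s, ∑ t ∈ S j, c j t * (N2 t.1 t.2 (lin y) : ℝ)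
      = Nat.card (Matrix.SpecialLinearGroup (Fin n) F) * ∏ j ∈ s, ∑ t ∈ S j, c j t := by
      intro t ht
      obtain ⟨h1, h2, h3, h4⟩ := hm i (by simp) t ht
      have := fin_adj h1
      have := fin_adj h2
      have hann : aeval (T2 t.1 t.2) (t.1 * t.2) = 0 := aeval_prodMap_zero (aeval_Tm_self _) (aeval_Tm_self _)
      have hcop := hPc i (by simp) t ht
      rw [← ih (fun j hj => hm j (Finset.mem_insert_of_mem hj)) (fun j hj => hD j (Finset.mem_insert_of_mem hj))
        (fun j hj k hk => hc j (Finset.mem_insert_of_mem hj) k (Finset.mem_insert_of_mem hk))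
        (U × (AdjoinRoot t.1 × AdjoinRoot t.2)) (T.prodMap (T2 t.1 t.2))
        (hT.prodMap ((Tm_inj h3).prodMap (Tm_inj h4))) (P * (t.1 * t.2)) (aeval_prodMap_zero hP hann) ?_ ?_]
      · refine Finset.sum_congr rfl fun y _ => ?_
        rw [NI_prod T (T2 t.1 t.2) (lin y) hcop hP hann, N2]
        push_cast
        rfl
      · intro j hj r hr
        refine IsCoprime.mul_left (hPc j (Finset.mem_insert_of_mem hj) r hr) ?_
        exact hc i (by simp) j (Finset.mem_insert_of_mem hj) (fun h => hi (h ▸ hj)) t ht r hr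
      · rw [Module.finrank_prod, Module.finrank_prod, rank_adj h1, rank_adj h2]
        have := hD i (by simp) t ht
        omega
    rw [Finset.prod_insert hi, mul_left_comm, Finset.sum_mul]
    rw [Finset.sum_congr rfl (fun t ht => congrArg (c i t * ·) (key t ht).symm)]
    simp only [Finset.mul_sum]
    rw [Finset.sum_comm]
    refine Finset.sum_congr rfl fun y _ => ?_
    rw [Finset.prod_insert hi, Finset.sum_mul, Finset.mul_sum]
    refine Finset.sum_congr rfl fun t _ => ?_
    ring

end adj
end IG
set_option linter.unusedSectionVars false
set_option linter.unusedSimpArgs false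
set_option linter.unusedFintypeInType false
namespace IG
open Finset Module Polynomial

section adj
variable {F : Type} [Field F] [Fintype F]
variable {V : Type} [AddCommGroup V] [Module F V] [FiniteDimensional F V]

theorem NI_ne_zero {U : Type} [AddCommGroup U] [Module F U] [FiniteDimensional F U] {T : U →ₗ[F] U} {y : V →ₗ[F] V} :
    NI T y ≠ 0 ↔ ∃ φ, IsInj T y φ := by
  have : Finite (U →ₗ[F] V) := Module.finite_of_finite F
  unfold NI
  rw [Nat.card_ne_zero]
  simp only [nonempty_subtype, and_iff_left_iff_imp]
  intro _; infer_instance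

theorem NI_one (y : V →ₗ[F] V) : NI (Tm (1 : F[X])) y = 1 := by
  unfold NI
  have : Subsingleton (AdjoinRoot (1 : F[X])) := by
    refine subsingleton_of_zero_eq_one ?_
    have := AdjoinRoot.mk_self (f := (1 : F[X]))
    rw [map_one] at this; exact this.symm
  rw [Nat.card_eq_one_iff_unique]
  refine ⟨⟨fun a b => Subtype.ext (LinearMap.ext fun u => ?_)⟩, ⟨0, ?_, ?_⟩⟩
  · rw [Subsingleton.elim u 0]; simp
  · exact Function.injective_of_subsingleton _
  · intro u; simp

theorem N2_cop {a b : F[X]} (ha : a.Monic) (hb : b.Monic) (h : IsCoprime a b) (y : V →ₗ[F] V) :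
    N2 a b y = NI (Tm a) y * NI (Tm b) y := by
  have := fin_adj ha
  have := fin_adj hb
  exact NI_prod _ _ _ h (aeval_Tm_self _) (aeval_Tm_self _)

theorem N2_one {a : F[X]} (ha : a.Monic) (y : V →ₗ[F] V) :
    N2 a 1 y = NI (Tm a) y := by
  rw [N2_cop ha monic_one isCoprime_one_right, NI_one, mul_one]

theorem N2_one_one (y : V →ₗ[F] V) :
    N2 1 1 y = 1 := by
  rw [N2_one monic_one, NI_one]

theorem units_irr {f : F[X]} (hf : Irreducible f) (hm : f.Monic) :
    Nat.card (AdjoinRoot f)ˣ = Nat.card F ^ f.natDegree - 1 := by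
  have := fin_adj hm
  have : Fact (Irreducible f) := ⟨hf⟩
  have : Finite (AdjoinRoot f) := Module.finite_of_finite F
  rw [Nat.card_units, Module.natCard_eq_pow_finrank (K := F), rank_adj hm]

theorem N2_self {f : F[X]} (hf : Irreducible f) (hm : f.Monic) (y : V →ₗ[F] V) :
    NI (Tm f) y * NI (Tm f) y = N2 f f y + (Nat.card F ^ f.natDegree - 1) * NI (Tm f) y := by
  classical
  have := fin_adj hm
  have : Fact (Irreducible f) := ⟨hf⟩
  have : Finite (AdjoinRoot f) := Module.finite_of_finite F
  have : Finite (AdjoinRoot f →ₗ[F] V) := Module.finite_of_finite F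
  have hsm : ∀ φ : AdjoinRoot f →ₗ[F] V, (∀ u, φ (Tm f u) = y (φ u)) → ∀ ψ : AdjoinRoot f →ₗ[F] V, (∀ u, ψ (Tm f u) = y (ψ u)) →
      ∀ u w c, φ u = ψ w → φ (c * u) = ψ (c * w) := by
    intro φ hφ ψ hψ u w c h
    obtain ⟨P, rfl⟩ := AdjoinRoot.mk_surjective c
    rw [equiv_mk hφ, equiv_mk hψ, h]
  rw [← units_irr hf hm]
  unfold N2 NI
  rw [← Nat.card_prod, ← Nat.card_prod]
  let p : {φ : AdjoinRoot f →ₗ[F] V // IsInj (Tm f) y φ} × {φ : AdjoinRoot f →ₗ[F] V // IsInj (Tm f) y φ} → Prop :=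
    fun r => Function.Injective (r.1.1.coprod r.2.1)
  rw [← Nat.card_congr (Equiv.sumCompl p), Nat.card_sum]
  congr 1
  · refine Nat.card_congr ⟨fun r => ⟨r.1.1.1.coprod r.1.2.1, r.2, ?_⟩,
      fun φ => ⟨(⟨φ.1 ∘ₗ LinearMap.inl F _ _, ?_, ?_⟩, ⟨φ.1 ∘ₗ LinearMap.inr F _ _, ?_, ?_⟩), ?_⟩, ?_, ?_⟩
    · rintro ⟨u, w⟩
      simp [r.1.1.2.2, r.1.2.2.2]
    · exact φ.2.1.comp LinearMap.inl_injective
    · intro u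
      have := φ.2.2 (u, 0)
      simpa using this
    · exact φ.2.1.comp LinearMap.inr_injective
    · intro u
      have := φ.2.2 (0, u)
      simpa using this
    · change Function.Injective (LinearMap.coprod _ _)
      have : (φ.1 ∘ₗ LinearMap.inl F _ _).coprod (φ.1 ∘ₗ LinearMap.inr F _ _) = φ.1 := by
        apply LinearMap.ext; rintro ⟨u, w⟩; simp [← map_add]
      simp only [this]
      exact φ.2.1
    · rintro ⟨⟨⟨a, h⟩, ⟨b, h'⟩⟩, h''⟩
      simp
    · rintro ⟨φ, h⟩
      apply Subtype.ext
      apply LinearMap.ext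
      rintro ⟨u, w⟩
      simp [← map_add]
  · symm
    refine Nat.card_congr (Equiv.ofBijective (fun r => ⟨(⟨r.2.1, r.2.2⟩, ⟨r.2.1 ∘ₗ LinearMap.mulLeft F (r.1 : AdjoinRoot f), ?_, ?_⟩), ?_⟩) ⟨?_, ?_⟩)
    · refine r.2.2.1.comp ?_
      intro u w huw; simpa using huw
    · intro u
      have := r.2.2.2 (r.1 * u)
      simp only [LinearMap.comp_apply, LinearMap.mulLeft_apply, Tm] at this ⊢
      rw [← this]; congr 1; ring
    · intro hinj
      have h1 : (r.2.1.coprod (r.2.1 ∘ₗ LinearMap.mulLeft F (r.1 : AdjoinRoot f))) (-(r.1 : AdjoinRoot f), 1) = 0 := by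
        simp
      have := hinj (h1.trans (map_zero _).symm)
      simp at this
    · rintro ⟨c, φ, h⟩ ⟨c', φ', h'⟩ hh
      simp only [Subtype.mk.injEq, Prod.mk.injEq] at hh
      obtain ⟨rfl, h2⟩ := hh
      have h3 := LinearMap.congr_fun (congrArg Subtype.val h2) 1
      simp only [LinearMap.comp_apply, LinearMap.mulLeft_apply, mul_one] at h3
      have := h.1 h3
      simp [Units.val_inj] at this
      simp [this]
    · rintro ⟨⟨⟨φ, hφ⟩, ⟨ψ, hψ⟩⟩, hni⟩
      have hni' : ¬ Function.Injective (φ.coprod ψ) := hni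
      rw [← LinearMap.ker_eq_bot, LinearMap.ker_eq_bot'] at hni'
      push Not at hni'
      obtain ⟨⟨u, w⟩, h1, h2⟩ := hni'
      simp only [LinearMap.coprod_apply] at h1
      have hu : u ≠ 0 := by
        rintro rfl
        rw [map_zero, zero_add] at h1
        have := hψ.1 (h1.trans (map_zero _).symm)
        simp_all
      have hw : w ≠ 0 := by
        rintro rfl
        rw [map_zero, add_zero] at h1
        have := hφ.1 (h1.trans (map_zero _).symm)
        simp_all
      have h3 : φ (-u) = ψ w := by rw [map_neg]; exact neg_eq_of_add_eq_zero_right h1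
      refine ⟨(Units.mk0 (w⁻¹ * -u) (by simp [hu, hw]), ⟨φ, hφ⟩), ?_⟩
      apply Subtype.ext
      simp only [Prod.mk.injEq, true_and]
      apply Subtype.ext
      apply LinearMap.ext
      intro c
      simp only [LinearMap.comp_apply, LinearMap.mulLeft_apply, Units.val_mk0]
      have := hsm φ hφ.2 ψ hψ.2 (-u) w (c * w⁻¹) h3
      rw [inv_mul_cancel_right₀ hw] at this
      rw [← this]; congr 1; ring

theorem exists_phi {a : F[X]} {y : V →ₗ[F] V} {v : V} (h : aeval y a v = 0) :
    ∃ φ : AdjoinRoot a →ₗ[F] V, (∀ u, φ (Tm a u) = y (φ u)) ∧ ∀ P, φ (AdjoinRoot.mk a P) = aeval y P v := by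
  have hk : ∀ P Q : F[X], AdjoinRoot.mk a P = AdjoinRoot.mk a Q → aeval y P v = aeval y Q v := by
    intro P Q hPQ
    rw [AdjoinRoot.mk_eq_mk] at hPQ
    obtain ⟨R, hR⟩ := hPQ
    rw [← sub_eq_zero, ← LinearMap.sub_apply, ← map_sub, hR, mul_comm, map_mul, Module.End.mul_apply, h, map_zero]
  choose s hs using AdjoinRoot.mk_surjective (g := a)
  have hs2 : ∀ P, aeval y (s (AdjoinRoot.mk a P)) v = aeval y P v := fun P => hk _ _ (hs _)
  refine ⟨{ toFun := fun u => aeval y (s u) v, map_add' := ?_, map_smul' := ?_ }, ?_, hs2⟩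
  · intro u w
    rw [← LinearMap.add_apply, ← map_add, ← hs2 (s u + s w), map_add, hs, hs]
  · intro c u
    rw [RingHom.id_apply, ← LinearMap.smul_apply, ← map_smul, ← hs2 (c • s u), ← AdjoinRoot.smul_mk, hs]
  · intro u
    change aeval y (s (Tm a u)) v = y (aeval y (s u) v)
    have : Tm a u = AdjoinRoot.mk a (X * s u) := by
      rw [map_mul, AdjoinRoot.mk_X, hs]; rfl
    rw [this, hs2, map_mul, aeval_X]; rfl

theorem exists_irr {f : F[X]} (hf : Irreducible f) {y : V →ₗ[F] V} {v : V} (h : aeval y f v = 0) (hv : v ≠ 0) :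
    ∃ φ : AdjoinRoot f →ₗ[F] V, IsInj (Tm f) y φ ∧ ∀ P, φ (AdjoinRoot.mk f P) = aeval y P v := by
  obtain ⟨φ, h1, h2⟩ := exists_phi h
  refine ⟨φ, ⟨?_, h1⟩, h2⟩
  have : Fact (Irreducible f) := ⟨hf⟩
  rw [← LinearMap.ker_eq_bot, LinearMap.ker_eq_bot']
  intro u hu
  by_contra hne
  obtain ⟨P, hP⟩ := AdjoinRoot.mk_surjective u⁻¹
  have h3 := equiv_mk h1 P u
  rw [hP, inv_mul_cancel₀ hne, hu, map_zero] at h3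
  have h4 := h2 1
  rw [map_one, h3, map_one] at h4
  exact hv h4.symm

theorem NI_irr {f : F[X]} (hf : Irreducible f) (hm : f.Monic) {y : V →ₗ[F] V} :
    NI (Tm f) y ≠ 0 ↔ ∃ v, aeval y f v = 0 ∧ v ≠ 0 := by
  have := fin_adj hm
  have : Fact (Irreducible f) := ⟨hf⟩
  rw [NI_ne_zero]
  constructor
  · rintro ⟨φ, h1, h2⟩
    refine ⟨φ 1, ?_, ?_⟩
    · rw [← equiv_mk h2, AdjoinRoot.mk_self, zero_mul, map_zero]
    · intro h
      exact one_ne_zero (h1 (h.trans (map_zero _).symm))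
  · rintro ⟨v, h, hv⟩
    obtain ⟨φ, h, -⟩ := exists_irr hf h hv
    exact ⟨φ, h⟩

theorem NI_sq {f : F[X]} (hf : Irreducible f) (hm : f.Monic) {y : V →ₗ[F] V} {v : V}
    (h1 : aeval y (f * f) v = 0) (h2 : aeval y f v ≠ 0) : NI (Tm (f * f)) y ≠ 0 := by
  have := fin_adj (hm.mul hm)
  rw [NI_ne_zero]
  obtain ⟨φ, h3, h4⟩ := exists_phi h1
  refine ⟨φ, ?_, h3⟩
  rw [← LinearMap.ker_eq_bot, LinearMap.ker_eq_bot']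
  intro u hu
  obtain ⟨P, rfl⟩ := AdjoinRoot.mk_surjective u
  rw [h4] at hu
  have key : ∀ Q w, aeval y f w = 0 → aeval y Q w = 0 → w ≠ 0 → f ∣ Q := by
    intro Q w hw hQ hw0
    by_contra hnd
    obtain ⟨a, b, hab⟩ := hf.coprime_iff_not_dvd.2 hnd
    have : aeval y (a * f + b * Q) w = 0 := by simp [hw, hQ]
    rw [hab] at this
    exact hw0 (by simpa using this)
  have h5 : aeval y f (aeval y f v) = 0 := by rw [map_mul] at h1; exact h1
  have h6 : f ∣ P := by
    refine key P _ h5 ?_ h2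
    rw [← Module.End.mul_apply, ← map_mul, mul_comm, map_mul, Module.End.mul_apply, hu, map_zero]
  obtain ⟨Q, rfl⟩ := h6
  have h7 : f ∣ Q := by
    refine key Q _ h5 ?_ h2
    rw [← Module.End.mul_apply, ← map_mul, mul_comm]; exact hu
  rw [AdjoinRoot.mk_eq_zero]
  exact mul_dvd_mul_left f h7

theorem NI_pair {f : F[X]} (hf : Irreducible f) (hm : f.Monic) {y : V →ₗ[F] V}
    (h1 : finrank F (LinearMap.ker (aeval y f)) ≠ f.natDegree) (h0 : NI (Tm f) y ≠ 0) : N2 f f y ≠ 0 := by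
  have := fin_adj hm
  have : Fact (Irreducible f) := ⟨hf⟩
  obtain ⟨v, hv, hv0⟩ := (NI_irr hf hm).1 h0
  obtain ⟨φ, hφ, -⟩ := exists_irr hf hv hv0
  have hle : LinearMap.range φ ≤ LinearMap.ker (aeval y f) := by
    rintro _ ⟨u, rfl⟩
    rw [LinearMap.mem_ker, ← equiv_mk hφ.2, AdjoinRoot.mk_self, zero_mul, map_zero]
  have hne : LinearMap.range φ ≠ LinearMap.ker (aeval y f) := by
    intro h
    apply h1
    rw [← h, LinearMap.finrank_range_of_inj hφ.1, rank_adj hm]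
  obtain ⟨w, hw, hw2⟩ := SetLike.exists_of_lt (lt_of_le_of_ne hle hne)
  have hw0 : w ≠ 0 := by rintro rfl; exact hw2 (Submodule.zero_mem _)
  obtain ⟨ψ, hψ, hψ2⟩ := exists_irr hf hw hw0
  unfold N2
  rw [NI_ne_zero]
  refine ⟨φ.coprod ψ, ?_, ?_⟩
  · rw [← LinearMap.ker_eq_bot, LinearMap.ker_eq_bot']
    rintro ⟨u, c⟩ h
    simp only [LinearMap.coprod_apply] at h
    by_cases hc : c = 0
    · subst hc
      rw [map_zero, add_zero] at h
      rw [hφ.1 (h.trans (map_zero _).symm)]; rfl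
    · exfalso
      apply hw2
      obtain ⟨P, hP⟩ := AdjoinRoot.mk_surjective c⁻¹
      have h3 : ψ c = φ (-u) := by rw [map_neg]; exact (neg_eq_of_add_eq_zero_right h).symm
      have h4 : ψ 1 = φ (c⁻¹ * (-u)) := by
        rw [← inv_mul_cancel₀ hc, ← hP, equiv_mk hψ.2, equiv_mk hφ.2, h3]
      have h5 := hψ2 1
      rw [map_one (AdjoinRoot.mk f), map_one (aeval y)] at h5
      exact ⟨c⁻¹ * (-u), by rw [← h4, h5]; rfl⟩
  · rintro ⟨u, c⟩
    simp [hφ.2, hψ.2]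

end adj
end IG
set_option linter.unusedSectionVars false
set_option linter.unusedSimpArgs false
set_option linter.unusedFintypeInType false
namespace IG
open Finset Module Polynomial

/-- lcm of the proper `q^e-1` -/
def Bd (q d : ℕ) : ℕ := d.properDivisors.lcm (fun e => q ^ e - 1)

theorem pp_lcm {ι : Type} [DecidableEq ι] (s : Finset ι) (g : ι → ℕ) {p k : ℕ} (hp : p.Prime) (hk : k ≠ 0)
    (hg : ∀ i ∈ s, g i ≠ 0)
    (h : p ^ k ∣ s.lcm g) : ∃ i ∈ s, p ^ k ∣ g i := by
  induction s using Finset.induction_on with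
  | empty => 
    rw [Finset.lcm_empty] at h
    have := Nat.one_lt_pow hk hp.one_lt
    have := Nat.le_of_dvd one_pos h
    omega
  | insert i s hi ih =>
    have h0 : s.lcm g ≠ 0 := by
      rw [Ne, Finset.lcm_eq_zero_iff]
      rintro ⟨j, hj, h⟩
      exact hg j (Finset.mem_insert_of_mem hj) h
    rw [Finset.lcm_insert] at h
    have h' : p ^ k ∣ Nat.lcm (g i) (s.lcm g) := h
    rw [hp.pow_dvd_iff_le_factorization (Nat.lcm_ne_zero (hg i (by simp)) h0),
      Nat.factorization_lcm (hg i (by simp)) h0, Finsupp.sup_apply, le_sup_iff,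
      ← hp.pow_dvd_iff_le_factorization h0, ← hp.pow_dvd_iff_le_factorization (hg i (by simp))] at h'
    rcases h' with h | h
    · exact ⟨i, by simp, h⟩
    · obtain ⟨j, hj, h⟩ := ih (fun j hj => hg j (Finset.mem_insert_of_mem hj)) h
      exact ⟨j, Finset.mem_insert_of_mem hj, h⟩

theorem dvd_Bd {q d n o : ℕ} (hq : 2 ≤ q) (hd : 0 < d) (h1 : o ∣ q ^ d - 1)
    (h2 : o ∣ ((Finset.Icc 1 n).filter (fun e => ¬ d ∣ e)).lcm (fun e => q ^ e - 1)) : o ∣ Bd q d := by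
  rw [Nat.dvd_iff_prime_pow_dvd_dvd]
  intro p k hp hpk
  rcases eq_or_ne k 0 with rfl | hk
  · simp
  obtain ⟨e, he, h⟩ := pp_lcm _ _ hp hk (fun e he => by
    simp only [Finset.mem_filter, Finset.mem_Icc] at he
    have : q ^ e > 1 := Nat.one_lt_pow (by omega) (by omega)
    omega) (hpk.trans h2)
  simp only [Finset.mem_filter, Finset.mem_Icc] at he
  have h3 := Nat.dvd_gcd h (hpk.trans h1)
  rw [Nat.pow_sub_one_gcd_pow_sub_one] at h3
  refine h3.trans (Finset.dvd_lcm (f := fun e => q ^ e - 1) ?_)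
  rw [Nat.mem_properDivisors]
  refine ⟨Nat.gcd_dvd_right _ _, lt_of_le_of_ne (Nat.gcd_le_right _ hd) ?_⟩
  intro hh
  exact he.2 (hh ▸ Nat.gcd_dvd_left e d)

theorem two_Bd {q d : ℕ} (hq : 2 ≤ q) (hd : 2 ≤ d) : 2 * Bd q d ≤ q ^ d - 1 := by
  have hcast : ∀ e : ℕ, ((q ^ e - 1 : ℕ) : ℤ) = (q : ℤ) ^ e - 1 := fun e => by
    rw [Nat.cast_sub (Nat.one_le_pow _ _ (by omega))]; simp
  have hprod : ∀ e : ℕ, 0 < e → ∏ i ∈ e.divisors, eval (q : ℤ) (cyclotomic i ℤ) = ((q ^ e - 1 : ℕ) : ℤ) := by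
    intro e he
    rw [hcast, ← eval_prod, prod_cyclotomic_eq_X_pow_sub_one he]; simp
  set K := (∏ i ∈ d.properDivisors, eval (q : ℤ) (cyclotomic i ℤ)).natAbs with hK
  have h1 : Bd q d ∣ K := by
    refine Finset.lcm_dvd fun e he => ?_
    rw [Nat.mem_properDivisors] at he
    have he0 : 0 < e := Nat.pos_of_dvd_of_pos he.1 (by omega)
    rw [hK, ← Int.natCast_dvd_natCast, Int.dvd_natAbs, ← hprod e he0]
    refine Finset.prod_dvd_prod_of_subset _ _ _ ?_
    intro i hi
    rw [Nat.mem_divisors] at hi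
    rw [Nat.mem_properDivisors]
    exact ⟨hi.1.trans he.1, (Nat.le_of_dvd he0 hi.1).trans_lt he.2⟩
  have h2 := hprod d (by omega)
  rw [← Nat.insert_self_properDivisors (by omega), Finset.prod_insert (by simp)] at h2
  have h3 := congrArg Int.natAbs h2
  rw [Int.natAbs_mul, ← hK, Int.natAbs_natCast] at h3
  have h4 := sub_one_lt_natAbs_cyclotomic_eval (n := d) (q := q) (by omega) (by omega)
  have hpos : 0 < K := by
    by_contra hh
    have : K = 0 := by omega
    rw [this, mul_zero] at h3
    have : q ^ d > 1 := Nat.one_lt_pow (by omega) (by omega)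
    omega
  have h5 := Nat.le_of_dvd hpos h1
  rw [← h3]
  exact Nat.mul_le_mul (by omega) h5

section poly
variable {F : Type} [Field F]

theorem dvd_pow_of_irr {h R : F[X]} (h0 : h ≠ 0) (H : ∀ g : F[X], g.Monic → Irreducible g → g ∣ h → g ∣ R) :
    h ∣ R ^ h.natDegree := by
  induction hk : h.natDegree using Nat.strong_induction_on generalizing h with
  | _ k ih =>
    rcases Nat.eq_zero_or_pos k with rfl | hpos
    · rw [natDegree_eq_zero] at hk
      obtain ⟨c, rfl⟩ := hk
      have hc : c ≠ 0 := by rintro rfl; simp at h0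
      exact (isUnit_C.2 (isUnit_iff_ne_zero.2 hc)).dvd
    · obtain ⟨g, hg, hgi, hgh⟩ := exists_monic_irreducible_factor h (by
        intro hu
        rw [natDegree_eq_zero_of_isUnit hu] at hk; omega)
      obtain ⟨r, rfl⟩ := hgh
      have hr0 : r ≠ 0 := right_ne_zero_of_mul h0
      have hdeg : g.natDegree + r.natDegree = k := by rw [← natDegree_mul hg.ne_zero hr0, hk]
      have hgd := hgi.natDegree_pos
      have h1 := ih r.natDegree (by omega) hr0 (fun g' a b c => H g' a b (c.mul_left _)) rfl
      have h2 := H g hg hgi (dvd_mul_right _ _)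
      have : g * r ∣ R ^ (1 + r.natDegree) := by rw [pow_add, pow_one]; exact mul_dvd_mul h2 h1
      exact this.trans (pow_dvd_pow _ (by omega))

theorem dvd_of_sqf {h R : F[X]} (hs : Squarefree h) (H : ∀ g : F[X], g.Monic → Irreducible g → g ∣ h → g ∣ R) :
    h ∣ R := by
  have h1 : h ∣ R ^ (h.natDegree + 1) := (dvd_pow_of_irr hs.ne_zero H).trans (pow_dvd_pow _ (Nat.le_succ _))
  exact (hs.dvd_pow_iff_dvd (Nat.succ_ne_zero _)).1 h1

variable [Fintype F]

theorem two_le_card : 2 ≤ Nat.card F := by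
  have : 1 < Nat.card F := Finite.one_lt_card
  omega

theorem irr_dvd {g : F[X]} (hg : Irreducible g) (hx : IsCoprime g X) {e : ℕ} (he : g.natDegree ∣ e) :
    g ∣ X ^ (Nat.card F ^ e - 1) - 1 := by
  have h1 : g ∣ X ^ (Nat.card F) ^ e - X := (hg.natDegree_dvd_iff_dvd_X_pow_card_pow_sub_X).1 he
  have h2 : (X : F[X]) ^ (Nat.card F) ^ e - X = X * (X ^ (Nat.card F ^ e - 1) - 1) := by
    rw [mul_sub, mul_one, ← pow_succ', Nat.sub_add_cancel (Nat.one_le_pow _ _ (by have := two_le_card (F := F); omega))]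
  rw [h2] at h1
  exact hx.dvd_of_dvd_mul_left h1

theorem irr_dvd_conv {g : F[X]} (hg : Irreducible g) {e : ℕ} (h : g ∣ X ^ (Nat.card F ^ e - 1) - 1) : g.natDegree ∣ e := by
  apply (hg.natDegree_dvd_iff_dvd_X_pow_card_pow_sub_X).2
  have h2 : (X : F[X]) ^ (Nat.card F) ^ e - X = X * (X ^ (Nat.card F ^ e - 1) - 1) := by
    rw [mul_sub, mul_one, ← pow_succ', Nat.sub_add_cancel (Nat.one_le_pow _ _ (by have := two_le_card (F := F); omega))]
  rw [h2]
  exact h.mul_left _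

theorem X_pow_dvd {a b : ℕ} (h : a ∣ b) : (X : F[X]) ^ a - 1 ∣ X ^ b - 1 := by
  obtain ⟨c, rfl⟩ := h
  rw [pow_mul]
  simpa using sub_dvd_pow_sub_pow ((X : F[X]) ^ a) 1 c

theorem irr_cop_X {g : F[X]} (hg : Irreducible g) {a : ℕ} (ha : a ≠ 0) (h : g ∣ X ^ a - 1) : IsCoprime g X := by
  rw [hg.coprime_iff_not_dvd]
  intro hx
  have h1 : g ∣ X ^ a := hx.trans (dvd_pow_self _ ha)
  have h2 : g ∣ 1 := by have := dvd_sub h1 h; simpa using this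
  exact hg.not_isUnit (isUnit_of_dvd_one h2)

/-- monic irreducible of degree d other than X -/
def IsP (d : ℕ) (f : F[X]) : Prop := f.Monic ∧ Irreducible f ∧ IsCoprime f X ∧ f.natDegree = d

theorem finP (d : ℕ) : {f : F[X] | IsP d f}.Finite := by
  have : Finite (degreeLT F (d + 1)) := Finite.of_equiv _ (degreeLTEquiv F (d + 1)).toEquiv.symm
  refine Set.Finite.subset (Set.toFinite (degreeLT F (d + 1) : Set F[X])) ?_
  rintro f ⟨h1, h2, h3, h4⟩
  rw [SetLike.mem_coe, mem_degreeLT, degree_eq_natDegree h1.ne_zero, h4]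
  exact_mod_cast Nat.lt_succ_self d

/-- the finset -/
noncomputable def PF (F : Type) [Field F] [Fintype F] (d : ℕ) : Finset F[X] := (finP (F := F) d).toFinset

theorem mem_PF {d : ℕ} {f : F[X]} : f ∈ PF F d ↔ IsP d f := by simp [PF]

open Classical in
/-- strong ones -/
noncomputable def SF (F : Type) [Field F] [Fintype F] (d : ℕ) : Finset F[X] :=
  (PF F d).filter (fun f => ¬ f ∣ X ^ (Bd (Nat.card F) d) - 1)

theorem mem_SF {d : ℕ} {f : F[X]} : f ∈ SF F d ↔ IsP d f ∧ ¬ f ∣ X ^ (Bd (Nat.card F) d) - 1 := by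
  classical
  rw [SF, Finset.mem_filter, mem_PF]

theorem SF_sub (d : ℕ) : SF F d ⊆ PF F d := fun _ hf => mem_PF.2 (mem_SF.1 hf).1

theorem cop_of_ne {f g : F[X]} (hf : f.Monic) (hg : g.Monic) (hfi : Irreducible f) (hgi : Irreducible g) (h : f ≠ g) :
    IsCoprime f g := by
  rw [hfi.coprime_iff_not_dvd]
  intro hd
  exact h (eq_of_monic_of_associated hf hg (hfi.associated_of_dvd hgi hd))

theorem natDegree_prodPF {d : ℕ} {s : Finset F[X]} (h : s ⊆ PF F d) : (∏ f ∈ s, f).natDegree = s.card * d := by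
  rw [natDegree_prod_of_monic _ _ (fun f hf => (mem_PF.1 (h hf)).1), Finset.sum_congr rfl (fun f hf => (mem_PF.1 (h hf)).2.2.2)]
  simp

theorem XN_ne (N : ℕ) (hN : N ≠ 0): (X : F[X]) ^ N - 1 ≠ 0 := by
  have := X_pow_sub_C_ne_zero (R := F) (Nat.pos_of_ne_zero hN) 1
  simpa using this

theorem XN_deg (N : ℕ) : ((X : F[X]) ^ N - 1).natDegree = N := by
  have := natDegree_X_pow_sub_C (R := F) (n := N) (r := 1)
  simpa using this

theorem card_PF {d : ℕ} (hd : 0 < d) : (PF F d).card * d ≤ Nat.card F ^ d - 1 := by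
  have h1 : ∏ f ∈ PF F d, f ∣ X ^ (Nat.card F ^ d - 1) - 1 := by
    refine Finset.prod_dvd_of_coprime ?_ ?_
    · intro f hf g hg hfg
      have hf := mem_PF.1 hf
      have hg := mem_PF.1 hg
      exact cop_of_ne hf.1 hg.1 hf.2.1 hg.2.1 hfg
    · intro f hf
      have hf := mem_PF.1 hf
      exact irr_dvd hf.2.1 hf.2.2.1 (by rw [hf.2.2.2])
  have h2 : Nat.card F ^ d > 1 := Nat.one_lt_pow (by omega) (two_le_card (F := F))
  have h3 := natDegree_le_of_dvd h1 (XN_ne _ (by omega))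
  rwa [natDegree_prodPF subset_rfl, XN_deg] at h3

theorem card_SF {d : ℕ} (hd : 2 ≤ d) : Nat.card F ^ d - 1 ≤ 2 * ((SF F d).card * d) := by
  have h2 : Nat.card F ^ d > 1 := Nat.one_lt_pow (by omega) (two_le_card (F := F))
  have hB := two_Bd (two_le_card (F := F)) hd
  have hB0 : Bd (Nat.card F) d ≠ 0 := by
    rw [Bd, Ne, Finset.lcm_eq_zero_iff]
    rintro ⟨e, he, h⟩
    rw [Nat.mem_properDivisors] at he
    have : Nat.card F ^ e > 1 := Nat.one_lt_pow (by rintro rfl; simp at he; omega) (two_le_card (F := F))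
    omega
  have hsq : Squarefree ((X : F[X]) ^ (Nat.card F ^ d - 1) - 1) := by
    have : (X ^ (Nat.card F ^ d - 1) - C (1 : F)).Separable := by
      apply separable_X_pow_sub_C _ _ one_ne_zero
      rw [Nat.cast_sub h2.le, Nat.cast_pow, Nat.card_eq_fintype_card, FiniteField.cast_card_eq_zero, zero_pow (by omega)]
      simp
    simpa using this.squarefree
  have h1 : (X : F[X]) ^ (Nat.card F ^ d - 1) - 1 ∣ (X ^ (Bd (Nat.card F) d) - 1) * ∏ f ∈ SF F d, f := by
    refine dvd_of_sqf hsq ?_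
    · intro g hg hgi hgd
      have hcop := irr_cop_X hgi (by omega) hgd
      have hdd := irr_dvd_conv hgi hgd
      rcases eq_or_lt_of_le (Nat.le_of_dvd (by omega) hdd) with heq | hlt
      · by_cases hs : g ∣ X ^ (Bd (Nat.card F) d) - 1
        · exact hs.mul_right _
        · refine Dvd.dvd.mul_left (Finset.dvd_prod_of_mem (f := fun x => x) ?_) _
          rw [mem_SF]
          exact ⟨⟨hg, hgi, hcop, heq⟩, hs⟩
      · refine Dvd.dvd.mul_right ((irr_dvd hgi hcop dvd_rfl).trans (X_pow_dvd ?_)) _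
        exact Finset.dvd_lcm (f := fun e => Nat.card F ^ e - 1) (Nat.mem_properDivisors.2 ⟨hdd, hlt⟩)
  have hmon : (∏ f ∈ SF F d, f).Monic := monic_prod_of_monic _ _ (fun f hf => (mem_SF.1 hf).1.1)
  have h3 := natDegree_le_of_dvd h1 (mul_ne_zero (XN_ne _ hB0) hmon.ne_zero)
  rw [natDegree_mul (XN_ne _ hB0) hmon.ne_zero, XN_deg, XN_deg, natDegree_prodPF (SF_sub d)] at h3
  omega

theorem rkm_eq {n : ℕ} (y : Matrix.SpecialLinearGroup (Fin n) F) {d : ℕ} (hd : 0 < d) {f : F[X]} (hf : f ∈ SF F d)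
    (h0 : NI (Tm f) (lin y) ≠ 0) (h1 : N2 f f (lin y) = 0) (h2 : NI (Tm (f * f)) (lin y) = 0)
    (h3 : ∀ g : F[X], Irreducible g → g.Monic → IsCoprime g X → g ≠ f → d ∣ g.natDegree → NI (Tm g) (lin y) = 0) :
    ∃ m, rkm y m = d := by
  obtain ⟨⟨hm, hi, hx, hdeg⟩, hst⟩ := mem_SF.1 hf
  set μ := minpoly F (lin y) with hμ
  have hμ0 : μ ≠ 0 := minpoly.ne_zero (Algebra.IsIntegral.isIntegral _)
  have hμy : aeval (lin y) μ = 0 := minpoly.aeval _ _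
  set L := ((Finset.Icc 1 n).filter (fun e => ¬ d ∣ e)).lcm (fun e => Nat.card F ^ e - 1) with hL
  set p := ringChar F with hp
  have hpp : Fact p.Prime := ⟨CharP.char_is_prime F p⟩
  have hmin : ∀ r : F[X], r ≠ 0 → r.natDegree < μ.natDegree → aeval (lin y) r ≠ 0 := by
    intro r hr hlt h
    have : μ.natDegree ≤ r.natDegree := natDegree_le_of_dvd (minpoly.dvd F (lin y) h) hr
    omega
  have hker : ∀ g : F[X], g.Monic → Irreducible g → g ∣ μ → ∃ v, aeval (lin y) g v = 0 ∧ v ≠ 0 := by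
    rintro g hg hgi ⟨r, hr⟩
    have hr0 : r ≠ 0 := by rintro rfl; rw [mul_zero] at hr; exact hμ0 hr
    have h4 := hmin r hr0 (by
      rw [hr, natDegree_mul hg.ne_zero hr0]; have := hgi.natDegree_pos; omega)
    obtain ⟨w, hw⟩ := DFunLike.ne_iff.1 h4
    refine ⟨aeval (lin y) r w, ?_, hw⟩
    rw [← Module.End.mul_apply, ← map_mul, ← hr, hμy]; rfl
  have hfμ : f ∣ μ := by
    by_contra hnd
    obtain ⟨v, hv, hv0⟩ := (NI_irr hi hm).1 h0
    obtain ⟨a, b, hab⟩ := hi.coprime_iff_not_dvd.2 hnd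
    have : aeval (lin y) (a * f + b * μ) v = 0 := by rw [map_add, map_mul, map_mul, hμy]; simp [hv]
    rw [hab] at this
    exact hv0 (by simpa using this)
  have hff : ¬ f * f ∣ μ := by
    rintro ⟨r, hr⟩
    have hr0 : r ≠ 0 := by rintro rfl; rw [mul_zero] at hr; exact hμ0 hr
    have h4 := hmin (f * r) (mul_ne_zero hm.ne_zero hr0) (by
      rw [hr, mul_assoc, natDegree_mul hm.ne_zero (mul_ne_zero hm.ne_zero hr0)]; have := hi.natDegree_pos; omega)
    obtain ⟨w, hw⟩ := DFunLike.ne_iff.1 h4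
    refine NI_sq hi hm (y := lin y) (v := aeval (lin y) r w) ?_ ?_ h2
    · rw [← Module.End.mul_apply, ← map_mul, ← hr, hμy]; rfl
    · rw [← Module.End.mul_apply, ← map_mul]; exact hw
  obtain ⟨h, hh⟩ := hfμ
  have hh0 : h ≠ 0 := by rintro rfl; rw [mul_zero] at hh; exact hμ0 hh
  have hμn : μ.natDegree ≤ n := by
    have := natDegree_le_of_dvd (LinearMap.minpoly_dvd_charpoly (lin y)) (LinearMap.charpoly_monic _).ne_zero
    rwa [LinearMap.charpoly_natDegree, Module.finrank_fin_fun] at this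
  have hhn : h.natDegree ≤ n := by
    rw [hh, natDegree_mul hm.ne_zero hh0] at hμn; omega
  have hhP : h ∣ (X ^ L - 1) ^ h.natDegree := by
    refine dvd_pow_of_irr hh0 ?_
    intro g hg hgi hgh
    have hgμ : g ∣ μ := hh ▸ hgh.mul_left f
    obtain ⟨v, hv, hv0⟩ := hker g hg hgi hgμ
    have hgf : g ≠ f := by
      rintro rfl
      exact hff (hh ▸ mul_dvd_mul_left g hgh)
    have hgx : IsCoprime g X := by
      rw [hgi.coprime_iff_not_dvd]
      intro hgX
      obtain ⟨r, hr⟩ := hgX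
      apply hv0
      apply lin_inj y
      rw [map_zero]
      have : aeval (lin y) (X : F[X]) v = 0 := by
        rw [hr, mul_comm, map_mul, Module.End.mul_apply, hv, map_zero]
      rwa [aeval_X] at this
    have hnd : ¬ d ∣ g.natDegree := fun hdd => (NI_irr hgi hg).2 ⟨v, hv, hv0⟩ (h3 g hgi hg hgx hgf hdd)
    refine (irr_dvd hgi hgx dvd_rfl).trans (X_pow_dvd ?_)
    refine Finset.dvd_lcm (f := fun e => Nat.card F ^ e - 1) ?_
    rw [Finset.mem_filter, Finset.mem_Icc]
    exact ⟨⟨hgi.natDegree_pos, (natDegree_le_of_dvd hgμ hμ0).trans hμn⟩, hnd⟩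
  have hpn : h.natDegree ≤ p ^ n := hhn.trans (Nat.lt_pow_self hpp.out.one_lt).le
  have hhP2 : h ∣ (X ^ L - 1) ^ p ^ n := hhP.trans (pow_dvd_pow _ hpn)
  have hfP : ¬ f ∣ (X ^ L - 1) ^ p ^ n := by
    intro hd1
    have hd2 := hi.prime.dvd_of_dvd_pow hd1
    have e1 : ∀ k, f ∣ X ^ k - 1 ↔ orderOf (AdjoinRoot.root f) ∣ k := by
      intro k
      rw [orderOf_dvd_iff_pow_eq_one, ← AdjoinRoot.mk_eq_zero, map_sub, map_pow, AdjoinRoot.mk_X, map_one, sub_eq_zero]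
    rw [e1] at hd2 hst
    refine hst (dvd_Bd (n := n) (two_le_card (F := F)) hd ?_ hd2)
    rw [← e1]
    exact irr_dvd hi hx (by rw [hdeg])
  refine ⟨L * p ^ n, ?_⟩
  have hPe : (lin y) ^ (L * p ^ n) - 1 = aeval (lin y) (((X : F[X]) ^ L - 1) ^ p ^ n) := by
    have : CharP F p := ringChar.charP F
    rw [sub_pow_char_pow, ← pow_mul, one_pow, map_sub, map_pow, aeval_X, map_one]
  set P := ((X : F[X]) ^ L - 1) ^ p ^ n with hP
  have hkr : LinearMap.range (aeval (lin y) P) = LinearMap.ker (aeval (lin y) f) := by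
    have hle : LinearMap.range (aeval (lin y) P) ≤ LinearMap.ker (aeval (lin y) f) := by
      rintro _ ⟨v, rfl⟩
      rw [LinearMap.mem_ker, ← Module.End.mul_apply, ← map_mul]
      obtain ⟨r, hr⟩ := hhP2
      rw [hr, ← mul_assoc, ← hh, map_mul, hμy]; simp
    refine le_antisymm hle ?_
    obtain ⟨a, b, hab⟩ := hi.coprime_iff_not_dvd.2 hfP
    intro v hv
    rw [LinearMap.mem_ker] at hv
    refine ⟨aeval (lin y) b v, ?_⟩
    have : aeval (lin y) (a * f + b * P) v = v := by rw [hab]; simp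
    rw [map_add, map_mul, LinearMap.add_apply, Module.End.mul_apply, hv, map_zero, zero_add, mul_comm, map_mul,
      Module.End.mul_apply] at this
    exact this
  change finrank F (LinearMap.range ((lin y) ^ (L * p ^ n) - 1)) = d
  rw [hPe, hkr, ← hdeg]
  by_contra hne
  exact NI_pair hi hm hne h0 h1

end poly
end IG
set_option linter.unusedSectionVars false
set_option linter.unusedSimpArgs false
set_option linter.unusedFintypeInType false
namespace IG
open Finset Module Polynomial

section prob
variable {F : Type} [Field F] [Fintype F] {n : ℕ}

/-- number of elements with a property -/
noncomputable def cnt (Q : Matrix.SpecialLinearGroup (Fin n) F → Prop) : ℝ :=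
  (Nat.card {y : Matrix.SpecialLinearGroup (Fin n) F // Q y} : ℝ)

theorem cnt_mono {Q R : Matrix.SpecialLinearGroup (Fin n) F → Prop} (h : ∀ y, Q y → R y) : cnt Q ≤ cnt R := by
  unfold cnt
  exact_mod_cast Nat.card_le_card_of_injective (Subtype.map id h) (Subtype.map_injective _ Function.injective_id)

theorem cnt_eq [DecidableEq F] (Q : Matrix.SpecialLinearGroup (Fin n) F → Prop) [DecidablePred Q] : 
    cnt Q = ((Finset.univ.filter Q).card : ℝ) := by
  unfold cnt
  rw [Nat.card_eq_fintype_card, Fintype.card_subtype]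

theorem cnt_or (Q R : Matrix.SpecialLinearGroup (Fin n) F → Prop) : cnt (fun y => Q y ∨ R y) ≤ cnt Q + cnt R := by
  classical
  rw [cnt_eq, cnt_eq, cnt_eq, Finset.filter_or]
  exact_mod_cast Finset.card_union_le _ _

theorem cnt_ex {ι : Type} (s : Finset ι) (Q : ι → Matrix.SpecialLinearGroup (Fin n) F → Prop) :
    cnt (fun y => ∃ i ∈ s, Q i y) ≤ ∑ i ∈ s, cnt (Q i) := by
  classical
  simp only [cnt_eq]
  have : (Finset.univ.filter (fun y => ∃ i ∈ s, Q i y)) = s.biUnion (fun i => Finset.univ.filter (Q i)) := by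
    ext y; simp
  rw [this]
  exact_mod_cast Finset.card_biUnion_le

/-- group order -/
noncomputable def NG (F : Type) [Field F] [Fintype F] (n : ℕ) : ℝ := (Nat.card (Matrix.SpecialLinearGroup (Fin n) F) : ℝ)

theorem NG_pos : 0 < NG F n := by
  unfold NG
  exact_mod_cast Nat.card_pos

/-- weight -/
noncomputable def wt (F : Type) (d : ℕ) : ℝ := 1 / ((Nat.card F : ℝ) ^ d - 1)

theorem qd_cast (d : ℕ) : ((Nat.card F ^ d - 1 : ℕ) : ℝ) = (Nat.card F : ℝ) ^ d - 1 := by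
  rw [Nat.cast_sub (Nat.one_le_pow _ _ (by have := two_le_card (F := F); omega))]; simp

theorem qd_ge (d : ℕ) : (d : ℝ) ≤ (Nat.card F : ℝ) ^ d - 1 := by
  rw [← qd_cast]
  have h1 : d < Nat.card F ^ d := Nat.lt_pow_self (two_le_card (F := F))
  exact_mod_cast (by omega : d ≤ Nat.card F ^ d - 1)

theorem wt_nonneg (d : ℕ) : 0 ≤ wt F d := by
  unfold wt
  have := qd_ge (F := F) d
  have : (0:ℝ) ≤ d := Nat.cast_nonneg _
  apply one_div_nonneg.2; linarith

theorem wt_le {d : ℕ} (hd : 0 < d) : wt F d ≤ 1 / d := by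
  unfold wt
  exact one_div_le_one_div_of_le (by exact_mod_cast hd) (qd_ge d)

theorem wt_inv {d : ℕ} (hd : 0 < d) : wt F d * ((Nat.card F : ℝ) ^ d - 1) = 1 := by
  unfold wt
  have := qd_ge (F := F) d
  have : (0:ℝ) < d := by exact_mod_cast hd
  rw [one_div, inv_mul_cancel₀]; linarith

theorem sum_PF_wt {d : ℕ} (hd : 0 < d) : ∑ _f ∈ PF F d, wt F d ≤ 1 / d := by
  rw [Finset.sum_const, nsmul_eq_mul]
  have h1 := card_PF (F := F) hd
  have h2 : ((PF F d).card : ℝ) * d ≤ (Nat.card F : ℝ) ^ d - 1 := by rw [← qd_cast]; exact_mod_cast h1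
  have h3 := wt_inv (F := F) hd
  have h4 := wt_nonneg (F := F) d
  have hd' : (0:ℝ) < d := by exact_mod_cast hd
  rw [le_div_iff₀ hd']
  nlinarith

theorem sum_SF_wt {d : ℕ} (hd : 2 ≤ d) : 1 / (2 * d) ≤ ∑ _f ∈ SF F d, wt F d := by
  rw [Finset.sum_const, nsmul_eq_mul]
  have h1 := card_SF (F := F) hd
  have h2 : (Nat.card F : ℝ) ^ d - 1 ≤ 2 * (((SF F d).card : ℝ) * d) := by rw [← qd_cast]; exact_mod_cast h1
  have h3 := wt_inv (F := F) (d := d) (by omega)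
  have h4 := wt_nonneg (F := F) d
  have hd' : (0:ℝ) < d := by exact_mod_cast (by omega : 0 < d)
  rw [div_le_iff₀ (by positivity)]
  nlinarith

theorem cnt_bound {a b : F[X]} (ha : a.Monic) (hb : b.Monic) (hax : IsCoprime a X) (hbx : IsCoprime b X)
    (hn : a.natDegree + b.natDegree < n) {u v : ℝ} (hu : 0 ≤ u) (hv : 0 ≤ v)
    (hua : 1 ≤ u * (Nat.card (AdjoinRoot a)ˣ : ℝ)) (hvb : 1 ≤ v * (Nat.card (AdjoinRoot b)ˣ : ℝ)) :
    cnt (fun y : Matrix.SpecialLinearGroup (Fin n) F => N2 a b (lin y) ≠ 0) ≤ NG F n * (u * v) := by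
  have h := prob_N2 ha hb hax hbx hn
  have h' : (Nat.card (AdjoinRoot a)ˣ : ℝ) * (Nat.card (AdjoinRoot b)ˣ : ℝ) *
      cnt (fun y : Matrix.SpecialLinearGroup (Fin n) F => N2 a b (lin y) ≠ 0) ≤ NG F n := by
    unfold cnt NG; exact_mod_cast h
  have h0 : 0 ≤ cnt (fun y : Matrix.SpecialLinearGroup (Fin n) F => N2 a b (lin y) ≠ 0) := Nat.cast_nonneg _
  have h1 : 1 ≤ (u * (Nat.card (AdjoinRoot a)ˣ : ℝ)) * (v * (Nat.card (AdjoinRoot b)ˣ : ℝ)) := one_le_mul_of_one_le_of_one_le hua hvb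
  calc _ ≤ ((u * (Nat.card (AdjoinRoot a)ˣ : ℝ)) * (v * (Nat.card (AdjoinRoot b)ˣ : ℝ))) * cnt (fun y : Matrix.SpecialLinearGroup (Fin n) F => N2 a b (lin y) ≠ 0) := le_mul_of_one_le_left h0 h1
    _ = (u * v) * ((Nat.card (AdjoinRoot a)ˣ : ℝ) * (Nat.card (AdjoinRoot b)ˣ : ℝ) *
      cnt (fun y : Matrix.SpecialLinearGroup (Fin n) F => N2 a b (lin y) ≠ 0)) := by ring
    _ ≤ (u * v) * NG F n := by gcongr
    _ = _ := by ring

theorem wt_units {d : ℕ} (hd : 0 < d) {f : F[X]} (hf : f ∈ PF F d) : wt F d * (Nat.card (AdjoinRoot f)ˣ : ℝ) = 1 := by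
  obtain ⟨h1, h2, h3, h4⟩ := mem_PF.1 hf
  rw [units_irr h2 h1, h4, qd_cast, wt_inv hd]

theorem one_units : (1:ℝ) ≤ 1 * (Nat.card (AdjoinRoot (1:F[X]))ˣ : ℝ) := by
  have := fin_adj (F := F) (monic_one)
  have : Finite (AdjoinRoot (1 : F[X])) := Module.finite_of_finite F
  rw [one_mul]
  exact_mod_cast (Nat.card_pos : 0 < Nat.card (AdjoinRoot (1:F[X]))ˣ)

theorem cnt_A1 {d : ℕ} (hd : 0 < d) (hn : d < n) {f : F[X]} (hf : f ∈ PF F d) :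
    cnt (fun y : Matrix.SpecialLinearGroup (Fin n) F => NI (Tm f) (lin y) ≠ 0) ≤ NG F n * wt F d := by
  obtain ⟨h1, h2, h3, h4⟩ := mem_PF.1 hf
  have := cnt_bound (n := n) h1 monic_one h3 isCoprime_one_left (by simpa [h4] using hn) (wt_nonneg d) zero_le_one
    (wt_units hd hf).ge one_units
  rw [mul_one] at this
  refine le_trans (cnt_mono ?_) this
  intro y hy
  rwa [N2_one h1]

theorem cnt_A2 {d e : ℕ} (hd : 0 < d) (he : 0 < e) (hn : d + e < n) {f g : F[X]} (hf : f ∈ PF F d) (hg : g ∈ PF F e) (hfg : f ≠ g) :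
    cnt (fun y : Matrix.SpecialLinearGroup (Fin n) F => NI (Tm f) (lin y) ≠ 0 ∧ NI (Tm g) (lin y) ≠ 0) ≤ NG F n * (wt F d * wt F e) := by
  obtain ⟨h1, h2, h3, h4⟩ := mem_PF.1 hf
  obtain ⟨g1, g2, g3, g4⟩ := mem_PF.1 hg
  have := cnt_bound (n := n) h1 g1 h3 g3 (by simpa [h4, g4] using hn) (wt_nonneg d) (wt_nonneg e)
    (wt_units hd hf).ge (wt_units he hg).ge
  refine le_trans (cnt_mono ?_) this
  intro y hy
  rw [N2_cop h1 g1 (cop_of_ne h1 g1 h2 g2 hfg)]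
  exact mul_ne_zero hy.1 hy.2

theorem cnt_A3 {d : ℕ} (hd : 0 < d) (hn : d + d < n) {f : F[X]} (hf : f ∈ PF F d) :
    cnt (fun y : Matrix.SpecialLinearGroup (Fin n) F => N2 f f (lin y) ≠ 0) ≤ NG F n * (wt F d * wt F d) := by
  obtain ⟨h1, h2, h3, h4⟩ := mem_PF.1 hf
  exact cnt_bound (n := n) h1 h1 h3 h3 (by simpa [h4] using hn) (wt_nonneg d) (wt_nonneg d)
    (wt_units hd hf).ge (wt_units hd hf).ge

theorem units_sq {f : F[X]} (hf : Irreducible f) (hm : f.Monic) :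
    (Nat.card F ^ f.natDegree - 1) * (Nat.card F ^ f.natDegree - 1) ≤ Nat.card (AdjoinRoot (f * f))ˣ := by
  classical
  have := fin_adj (hm.mul hm)
  have : Finite (AdjoinRoot (f * f)) := Module.finite_of_finite F
  set A := AdjoinRoot (f * f) with hA
  let M : A →ₗ[F] A := LinearMap.mulLeft F (AdjoinRoot.mk (f * f) f)
  have hr : LinearMap.range M ≤ LinearMap.ker M := by
    rintro _ ⟨u, rfl⟩
    simp only [M, LinearMap.mem_ker, LinearMap.mulLeft_apply]
    rw [← mul_assoc, ← map_mul, AdjoinRoot.mk_self, zero_mul]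
  have h1 := LinearMap.finrank_range_add_finrank_ker M
  have h2 := Submodule.finrank_mono hr
  rw [rank_adj (hm.mul hm), natDegree_mul hm.ne_zero hm.ne_zero] at h1
  have h3 : Nat.card (LinearMap.range M) ≤ Nat.card F ^ f.natDegree := by
    rw [Module.natCard_eq_pow_finrank (K := F)]
    exact Nat.pow_le_pow_right (by have := two_le_card (F := F); omega) (by omega)
  have h4 : Nat.card A ≤ Nat.card (LinearMap.range M) + Nat.card Aˣ := by
    rw [← Nat.card_sum]
    refine Nat.card_le_card_of_surjective (fun s => Sum.elim (fun x => x.1) (fun x => x.1) s) ?_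
    intro u
    obtain ⟨P, rfl⟩ := AdjoinRoot.mk_surjective u
    by_cases hP : f ∣ P
    · obtain ⟨Q, rfl⟩ := hP
      exact ⟨Sum.inl ⟨AdjoinRoot.mk _ (f * Q), ⟨AdjoinRoot.mk _ Q, by simp [M]⟩⟩, rfl⟩
    · have hc := hf.coprime_iff_not_dvd.2 hP
      obtain ⟨a, b, hab⟩ := hc.mul_left hc
      have hu : IsUnit (AdjoinRoot.mk (f * f) P) := by
        refine IsUnit.of_mul_eq_one (AdjoinRoot.mk (f * f) b) ?_
        have := congrArg (AdjoinRoot.mk (f * f)) hab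
        rw [map_add, map_mul, AdjoinRoot.mk_self, mul_zero, zero_add, map_mul, map_one] at this
        exact (mul_comm _ _).trans this
      exact ⟨Sum.inr hu.unit, rfl⟩
  rw [Module.natCard_eq_pow_finrank (K := F) (V := A), rank_adj (hm.mul hm), natDegree_mul hm.ne_zero hm.ne_zero, pow_add] at h4
  set Q := Nat.card F ^ f.natDegree with hQ
  have hQ1 : 1 ≤ Q := Nat.one_le_pow _ _ (by have := two_le_card (F := F); omega)
  obtain ⟨k, hk⟩ : ∃ k, Q = k + 1 := ⟨Q - 1, by omega⟩
  rw [hk] at h4 h3 ⊢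
  simp only [Nat.add_sub_cancel]
  nlinarith

theorem cnt_A4 {d : ℕ} (hd : 0 < d) (hn : d + d < n) {f : F[X]} (hf : f ∈ PF F d) :
    cnt (fun y : Matrix.SpecialLinearGroup (Fin n) F => NI (Tm (f * f)) (lin y) ≠ 0) ≤ NG F n * (wt F d * wt F d) := by
  obtain ⟨h1, h2, h3, h4⟩ := mem_PF.1 hf
  have := cnt_bound (n := n) (h1.mul h1) monic_one (h3.mul_left h3) isCoprime_one_left
    (by rw [natDegree_mul h1.ne_zero h1.ne_zero]; simpa [h4] using hn) (mul_nonneg (wt_nonneg d) (wt_nonneg d)) zero_le_one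
    (by
      have h5 := units_sq h2 h1
      rw [h4] at h5
      have h6 : ((Nat.card F : ℝ) ^ d - 1) * ((Nat.card F : ℝ) ^ d - 1) ≤ Nat.card (AdjoinRoot (f * f))ˣ := by
        rw [← qd_cast]; exact_mod_cast h5
      calc (1:ℝ) = (wt F d * ((Nat.card F : ℝ) ^ d - 1)) * (wt F d * ((Nat.card F : ℝ) ^ d - 1)) := by rw [wt_inv hd]; ring
        _ = (wt F d * wt F d) * (((Nat.card F : ℝ) ^ d - 1) * ((Nat.card F : ℝ) ^ d - 1)) := by ring
        _ ≤ _ := mul_le_mul_of_nonneg_left h6 (mul_nonneg (wt_nonneg d) (wt_nonneg d)))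
    one_units
  rw [mul_one] at this
  refine le_trans (cnt_mono ?_) this
  intro y hy
  rwa [N2_one (h1.mul h1)]

end prob
end IG
set_option linter.unusedSectionVars false
set_option linter.unusedSimpArgs false
set_option linter.unusedFintypeInType false
namespace IG
open Finset Module Polynomial

section block
variable {F : Type} [Field F] [Fintype F] {n : ℕ}

/-- weight of a polynomial -/
noncomputable def wp (f : F[X]) : ℝ := wt F f.natDegree

/-- total weight -/
noncomputable def muS (S : Finset F[X]) : ℝ := ∑ f ∈ S, wp f

open Classical in
/-- coefficients -/
noncomputable def cf (S : Finset F[X]) (t : F[X] × F[X]) : ℝ :=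
  if t.2 = 1 then (if t.1 = 1 then muS S ^ 2 else (1 - 2 * muS S) * wp t.1) else (if t.1 = 1 then 0 else wp t.1 * wp t.2)

open Classical in
/-- pairs -/
noncomputable def SP (S : Finset F[X]) : Finset (F[X] × F[X]) := insert 1 S ×ˢ insert 1 S

theorem sum_cf (S : Finset F[X]) (h1 : (1 : F[X]) ∉ S) (h : F[X] → F[X] → ℝ) :
    ∑ t ∈ SP S, cf S t * h t.1 t.2 = muS S ^ 2 * h 1 1 + (1 - 2 * muS S) * (∑ a ∈ S, wp a * h a 1) +
      ∑ a ∈ S, ∑ b ∈ S, wp a * wp b * h a b := by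
  classical
  have e : SP S = insert 1 S ×ˢ insert 1 S := by unfold SP; congr!
  rw [e, Finset.sum_product, Finset.sum_insert h1, Finset.sum_insert h1]
  have z1 : ∑ b ∈ S, cf S (1, b) * h 1 b = 0 := by
    apply Finset.sum_eq_zero
    intro b hb
    have : b ≠ 1 := fun hh => h1 (hh ▸ hb)
    simp [cf, this]
  have z2 : ∑ a ∈ S, ∑ b ∈ insert 1 S, cf S (a, b) * h a b
      = ∑ a ∈ S, ((1 - 2 * muS S) * (wp a * h a 1) + ∑ b ∈ S, wp a * wp b * h a b) := by
    apply Finset.sum_congr rfl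
    intro a ha
    have ha1 : a ≠ 1 := fun hh => h1 (hh ▸ ha)
    rw [Finset.sum_insert h1]
    congr 1
    · simp [cf, ha1, mul_assoc]
    · apply Finset.sum_congr rfl
      intro b hb
      have hb1 : b ≠ 1 := fun hh => h1 (hh ▸ hb)
      simp [cf, ha1, hb1]
  simp only [] at z1 z2 ⊢
  rw [z1, z2, Finset.sum_add_distrib, ← Finset.mul_sum]
  simp [cf]; ring

theorem sum_cf_one (S : Finset F[X]) (h1 : (1 : F[X]) ∉ S) : ∑ t ∈ SP S, cf S t = muS S := by
  have := sum_cf S h1 (fun _ _ => 1)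
  simp only [mul_one] at this
  rw [this]
  have e2 : ∑ a ∈ S, ∑ b ∈ S, wp a * wp b = muS S * muS S := by rw [muS, Finset.sum_mul_sum]
  rw [e2]
  change _ + (1 - 2 * muS S) * muS S + _ = _
  ring

theorem block (S : Finset F[X]) (hS : ∀ f ∈ S, f.Monic ∧ Irreducible f)
    (y : (Fin n → F) →ₗ[F] (Fin n → F)) :
    ∑ t ∈ SP S, cf S t * (N2 t.1 t.2 y : ℝ) = (∑ f ∈ S, wp f * (NI (Tm f) y : ℝ) - muS S) ^ 2 := by
  classical
  have h1 : (1 : F[X]) ∉ S := fun h => not_irreducible_one (hS 1 h).2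
  rw [sum_cf S h1 (fun a b => (N2 a b y : ℝ)), N2_one_one]
  have e1 : ∑ a ∈ S, wp a * (N2 a 1 y : ℝ) = ∑ a ∈ S, wp a * (NI (Tm a) y : ℝ) :=
    Finset.sum_congr rfl (fun a ha => by rw [N2_one (hS a ha).1])
  rw [e1]
  set Z := ∑ a ∈ S, wp a * (NI (Tm a) y : ℝ) with hZ
  have e2 : Z * Z = ∑ a ∈ S, ∑ b ∈ S, wp a * wp b * (N2 a b y : ℝ) + Z := by
    conv_lhs => rw [hZ, Finset.sum_mul_sum]
    conv_rhs => rw [hZ, ← Finset.sum_add_distrib]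
    apply Finset.sum_congr rfl
    intro a ha
    have key : ∀ b ∈ S, wp a * (NI (Tm a) y : ℝ) * (wp b * (NI (Tm b) y : ℝ)) =
        wp a * wp b * (N2 a b y : ℝ) + if b = a then wp a * (NI (Tm a) y : ℝ) else 0 := by
      intro b hb
      by_cases hab : b = a
      · subst hab
        have hh := N2_self (hS b hb).2 (hS b hb).1 y
        have hh' : (NI (Tm b) y : ℝ) * (NI (Tm b) y : ℝ) = (N2 b b y : ℝ) + ((Nat.card F : ℝ) ^ b.natDegree - 1) * (NI (Tm b) y : ℝ) := by
          rw [← qd_cast]; exact_mod_cast hh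
        have hw : wp b * ((Nat.card F : ℝ) ^ b.natDegree - 1) = 1 := wt_inv (hS b hb).2.natDegree_pos
        simp only [if_true]
        linear_combination (wp b * wp b) * hh' + (wp b * (NI (Tm b) y : ℝ)) * hw
      · rw [if_neg hab, N2_cop (hS a ha).1 (hS b hb).1 (cop_of_ne (hS a ha).1 (hS b hb).1 (hS a ha).2 (hS b hb).2 (Ne.symm hab))]
        push_cast; ring
    rw [Finset.sum_congr rfl key, Finset.sum_add_distrib, Finset.sum_ite_eq' S a, if_pos ha]
  push_cast
  linear_combination -e2

/-- second moment product bound -/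
theorem many {ι : Type} [DecidableEq ι] (s : Finset ι) (S : ι → Finset F[X]) (D : ι → ℕ)
    (hm : ∀ j ∈ s, ∀ f ∈ S j, f.Monic ∧ Irreducible f ∧ IsCoprime f X ∧ f.natDegree ≤ D j)
    (hc : ∀ j ∈ s, ∀ k ∈ s, j ≠ k → ∀ f ∈ S j, f ∉ S k)
    (hmu : ∀ j ∈ s, 2 ≤ muS (S j))
    (hn : ∑ j ∈ s, 2 * D j < n) :
    cnt (fun y : Matrix.SpecialLinearGroup (Fin n) F => ∀ j ∈ s, ∀ f ∈ S j, NI (Tm f) (lin y) = 0) ≤ NG F n * (1 / 2) ^ s.card := by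
  classical
  have hmem : ∀ j, ∀ t ∈ SP (S j), (t.1 = 1 ∨ t.1 ∈ S j) ∧ (t.2 = 1 ∨ t.2 ∈ S j) := by
    intro j t ht
    unfold SP at ht
    rw [Finset.mem_product, Finset.mem_insert, Finset.mem_insert] at ht
    exact ht
  have g1 : ∀ j ∈ s, ∀ f : F[X], (f = 1 ∨ f ∈ S j) → f.Monic ∧ IsCoprime f X ∧ f.natDegree ≤ D j := by
    intro j hj f hf
    rcases hf with rfl | hf
    · exact ⟨monic_one, isCoprime_one_left, by simp⟩
    · obtain ⟨a, b, c, d⟩ := hm j hj f hf; exact ⟨a, c, d⟩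
  have g2 : ∀ j ∈ s, ∀ k ∈ s, j ≠ k → ∀ f g : F[X], (f = 1 ∨ f ∈ S j) → (g = 1 ∨ g ∈ S k) → IsCoprime f g := by
    intro j hj k hk hjk f g hf hg
    rcases hf with rfl | hf
    · exact isCoprime_one_left
    rcases hg with rfl | hg
    · exact isCoprime_one_right
    obtain ⟨a, b, c, d⟩ := hm j hj f hf
    obtain ⟨a', b', c', d'⟩ := hm k hk g hg
    exact cop_of_ne a a' b b' (fun h => hc j hj k hk hjk f hf (h ▸ hg))
  have := fin_adj (F := F) monic_one
  have M := moment (n := n) s (fun j => SP (S j)) (fun j => 2 * D j) (fun j => cf (S j))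
    (fun j hj t ht => ⟨(g1 j hj _ (hmem j t ht).1).1, (g1 j hj _ (hmem j t ht).2).1, (g1 j hj _ (hmem j t ht).1).2.1, (g1 j hj _ (hmem j t ht).2).2.1⟩)
    (fun j hj t ht => by
      have := (g1 j hj _ (hmem j t ht).1).2.2
      have := (g1 j hj _ (hmem j t ht).2).2.2
      omega)
    (fun j hj k hk hjk t ht r hr => by
      have a := hmem j t ht
      have b := hmem k r hr
      exact IsCoprime.mul_left
        (IsCoprime.mul_right (g2 j hj k hk hjk _ _ a.1 b.1) (g2 j hj k hk hjk _ _ a.1 b.2))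
        (IsCoprime.mul_right (g2 j hj k hk hjk _ _ a.2 b.1) (g2 j hj k hk hjk _ _ a.2 b.2)))
    (AdjoinRoot (1 : F[X])) (Tm 1) (Tm_inj isCoprime_one_left) 1 (aeval_Tm_self 1) (fun _ _ _ _ => isCoprime_one_left)
    (by rw [rank_adj monic_one]; simpa using hn)
  simp only [NI_one] at M
  have M' : ∑ y : Matrix.SpecialLinearGroup (Fin n) F, ∏ j ∈ s, (∑ f ∈ S j, wp f * (NI (Tm f) (lin y) : ℝ) - muS (S j)) ^ 2
      = NG F n * ∏ j ∈ s, muS (S j) := by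
    unfold NG
    rw [← Finset.prod_congr rfl (fun j hj => sum_cf_one (S j) (fun h => not_irreducible_one (hm j hj 1 h).2.1)), ← M]
    apply Finset.sum_congr rfl
    intro y _
    rw [Nat.cast_one, one_mul]
    apply Finset.prod_congr rfl
    intro j hj
    rw [block (S j) (fun f hf => ⟨(hm j hj f hf).1, (hm j hj f hf).2.1⟩)]
  set Q : Matrix.SpecialLinearGroup (Fin n) F → Prop := fun y => ∀ j ∈ s, ∀ f ∈ S j, NI (Tm f) (lin y) = 0 with hQ
  have lower : cnt Q * ∏ j ∈ s, muS (S j) ^ 2 ≤ NG F n * ∏ j ∈ s, muS (S j) := by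
    rw [← M', cnt_eq, ← nsmul_eq_mul, ← Finset.sum_const]
    calc _ = ∑ y ∈ Finset.univ.filter Q, ∏ j ∈ s, (∑ f ∈ S j, wp f * (NI (Tm f) (lin y) : ℝ) - muS (S j)) ^ 2 := by
          apply Finset.sum_congr rfl
          intro y hy
          have hy' : Q y := (Finset.mem_filter.1 hy).2
          apply Finset.prod_congr rfl
          intro j hj
          rw [Finset.sum_eq_zero (fun f hf => by rw [hy' j hj f hf]; simp)]
          ring
      _ ≤ _ := Finset.sum_le_sum_of_subset_of_nonneg (Finset.filter_subset _ _)
          (fun y _ _ => Finset.prod_nonneg (fun j _ => sq_nonneg _))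
  rw [Finset.prod_pow] at lower
  have hP2 : (2:ℝ) ^ s.card ≤ ∏ j ∈ s, muS (S j) := by
    rw [← Finset.prod_const]
    exact Finset.prod_le_prod (fun _ _ => by norm_num) hmu
  set P := ∏ j ∈ s, muS (S j) with hP
  have hP0 : 0 < P := lt_of_lt_of_le (by positivity) hP2
  have l2 : cnt Q * P ≤ NG F n := by
    have : (cnt Q * P) * P ≤ NG F n * P := by nlinarith
    exact le_of_mul_le_mul_right this hP0
  have h0 : 0 ≤ cnt Q := Nat.cast_nonneg _
  rw [one_div, inv_pow, ← div_eq_mul_inv, le_div_iff₀ (by positivity)]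
  exact le_trans (mul_le_mul_of_nonneg_left hP2 h0) l2

end block
end IG
set_option linter.unusedSectionVars false
set_option linter.unusedSimpArgs false
set_option linter.unusedFintypeInType false
namespace IG
open Finset Module Polynomial

theorem dyadic {p : ℕ} (hp : p.Prime) (a : ℕ) (ha : 1 ≤ a) :
    (1 / 8 : ℝ) ≤ ∑ d ∈ (Finset.Ico (2 ^ a) (2 ^ (a + 1))).filter (fun d => ¬ p ∣ d), 1 / (2 * (d : ℝ)) := by
  obtain ⟨b, rfl⟩ : ∃ b, a = b + 1 := ⟨a - 1, by omega⟩
  have hp2 := hp.two_le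
  have hcard : 2 ^ b ≤ ((Finset.Ico (2 ^ (b + 1)) (2 ^ (b + 1 + 1))).filter (fun d => ¬ p ∣ d)).card := by
    have h0 : (Finset.Ico (2 ^ b) (2 ^ (b + 1))).card = 2 ^ b := by
      rw [Nat.card_Ico, pow_succ]; omega
    conv_lhs => rw [← h0]
    apply Finset.card_le_card_of_injOn (fun i => if p ∣ 2 * i then 2 * i + 1 else 2 * i)
    · intro i hi
      rw [Finset.mem_coe, Finset.mem_Ico] at hi
      rw [Finset.mem_coe, Finset.mem_filter, Finset.mem_Ico]
      rw [pow_succ] at hi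
      have e1 : 2 ^ (b + 1) = 2 ^ b * 2 := pow_succ _ _
      have e2 : 2 ^ (b + 1 + 1) = 2 ^ b * 2 * 2 := by rw [pow_succ, pow_succ]
      rw [e2, e1]
      dsimp only
      split_ifs with h
      · refine ⟨by omega, ?_⟩
        intro h2
        have := (Nat.dvd_add_right h).1 h2
        have := Nat.le_of_dvd one_pos this
        omega
      · exact ⟨by omega, h⟩
    · intro i _ k _ hik
      dsimp only at hik
      split_ifs at hik <;> omega
  have hle : ∀ d ∈ (Finset.Ico (2 ^ (b + 1)) (2 ^ (b + 1 + 1))).filter (fun d => ¬ p ∣ d), (1 / (8 * 2 ^ b) : ℝ) ≤ 1 / (2 * (d : ℝ)) := by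
    intro d hd
    rw [Finset.mem_filter, Finset.mem_Ico] at hd
    have h1 : 0 < d := lt_of_lt_of_le (by positivity) hd.1.1
    have h2 : (d : ℝ) ≤ 2 ^ (b + 1 + 1) := by exact_mod_cast hd.1.2.le
    have h3 : (0:ℝ) < d := by exact_mod_cast h1
    apply one_div_le_one_div_of_le (by positivity)
    rw [pow_succ, pow_succ] at h2
    linarith
  have := Finset.card_nsmul_le_sum _ _ _ hle
  refine le_trans ?_ this
  rw [nsmul_eq_mul]
  have hc : (2 ^ b : ℝ) ≤ (((Finset.Ico (2 ^ (b + 1)) (2 ^ (b + 1 + 1))).filter (fun d => ¬ p ∣ d)).card : ℝ) := by exact_mod_cast hcard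
  have hb : (0:ℝ) < 2 ^ b := by positivity
  calc (1 / 8 : ℝ) = 2 ^ b * (1 / (8 * 2 ^ b)) := by field_simp
    _ ≤ _ := by gcongr

theorem dyadic2 {p : ℕ} (hp : p.Prime) (a : ℕ) (ha : 1 ≤ a) (k : ℕ) :
    (k / 8 : ℝ) ≤ ∑ d ∈ (Finset.Ico (2 ^ a) (2 ^ (a + k))).filter (fun d => ¬ p ∣ d), 1 / (2 * (d : ℝ)) := by
  induction k with
  | zero => simp
  | succ k ih =>
    have e : (Finset.Ico (2 ^ a) (2 ^ (a + (k + 1)))).filter (fun d => ¬ p ∣ d) =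
        (Finset.Ico (2 ^ a) (2 ^ (a + k))).filter (fun d => ¬ p ∣ d) ∪ (Finset.Ico (2 ^ (a + k)) (2 ^ (a + k + 1))).filter (fun d => ¬ p ∣ d) := by
      rw [← Finset.filter_union, Finset.Ico_union_Ico_eq_Ico]
      · rfl
      · exact Nat.pow_le_pow_right (by norm_num) (by omega)
      · exact Nat.pow_le_pow_right (by norm_num) (by omega)
    rw [e, Finset.sum_union]
    · have := dyadic hp (a + k) (by omega)
      push_cast; linarith
    · apply Finset.disjoint_filter_filter
      exact Finset.Ico_disjoint_Ico_consecutive _ _ _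

section b4
variable {F : Type} [Field F] [Fintype F] {n : ℕ}

theorem geomb (J : ℕ) (hJ : 1 ≤ J) : ∑ j ∈ Finset.Ico J (7 * J), 2 * 2 ^ (16 * (j + 1)) < 2 ^ (256 * J) := by
  have h1 : ∑ j ∈ Finset.Ico J (7 * J), 2 * 2 ^ (16 * (j + 1)) ≤ (Finset.Ico J (7 * J)).card • (2 * 2 ^ (112 * J)) := by
    apply Finset.sum_le_card_nsmul
    intro j hj
    rw [Finset.mem_Ico] at hj
    exact Nat.mul_le_mul_left _ (Nat.pow_le_pow_right (by norm_num) (by omega))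
  refine lt_of_le_of_lt h1 ?_
  rw [Nat.card_Ico, smul_eq_mul]
  have h2 : J < 2 ^ J := Nat.lt_two_pow_self
  have h3 : 7 * J - J = 6 * J := by omega
  rw [h3]
  calc 6 * J * (2 * 2 ^ (112 * J)) = 12 * J * 2 ^ (112 * J) := by ring
    _ < 2 ^ (4 + J) * 2 ^ (112 * J) := by
        apply Nat.mul_lt_mul_of_pos_right _ (by positivity)
        rw [pow_add]; omega
    _ = 2 ^ (4 + J + 112 * J) := by rw [← pow_add]
    _ ≤ _ := Nat.pow_le_pow_right (by norm_num) (by omega)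

theorem B4 {p : ℕ} (hp : p.Prime) {J : ℕ} (hJ : 1 ≤ J) (hn : 2 ^ (256 * J) ≤ n) :
    cnt (fun y : Matrix.SpecialLinearGroup (Fin n) F => ∀ d ∈ Finset.Ico (2 ^ (16 * J)) (2 ^ (112 * J)), ¬ p ∣ d →
      ∀ f ∈ SF F d, NI (Tm f) (lin y) = 0) ≤ NG F n * (1 / 2) ^ (6 * J) := by
  classical
  let I : ℕ → Finset ℕ := fun j => (Finset.Ico (2 ^ (16 * j)) (2 ^ (16 * j + 16))).filter (fun d => ¬ p ∣ d)
  let S : ℕ → Finset F[X] := fun j => (I j).biUnion (fun d => SF F d)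
  have hS : ∀ j f, f ∈ S j → ∃ d, 2 ^ (16 * j) ≤ d ∧ d < 2 ^ (16 * j + 16) ∧ ¬ p ∣ d ∧ f ∈ SF F d := by
    intro j f hf
    obtain ⟨d, hd, hf⟩ := Finset.mem_biUnion.1 hf
    rw [Finset.mem_filter, Finset.mem_Ico] at hd
    exact ⟨d, hd.1.1, hd.1.2, hd.2, hf⟩
  have key := many (F := F) (n := n) (Finset.Ico J (7 * J)) S (fun j => 2 ^ (16 * (j + 1)))
    (by
      intro j hj f hf
      obtain ⟨d, h1, h2, h3, h4⟩ := hS j f hf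
      obtain ⟨⟨a, b, c, e⟩, _⟩ := mem_SF.1 h4
      refine ⟨a, b, c, ?_⟩
      rw [e]; exact h2.le)
    (by
      intro j hj k hk hjk f hf hf'
      obtain ⟨d, h1, h2, h3, h4⟩ := hS j f hf
      obtain ⟨⟨a, b, c, e⟩, _⟩ := mem_SF.1 h4
      obtain ⟨d', h1', h2', h3', h4'⟩ := hS k f hf'
      obtain ⟨⟨a', b', c', e'⟩, _⟩ := mem_SF.1 h4'
      have hdd : d = d' := e.symm.trans e'
      subst hdd
      have x1 : 16 * j < 16 * k + 16 := (Nat.pow_lt_pow_iff_right (by norm_num : 1 < 2)).1 (lt_of_le_of_lt h1 h2')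
      have x2 : 16 * k < 16 * j + 16 := (Nat.pow_lt_pow_iff_right (by norm_num : 1 < 2)).1 (lt_of_le_of_lt h1' h2)
      omega)
    (by
      intro j hj
      rw [Finset.mem_Ico] at hj
      have hge : ∀ d ∈ I j, 2 ≤ d := by
        intro d hd
        rw [Finset.mem_filter, Finset.mem_Ico] at hd
        calc 2 = 2 ^ 1 := rfl
          _ ≤ 2 ^ (16 * j) := Nat.pow_le_pow_right (by norm_num) (by omega)
          _ ≤ d := hd.1.1
      have e : muS (S j) = ∑ d ∈ I j, ∑ f ∈ SF F d, wp f := by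
        unfold muS
        apply Finset.sum_biUnion
        intro d hd d' hd' hne
        apply Finset.disjoint_left.2
        intro f hf hf'
        exact hne ((mem_SF.1 hf).1.2.2.2.symm.trans (mem_SF.1 hf').1.2.2.2)
      rw [e]
      have h1 := dyadic2 hp (16 * j) (by omega) 16
      calc (2:ℝ) = ((16:ℕ):ℝ) / 8 := by norm_num
        _ ≤ _ := h1
        _ ≤ _ := by
          apply Finset.sum_le_sum
          intro d hd
          refine le_trans (sum_SF_wt (F := F) (hge d hd)) (le_of_eq ?_)
          apply Finset.sum_congr rfl
          intro f hf
          unfold wp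
          rw [(mem_SF.1 hf).1.2.2.2])
    (lt_of_lt_of_le (geomb J hJ) hn)
  rw [Nat.card_Ico, show 7 * J - J = 6 * J by omega] at key
  refine le_trans (cnt_mono ?_) key
  intro y hy j hj f hf
  obtain ⟨d, h1, h2, h3, h4⟩ := hS j f hf
  rw [Finset.mem_Ico] at hj
  refine hy d ?_ h3 f h4
  rw [Finset.mem_Ico]
  exact ⟨le_trans (Nat.pow_le_pow_right (by norm_num) (by omega)) h1, lt_of_lt_of_le h2 (Nat.pow_le_pow_right (by norm_num) (by omega))⟩

end b4
end IG
set_option linter.unusedSectionVars false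
set_option linter.unusedSimpArgs false
set_option linter.unusedFintypeInType false
namespace IG
open Finset Module Polynomial

theorem sum_sq (A B : ℕ) (hA : 1 ≤ A) : ∑ d ∈ Finset.Ico A B, (1 / (d:ℝ)) * (1 / (d:ℝ)) ≤ 2 / A := by
  obtain ⟨k, rfl⟩ : ∃ k, A = k + 1 := ⟨A - 1, by omega⟩
  have h := sum_Ioo_inv_sq_le (α := ℝ) k B
  have e : Finset.Ico (k + 1) B = Finset.Ioo k B := by ext; simp only [Finset.mem_Ico, Finset.mem_Ioo]; omega
  rw [e]
  refine le_trans (le_of_eq ?_) (le_trans h (le_of_eq (by push_cast; rfl)))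
  apply Finset.sum_congr rfl
  intro d _
  rw [one_div, sq, mul_inv]

section b123
variable {F : Type} [Field F] [Fintype F] {n : ℕ}

theorem B1 {A B : ℕ} (hA : 1 ≤ A) (hn : 2 * B ≤ n) :
    cnt (fun y : Matrix.SpecialLinearGroup (Fin n) F => ∃ d ∈ Finset.Ico A B, ∃ f ∈ PF F d,
      (N2 f f (lin y) ≠ 0 ∨ NI (Tm (f * f)) (lin y) ≠ 0)) ≤ NG F n * (4 / A) := by
  have hN := (NG_pos (F := F) (n := n)).le
  refine le_trans (cnt_ex _ _) ?_
  have h1 : ∀ d ∈ Finset.Ico A B, cnt (fun y : Matrix.SpecialLinearGroup (Fin n) F => ∃ f ∈ PF F d,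
      (N2 f f (lin y) ≠ 0 ∨ NI (Tm (f * f)) (lin y) ≠ 0)) ≤ NG F n * 2 * ((1 / (d:ℝ)) * (1 / (d:ℝ))) := by
    intro d hd
    rw [Finset.mem_Ico] at hd
    have hd0 : 0 < d := by omega
    refine le_trans (cnt_ex _ _) ?_
    calc _ ≤ ∑ _f ∈ PF F d, NG F n * 2 * (1 / (d:ℝ)) * wt F d := by
          apply Finset.sum_le_sum
          intro f hf
          refine le_trans (cnt_or _ _) ?_
          have a := cnt_A3 (n := n) hd0 (by omega) hf
          have b := cnt_A4 (n := n) hd0 (by omega) hf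
          have c : wt F d * wt F d ≤ (1 / (d:ℝ)) * wt F d := mul_le_mul_of_nonneg_right (wt_le hd0) (wt_nonneg d)
          have := mul_le_mul_of_nonneg_left c hN
          linarith
      _ = NG F n * 2 * (1 / (d:ℝ)) * ∑ _f ∈ PF F d, wt F d := by rw [Finset.mul_sum]
      _ ≤ NG F n * 2 * (1 / (d:ℝ)) * (1 / d) := mul_le_mul_of_nonneg_left (sum_PF_wt hd0) (by positivity)
      _ = _ := by ring
  refine le_trans (Finset.sum_le_sum h1) ?_
  rw [← Finset.mul_sum]
  have := mul_le_mul_of_nonneg_left (sum_sq A B hA) (by positivity : 0 ≤ NG F n * 2)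
  refine le_trans this (le_of_eq (by ring))

theorem B2 {A B : ℕ} (hA : 1 ≤ A) :
    cnt (fun y : Matrix.SpecialLinearGroup (Fin n) F => ∃ d ∈ Finset.Ico A B, ∃ k ∈ Finset.Icc 1 n, ∃ f ∈ PF F d, ∃ g ∈ PF F (k * d),
      (f ≠ g ∧ d + k * d < n) ∧ NI (Tm f) (lin y) ≠ 0 ∧ NI (Tm g) (lin y) ≠ 0) ≤ NG F n * ((1 + Real.log n) * (2 / A)) := by
  have hN := (NG_pos (F := F) (n := n)).le
  have hH : ∑ k ∈ Finset.Icc 1 n, (1 / (k:ℝ)) ≤ 1 + Real.log n := by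
    have := harmonic_le_one_add_log n
    rw [harmonic_eq_sum_Icc] at this
    push_cast at this
    simpa [one_div] using this
  refine le_trans (cnt_ex _ _) ?_
  have h1 : ∀ d ∈ Finset.Ico A B, cnt (fun y : Matrix.SpecialLinearGroup (Fin n) F => ∃ k ∈ Finset.Icc 1 n, ∃ f ∈ PF F d, ∃ g ∈ PF F (k * d),
      (f ≠ g ∧ d + k * d < n) ∧ NI (Tm f) (lin y) ≠ 0 ∧ NI (Tm g) (lin y) ≠ 0) ≤ NG F n * (1 + Real.log n) * ((1 / (d:ℝ)) * (1 / (d:ℝ))) := by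
    intro d hd
    rw [Finset.mem_Ico] at hd
    have hd0 : 0 < d := by omega
    refine le_trans (cnt_ex _ _) ?_
    have h2 : ∀ k ∈ Finset.Icc 1 n, cnt (fun y : Matrix.SpecialLinearGroup (Fin n) F => ∃ f ∈ PF F d, ∃ g ∈ PF F (k * d),
      (f ≠ g ∧ d + k * d < n) ∧ NI (Tm f) (lin y) ≠ 0 ∧ NI (Tm g) (lin y) ≠ 0) ≤ NG F n * ((1 / (d:ℝ)) * (1 / (d:ℝ))) * (1 / (k:ℝ)) := by
      intro k hk
      rw [Finset.mem_Icc] at hk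
      have hkd : 0 < k * d := Nat.mul_pos (by omega) hd0
      refine le_trans (cnt_ex _ _) ?_
      have h3 : ∀ f ∈ PF F d, cnt (fun y : Matrix.SpecialLinearGroup (Fin n) F => ∃ g ∈ PF F (k * d),
        (f ≠ g ∧ d + k * d < n) ∧ NI (Tm f) (lin y) ≠ 0 ∧ NI (Tm g) (lin y) ≠ 0) ≤ NG F n * (1 / ((k * d : ℕ) : ℝ)) * wt F d := by
        intro f hf
        refine le_trans (cnt_ex _ _) ?_
        calc _ ≤ ∑ _g ∈ PF F (k * d), (NG F n * wt F d) * wt F (k * d) := by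
              apply Finset.sum_le_sum
              intro g hg
              by_cases hc : f ≠ g ∧ d + k * d < n
              · refine le_trans (cnt_mono (fun y hy => hy.2)) (le_trans (cnt_A2 hd0 hkd hc.2 hf hg hc.1) (le_of_eq (by ring)))
              · have : cnt (fun y : Matrix.SpecialLinearGroup (Fin n) F => (f ≠ g ∧ d + k * d < n) ∧ NI (Tm f) (lin y) ≠ 0 ∧ NI (Tm g) (lin y) ≠ 0) = 0 := by
                  unfold cnt
                  have : IsEmpty {y : Matrix.SpecialLinearGroup (Fin n) F // (f ≠ g ∧ d + k * d < n) ∧ NI (Tm f) (lin y) ≠ 0 ∧ NI (Tm g) (lin y) ≠ 0} := ⟨fun y => hc y.2.1⟩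
                  rw [Nat.card_of_isEmpty]; simp
                rw [this]
                exact mul_nonneg (mul_nonneg hN (wt_nonneg _)) (wt_nonneg _)
          _ = (NG F n * wt F d) * ∑ _g ∈ PF F (k * d), wt F (k * d) := by rw [Finset.mul_sum]
          _ ≤ (NG F n * wt F d) * (1 / ((k * d : ℕ) : ℝ)) := mul_le_mul_of_nonneg_left (sum_PF_wt hkd) (mul_nonneg hN (wt_nonneg _))
          _ = _ := by ring
      refine le_trans (Finset.sum_le_sum h3) ?_
      rw [← Finset.mul_sum]
      refine le_trans (mul_le_mul_of_nonneg_left (sum_PF_wt hd0) (by positivity)) (le_of_eq ?_)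
      push_cast
      have : (d:ℝ) ≠ 0 := by exact_mod_cast hd0.ne'
      have : (k:ℝ) ≠ 0 := by exact_mod_cast (by omega : k ≠ 0)
      field_simp
    refine le_trans (Finset.sum_le_sum h2) ?_
    rw [← Finset.mul_sum]
    refine le_trans (mul_le_mul_of_nonneg_left hH (by positivity)) (le_of_eq (by ring))
  refine le_trans (Finset.sum_le_sum h1) ?_
  rw [← Finset.mul_sum]
  have hL : 0 ≤ 1 + Real.log n := by have := Real.log_natCast_nonneg n; linarith
  refine le_trans (mul_le_mul_of_nonneg_left (sum_sq A B hA) (mul_nonneg hN hL)) (le_of_eq (by ring))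

theorem B3 {B : ℕ} (hB : 1 ≤ B) (hn : 2 * B ≤ n) :
    cnt (fun y : Matrix.SpecialLinearGroup (Fin n) F => ∃ e ∈ Finset.Ico (n - B) n, ∃ g ∈ PF F e, NI (Tm g) (lin y) ≠ 0) ≤ NG F n * (2 * B / n) := by
  have hN := (NG_pos (F := F) (n := n)).le
  have hn0 : (0:ℝ) < n := by exact_mod_cast (by omega : 0 < n)
  refine le_trans (cnt_ex _ _) ?_
  have h1 : ∀ e ∈ Finset.Ico (n - B) n, cnt (fun y : Matrix.SpecialLinearGroup (Fin n) F => ∃ g ∈ PF F e, NI (Tm g) (lin y) ≠ 0) ≤ NG F n * (2 / n) := by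
    intro e he
    rw [Finset.mem_Ico] at he
    have he0 : 0 < e := by omega
    refine le_trans (cnt_ex _ _) ?_
    refine le_trans (Finset.sum_le_sum (fun g hg => cnt_A1 he0 he.2 hg)) ?_
    rw [← Finset.mul_sum]
    refine mul_le_mul_of_nonneg_left (le_trans (sum_PF_wt he0) ?_) hN
    have he' : (0:ℝ) < e := by exact_mod_cast he0
    rw [div_le_div_iff₀ he' hn0]
    have : n ≤ 2 * e := by omega
    rw [one_mul]
    exact_mod_cast this
  refine le_trans (Finset.sum_le_card_nsmul _ _ _ h1) ?_
  rw [Nat.card_Ico, nsmul_eq_mul, show n - (n - B) = B by omega]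
  exact le_of_eq (by ring)

theorem deg_add {d e : ℕ} {f g : F[X]} (hf : f ∈ PF F d) (hg : g ∈ PF F e) (hfg : f ≠ g)
    (y : (Fin n → F) →ₗ[F] (Fin n → F)) (h1 : NI (Tm f) y ≠ 0) (h2 : NI (Tm g) y ≠ 0) : d + e ≤ n := by
  obtain ⟨a1, a2, a3, a4⟩ := mem_PF.1 hf
  obtain ⟨b1, b2, b3, b4⟩ := mem_PF.1 hg
  have := fin_adj a1
  have := fin_adj b1
  have h : N2 f g y ≠ 0 := by
    rw [N2_cop a1 b1 (cop_of_ne a1 b1 a2 b2 hfg)]; exact mul_ne_zero h1 h2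
  unfold N2 at h
  obtain ⟨φ, hφ⟩ := NI_ne_zero.1 h
  have := LinearMap.finrank_le_finrank_of_injective hφ.1
  rw [Module.finrank_prod, rank_adj a1, rank_adj b1, a4, b4] at this
  simpa using this

end b123
end IG
set_option linter.unusedSectionVars false
set_option linter.unusedSimpArgs false
set_option linter.unusedFintypeInType false
namespace IG
open Finset Module Polynomial

section fin
variable {F : Type} [Field F] [Fintype F] {n : ℕ}

/-- the exceptional set -/
def Bad (J : ℕ) (y : Matrix.SpecialLinearGroup (Fin n) F) : Prop :=
  (∃ d ∈ Finset.Ico (2 ^ (16 * J)) (2 ^ (112 * J)), ∃ f ∈ PF F d,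
      (N2 f f (lin y) ≠ 0 ∨ NI (Tm (f * f)) (lin y) ≠ 0)) ∨
  (∃ d ∈ Finset.Ico (2 ^ (16 * J)) (2 ^ (112 * J)), ∃ k ∈ Finset.Icc 1 n, ∃ f ∈ PF F d, ∃ g ∈ PF F (k * d),
      (f ≠ g ∧ d + k * d < n) ∧ NI (Tm f) (lin y) ≠ 0 ∧ NI (Tm g) (lin y) ≠ 0) ∨
  (∃ e ∈ Finset.Ico (n - 2 ^ (112 * J)) n, ∃ g ∈ PF F e, NI (Tm g) (lin y) ≠ 0) ∨
  (∃ p ∈ n.primeFactors, ∀ d ∈ Finset.Ico (2 ^ (16 * J)) (2 ^ (112 * J)), ¬ p ∣ d →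
      ∀ f ∈ SF F d, NI (Tm f) (lin y) = 0)

theorem good {J : ℕ} (hJ : 1 ≤ J) (hn : 2 ^ (256 * J) ≤ n) (y : Matrix.SpecialLinearGroup (Fin n) F) (hy : ¬ Bad J y)
    (p : ℕ) (hp : p.Prime) (hpn : p ∣ n) : ∃ m, 0 < rkm y m ∧ 8 * rkm y m ^ 2 + 5 ≤ n ∧ ¬ p ∣ rkm y m := by
  have hn0 : n ≠ 0 := by
    have : 0 < 2 ^ (256 * J) := by positivity
    omega
  unfold Bad at hy
  push Not at hy
  obtain ⟨hy1, hy2, hy3, hy4⟩ := hy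
  obtain ⟨d, hd, hpd, f, hf, hf0⟩ := hy4 p (Nat.mem_primeFactors.2 ⟨hp, hpn, hn0⟩)
  have hd' := Finset.mem_Ico.1 hd
  have hd0 : 0 < d := lt_of_lt_of_le (by positivity) hd'.1
  have hfP := SF_sub d hf
  obtain ⟨m, hm⟩ := rkm_eq y hd0 hf hf0 (hy1 d hd f hfP).1 (hy1 d hd f hfP).2 (by
    intro g hg1 hg2 hg3 hgf hdg
    by_contra h0
    obtain ⟨k, hk⟩ := hdg
    rw [mul_comm] at hk
    have hgP : g ∈ PF F (k * d) := mem_PF.2 ⟨hg2, hg1, hg3, hk⟩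
    have hle := deg_add hfP hgP (Ne.symm hgf) (lin y) hf0 h0
    have hk0 : 0 < k := by
      rcases Nat.eq_zero_or_pos k with h | h
      · have := hg1.natDegree_pos
        rw [hk, h] at this; omega
      · exact h
    have hkn : k ≤ n := by nlinarith
    rcases Nat.lt_or_ge (d + k * d) n with h | h
    · exact h0 (hy2 d hd k (Finset.mem_Icc.2 ⟨hk0, hkn⟩) f hfP g hgP ⟨Ne.symm hgf, h⟩ hf0)
    · exact h0 (hy3 (k * d) (Finset.mem_Ico.2 ⟨by omega, by omega⟩) g hgP))
  refine ⟨m, by omega, ?_, by rw [hm]; exact hpd⟩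
  rw [hm]
  have h1 : d ^ 2 ≤ 2 ^ (224 * J) := by
    calc d ^ 2 ≤ (2 ^ (112 * J)) ^ 2 := Nat.pow_le_pow_left hd'.2.le 2
      _ = 2 ^ (224 * J) := by rw [← pow_mul]; congr 1; ring
  have h2 : 16 * 2 ^ (224 * J) ≤ 2 ^ (256 * J) := by
    calc 16 * 2 ^ (224 * J) = 2 ^ (4 + 224 * J) := by rw [pow_add]; norm_num
      _ ≤ _ := Nat.pow_le_pow_right (by norm_num) (by omega)
  have h3 : 0 < 2 ^ (224 * J) := by positivity
  omega

theorem pf_card {b : ℕ} (hn : n ≠ 0) (h : n < 2 ^ b) : n.primeFactors.card ≤ b := by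
  have h1 : 2 ^ n.primeFactors.card ≤ ∏ p ∈ n.primeFactors, p :=
    Finset.pow_card_le_prod _ _ _ (fun p hp => (Nat.prime_of_mem_primeFactors hp).two_le)
  have h2 := Nat.le_of_dvd (Nat.pos_of_ne_zero hn) (Nat.prod_primeFactors_dvd n)
  exact ((Nat.pow_lt_pow_iff_right (by norm_num : 1 < 2)).1 (lt_of_le_of_lt (le_trans h1 h2) h)).le

theorem cnt_Bad {J : ℕ} (hJ : 1 ≤ J) (hn : 2 ^ (256 * J) ≤ n) (hn2 : n < 2 ^ (256 * (J + 1))) :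
    cnt (Bad (F := F) (n := n) J) ≤ NG F n * (776 * (1 / 2) ^ (5 * J)) := by
  have hN := (NG_pos (F := F) (n := n)).le
  have hpos : 0 < 2 ^ (256 * J) := by positivity
  have hn0 : n ≠ 0 := by omega
  have hB : 2 * 2 ^ (112 * J) ≤ n := by
    refine le_trans ?_ hn
    rw [← pow_succ']
    exact Nat.pow_le_pow_right (by norm_num) (by omega)
  have hA1 : 1 ≤ 2 ^ (16 * J) := Nat.one_le_two_pow
  have hB1 : 1 ≤ 2 ^ (112 * J) := Nat.one_le_two_pow
  have t1 := B1 (F := F) (n := n) hA1 hB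
  have t2 := B2 (F := F) (n := n) (B := 2 ^ (112 * J)) hA1
  have t3 := B3 (F := F) (n := n) hB1 hB
  have t4 : cnt (fun y : Matrix.SpecialLinearGroup (Fin n) F => ∃ p ∈ n.primeFactors, ∀ d ∈ Finset.Ico (2 ^ (16 * J)) (2 ^ (112 * J)), ¬ p ∣ d →
      ∀ f ∈ SF F d, NI (Tm f) (lin y) = 0) ≤ (256 * (J + 1) : ℕ) * (NG F n * (1 / 2) ^ (6 * J)) := by
    refine le_trans (cnt_ex _ _) ?_
    refine le_trans (Finset.sum_le_card_nsmul _ _ _ (fun p hp => B4 (Nat.prime_of_mem_primeFactors hp) hJ hn)) ?_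
    rw [nsmul_eq_mul]
    have := pf_card hn0 hn2
    gcongr
  have hsum : cnt (Bad (F := F) (n := n) J) ≤ NG F n * (4 / (2 ^ (16 * J) : ℕ)) + (NG F n * ((1 + Real.log n) * (2 / (2 ^ (16 * J) : ℕ))) +
      (NG F n * (2 * (2 ^ (112 * J) : ℕ) / n) + (256 * (J + 1) : ℕ) * (NG F n * (1 / 2) ^ (6 * J)))) := by
    unfold Bad
    refine le_trans (cnt_or _ _) (add_le_add t1 ?_)
    refine le_trans (cnt_or _ _) (add_le_add t2 ?_)
    exact le_trans (cnt_or _ _) (add_le_add t3 t4)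
  refine le_trans hsum ?_
  set h : ℝ := (1 / 2) ^ J with hh
  have hh0 : 0 < h := by positivity
  have hh1 : h ≤ 1 := pow_le_one₀ (by norm_num) (by norm_num)
  have hJ2 : ((J : ℝ) + 1) * h ≤ 1 := by
    have : J + 1 ≤ 2 ^ J := Nat.lt_two_pow_self
    have h' : ((J : ℝ) + 1) ≤ 2 ^ J := by exact_mod_cast this
    calc ((J : ℝ) + 1) * h ≤ 2 ^ J * h := mul_le_mul_of_nonneg_right h' hh0.le
      _ = 1 := by rw [hh, ← mul_pow]; norm_num
  have e5 : ((1:ℝ) / 2) ^ (5 * J) = h ^ 5 := by rw [hh, ← pow_mul, mul_comm]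
  have e6 : ((1:ℝ) / 2) ^ (6 * J) = h ^ 6 := by rw [hh, ← pow_mul, mul_comm]
  have e16 : (1:ℝ) / ((2 ^ (16 * J) : ℕ) : ℝ) = h ^ 16 := by
    rw [hh, ← pow_mul, mul_comm J, one_div_pow]; push_cast; rfl
  have hlog : 1 + Real.log n ≤ 257 * ((J : ℝ) + 1) := by
    have hn' : (n : ℝ) ≤ 2 ^ (256 * (J + 1)) := by exact_mod_cast hn2.le
    have := Real.log_le_log (by exact_mod_cast Nat.pos_of_ne_zero hn0) hn'
    rw [Real.log_pow] at this
    push_cast at this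
    have l2 : Real.log 2 ≤ 1 := by have := Real.log_two_lt_d9; linarith
    have hJr : (0:ℝ) ≤ J := Nat.cast_nonneg _
    have x3 := mul_le_mul_of_nonneg_left l2 (by linarith : (0:ℝ) ≤ 256 * ((J:ℝ) + 1))
    clear hn' t1 t2 t3 t4 hsum hn hn2 hpos hB hA1 hB1
    linarith
  have s16 : h ^ 16 ≤ h ^ 5 := pow_le_pow_of_le_one hh0.le hh1 (by norm_num)
  have s15 : h ^ 15 ≤ h ^ 5 := pow_le_pow_of_le_one hh0.le hh1 (by norm_num)
  have a1 : (4:ℝ) / ((2 ^ (16 * J) : ℕ) : ℝ) ≤ 4 * h ^ 5 := by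
    rw [← mul_one_div, e16]; linarith
  have a2 : (1 + Real.log n) * (2 / ((2 ^ (16 * J) : ℕ) : ℝ)) ≤ 514 * h ^ 5 := by
    rw [← mul_one_div 2, e16]
    calc (1 + Real.log n) * (2 * h ^ 16) ≤ (257 * ((J : ℝ) + 1)) * (2 * h ^ 16) := by gcongr
      _ = 514 * (((J : ℝ) + 1) * h) * h ^ 15 := by ring
      _ ≤ 514 * 1 * h ^ 5 := by gcongr
      _ = _ := by ring
  have a3 : 2 * ((2 ^ (112 * J) : ℕ) : ℝ) / n ≤ 2 * h ^ 5 := by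
    have hnr : (0:ℝ) < n := by exact_mod_cast Nat.pos_of_ne_zero hn0
    rw [div_le_iff₀ hnr]
    have hn' : (2:ℝ) ^ (256 * J) ≤ n := by exact_mod_cast hn
    have x1 : (2:ℝ) ^ (112 * J) ≤ h ^ 5 * 2 ^ (256 * J) := by
      have : h ^ 5 * 2 ^ (5 * J) = 1 := by
        rw [← e5, ← mul_pow]; norm_num
      calc (2:ℝ) ^ (112 * J) = (h ^ 5 * 2 ^ (5 * J)) * 2 ^ (112 * J) := by rw [this, one_mul]
        _ = h ^ 5 * 2 ^ (5 * J + 112 * J) := by rw [pow_add]; ring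
        _ ≤ h ^ 5 * 2 ^ (256 * J) := by
          apply mul_le_mul_of_nonneg_left _ (by positivity)
          exact pow_le_pow_right₀ (by norm_num) (by omega)
    push_cast
    have x2 : h ^ 5 * 2 ^ (256 * J) ≤ h ^ 5 * n := mul_le_mul_of_nonneg_left hn' (by positivity)
    linarith
  have a4 : ((256 * (J + 1) : ℕ) : ℝ) * (1 / 2) ^ (6 * J) ≤ 256 * h ^ 5 := by
    rw [e6]; push_cast
    calc 256 * ((J : ℝ) + 1) * h ^ 6 = 256 * (((J : ℝ) + 1) * h) * h ^ 5 := by ring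
      _ ≤ 256 * 1 * h ^ 5 := by gcongr
      _ = _ := by ring
  rw [e5]
  calc _ = NG F n * (4 / ((2 ^ (16 * J) : ℕ) : ℝ) + (1 + Real.log n) * (2 / ((2 ^ (16 * J) : ℕ) : ℝ)) + 2 * ((2 ^ (112 * J) : ℕ) : ℝ) / n
        + ((256 * (J + 1) : ℕ) : ℝ) * (1 / 2) ^ (6 * J)) := by ring
    _ ≤ NG F n * (776 * h ^ 5) := by
      apply mul_le_mul_of_nonneg_left _ hN
      linarith

theorem npow_ge {J : ℕ} (hn : n ≠ 0) (hn2 : n < 2 ^ (256 * (J + 1))) :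
    (1 / 4 : ℝ) * (1 / 2) ^ (5 * J) ≤ (n : ℝ) ^ (-(1:ℝ) / 200) := by
  have hnr : (0:ℝ) < n := by exact_mod_cast Nat.pos_of_ne_zero hn
  have hn' : (n : ℝ) ≤ 2 ^ (256 * (J + 1)) := by exact_mod_cast hn2.le
  have h1 : ((2:ℝ) ^ (256 * (J + 1))) ^ (-(1:ℝ) / 200) ≤ (n : ℝ) ^ (-(1:ℝ) / 200) :=
    Real.rpow_le_rpow_of_nonpos hnr hn' (by norm_num)
  refine le_trans ?_ h1
  rw [← Real.rpow_natCast 2 (256 * (J + 1)), ← Real.rpow_mul (by norm_num)]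
  have e : (1 / 4 : ℝ) * (1 / 2) ^ (5 * J) = (2:ℝ) ^ (-((2 + 5 * J : ℕ) : ℝ)) := by
    rw [Real.rpow_neg (by norm_num), Real.rpow_natCast, pow_add, mul_inv, one_div_pow, one_div]
    norm_num
  rw [e]
  apply Real.rpow_le_rpow_of_exponent_le (by norm_num)
  push_cast
  have : (0:ℝ) ≤ J := Nat.cast_nonneg _
  linarith

end fin

theorem final : ∃ C : ℝ, 0 < C ∧ ∀ (n : ℕ), 2 ≤ n → ∀ (F : Type) [Field F] [Fintype F],
    ∃ x : Matrix.SpecialLinearGroup (Fin n) F,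
      (1 - C * (n : ℝ) ^ (-(1:ℝ) / 200)) * (Nat.card (Matrix.SpecialLinearGroup (Fin n) F) : ℝ) ≤
      (Nat.card {y : Matrix.SpecialLinearGroup (Fin n) F // InvGen x y} : ℝ) := by
  refine ⟨3104, by norm_num, ?_⟩
  intro n hn F _ _
  set J := Nat.log 2 n / 256 with hJdef
  have hn0 : n ≠ 0 := by omega
  have hn2 : n < 2 ^ (256 * (J + 1)) :=
    lt_of_lt_of_le (Nat.lt_pow_succ_log_self (by norm_num) n) (Nat.pow_le_pow_right (by norm_num) (by omega))
  have hpw := npow_ge hn0 hn2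
  have hN := (NG_pos (F := F) (n := n)).le
  rcases Nat.eq_zero_or_pos J with h0 | hJ
  · refine ⟨1, ?_⟩
    rw [h0] at hpw
    norm_num at hpw
    refine le_trans (mul_nonpos_of_nonpos_of_nonneg ?_ hN) (Nat.cast_nonneg _)
    norm_num
    linarith
  · have hn1 : 2 ^ (256 * J) ≤ n :=
      le_trans (Nat.pow_le_pow_right (by norm_num) (by omega)) (Nat.pow_log_le_self 2 hn0)
    have h17 : 17 ≤ n := by
      refine le_trans ?_ hn1
      calc 17 ≤ 2 ^ 5 := by norm_num
        _ ≤ _ := Nat.pow_le_pow_right (by norm_num) (by omega)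
    obtain ⟨x, hx⟩ := thmB (F := F) h17
    refine ⟨x, ?_⟩
    have hbad := cnt_Bad (F := F) hJ hn1 hn2
    have hall : NG F n ≤ cnt (fun y => InvGen x y) + cnt (Bad (F := F) (n := n) J) := by
      refine le_trans ?_ (cnt_or _ _)
      have e : NG F n = cnt (fun _ : Matrix.SpecialLinearGroup (Fin n) F => True) := by
        unfold NG cnt
        rw [Nat.card_congr (Equiv.subtypeUnivEquiv (fun _ => trivial))]
      rw [e]
      apply cnt_mono
      intro y _
      by_cases hy : Bad J y
      · exact Or.inr hy
      · exact Or.inl (hx y (fun p hp hpn => good hJ hn1 y hy p hp hpn))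
    change (1 - _) * NG F n ≤ cnt (fun y => InvGen x y)
    have h4 : NG F n * (776 * (1 / 2) ^ (5 * J)) ≤ NG F n * (3104 * (n : ℝ) ^ (-(1:ℝ) / 200)) :=
      mul_le_mul_of_nonneg_left (by linarith) hN
    linarith
end IG

theorem stmt_11 :
    ∃ C : ℝ, 0 < C ∧
      ∀ n : ℕ, 2 ≤ n →
        ∀ (F : Type) [Field F] [Fintype F],
          ∃ x : Matrix.SpecialLinearGroup (Fin n) F,
            (Nat.card {y : Matrix.SpecialLinearGroup (Fin n) F // InvGen x y} : ℝ) ≥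
              (1 - C * (n : ℝ) ^ (-(1 : ℝ) / 200)) *
                Nat.card (Matrix.SpecialLinearGroup (Fin n) F) := by
  obtain ⟨C, hC, h⟩ := IG.final
  refine ⟨C, hC, ?_⟩
  intro n hn F _ _
  obtain ⟨x, hx⟩ := h n hn F
  exact ⟨x, hx⟩
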